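/- arXiv:1509.04551 — 4 statements merged into one kernel-verified Lean document; each statement's English description precedes it below -/
import Mathlib

section
/- Let E be a real normed vector space, U ⊆ E an open set, and κ : U × U → ℝ a C² positive semi-definite kernel. Then for every x ∈ U and every vector v ∈ E, the mixed second derivative of κ on the diagonal is nonnegative: D²κ(x,x)[(v,0),(0,v)] ≥ 0, where D²κ(x,x) denotes the second (Fréchet) derivative of κ at the point (x,x) ∈ U × U. (Positive semi-definiteness part of Theorem 1: the symmetric tensor α_κ associated to a smooth reproducing kernel is positive semi-definite as a bilinear form.) -/
/-- **Positive semi-definiteness part of Theorem 1.**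
If `κ : E × E → ℝ` is a `C²` positive semi-definite kernel on an open set `U` of a real
normed vector space `E`, then for every `x ∈ U` and every `v : E` the mixed second
derivative of `κ` on the diagonal is nonnegative:
`D²κ(x,x)[(v,0),(0,v)] ≥ 0`. -/
theorem kernel_mixed_second_derivative_nonneg
    {E : Type*} [NormedAddCommGroup E] [NormedSpace ℝ E]
    (U : Set E) (hU : IsOpen U) (κ : E × E → ℝ)
    (hκ : ContDiffOn ℝ 2 κ (U ×ˢ U))
    (hpsd : ∀ (N : ℕ) (p : Fin N → E), (∀ i, p i ∈ U) →
      ∀ a : Fin N → ℝ, 0 ≤ ∑ i, ∑ j, a i * a j * κ (p i, p j))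
    (x : E) (hx : x ∈ U) (v : E) :
    0 ≤ iteratedFDeriv ℝ 2 κ (x, x) ![(v, 0), (0, v)] := by
  rw [iteratedFDeriv_two_apply]
  simp only [Matrix.cons_val_zero, Matrix.cons_val_one]
  by_contra! hneg
  have hO : IsOpen (U ×ˢ U) := hU.prod hU
  have hxx : (x, x) ∈ U ×ˢ U := ⟨hx, hx⟩
  have h1 : ContDiffOn ℝ 1 (fderiv ℝ κ) (U ×ˢ U) :=
    hκ.fderiv_of_isOpen hO (by norm_num)
  have h2 : ContinuousOn (fderiv ℝ (fderiv ℝ κ)) (U ×ˢ U) :=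
    h1.continuousOn_fderiv_of_isOpen hO (by norm_num)
  have hc : ContinuousAt (fun z => fderiv ℝ (fderiv ℝ κ) z (v, 0) (0, v)) (x, x) :=
    ((h2.continuousAt (hO.mem_nhds hxx)).clm_apply continuousAt_const).clm_apply
      continuousAt_const
  have hev : ∀ᶠ z in nhds (x, x), z ∈ U ×ˢ U ∧ fderiv ℝ (fderiv ℝ κ) z (v, 0) (0, v) < 0 :=
    (hO.eventually_mem hxx).and (hc.eventually_lt continuousAt_const hneg)
  have hm : Filter.Tendsto (fun q : ℝ × ℝ => (x + q.1 • v, x + q.2 • v)) (nhds (0, 0))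
      (nhds (x, x)) := by
    have : Continuous (fun q : ℝ × ℝ => (x + q.1 • v, x + q.2 • v)) := by fun_prop
    simpa using this.tendsto (0, 0)
  obtain ⟨ε, hε, hball⟩ := Metric.eventually_nhds_iff.1 (hm.eventually hev)
  obtain ⟨h, hh, hhε⟩ : ∃ h : ℝ, 0 < h ∧ h < ε := ⟨ε / 2, by linarith, by linarith⟩
  have key : ∀ s ∈ Set.Icc 0 h, ∀ t ∈ Set.Icc 0 h, (x + s • v, x + t • v) ∈ U ×ˢ U ∧
      fderiv ℝ (fderiv ℝ κ) (x + s • v, x + t • v) (v, 0) (0, v) < 0 := by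
    intro s hs t ht
    apply hball (y := (s, t))
    rw [Prod.dist_eq, max_lt_iff, Real.dist_eq, Real.dist_eq]
    constructor
    · rw [abs_lt]; constructor <;> simp <;> linarith [hs.1, hs.2]
    · rw [abs_lt]; constructor <;> simp <;> linarith [ht.1, ht.2]
  have d1 : ∀ s t : ℝ, HasDerivAt (fun s : ℝ => (x + s • v, x + t • v)) (v, (0 : E)) s := by
    intro s t
    have := ((hasDerivAt_id s).smul_const v).const_add x
    simpa using this.prodMk (hasDerivAt_const s (x + t • v))
  have d2 : ∀ s t : ℝ, HasDerivAt (fun t : ℝ => (x + s • v, x + t • v)) ((0 : E), v) t := by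
    intro s t
    have := ((hasDerivAt_id t).smul_const v).const_add x
    simpa using (hasDerivAt_const t (x + s • v)).prodMk this
  have h0m : (0 : ℝ) ∈ Set.Icc 0 h := ⟨le_rfl, hh.le⟩
  have hhm : h ∈ Set.Icc 0 h := ⟨hh.le, le_rfl⟩
  have e2 : ∀ s ∈ Set.Icc 0 h, ∀ t ∈ Set.Icc 0 h,
      HasDerivAt (fun t : ℝ => κ (x + s • v, x + t • v))
        (fderiv ℝ κ (x + s • v, x + t • v) (0, v)) t := by
    intro s hs t ht
    have hd : DifferentiableAt ℝ κ (x + s • v, x + t • v) :=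
      (hκ.differentiableOn (by norm_num)).differentiableAt (hO.mem_nhds (key s hs t ht).1)
    exact hd.hasFDerivAt.comp_hasDerivAt t (d2 s t)
  have e1 : ∀ s ∈ Set.Icc 0 h, ∀ t ∈ Set.Icc 0 h,
      HasDerivAt (fun s : ℝ => fderiv ℝ κ (x + s • v, x + t • v) (0, v))
        (fderiv ℝ (fderiv ℝ κ) (x + s • v, x + t • v) (v, 0) (0, v)) s := by
    intro s hs t ht
    have hd : DifferentiableAt ℝ (fderiv ℝ κ) (x + s • v, x + t • v) :=
      (h1.differentiableOn (by norm_num)).differentiableAt (hO.mem_nhds (key s hs t ht).1)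
    have := hd.hasFDerivAt.comp_hasDerivAt s (d1 s t)
    simpa using this.clm_apply (hasDerivAt_const s ((0 : E), v))
  have e3 : ∀ t ∈ Set.Icc 0 h, HasDerivAt
      (fun t : ℝ => κ (x + h • v, x + t • v) - κ (x + (0 : ℝ) • v, x + t • v))
      (fderiv ℝ κ (x + h • v, x + t • v) (0, v)
        - fderiv ℝ κ (x + (0 : ℝ) • v, x + t • v) (0, v)) t :=
    fun t ht => (e2 h hhm t ht).sub (e2 0 h0m t ht)
  obtain ⟨t, ht, hts⟩ := exists_hasDerivAt_eq_slope _ _ hh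
    (fun t ht => (e3 t ht).continuousAt.continuousWithinAt)
    (fun t ht => e3 t (Set.Ioo_subset_Icc_self ht))
  have ht' := Set.Ioo_subset_Icc_self ht
  obtain ⟨s, hs, hss⟩ := exists_hasDerivAt_eq_slope _ _ hh
    (fun s hs => (e1 s hs t ht').continuousAt.continuousWithinAt)
    (fun s hs => e1 s (Set.Ioo_subset_Icc_self hs) t ht')
  have hlt := (key s (Set.Ioo_subset_Icc_self hs) t ht').2
  rw [hss, sub_zero, div_lt_iff₀ hh, zero_mul, hts, sub_zero, div_lt_iff₀ hh, zero_mul] at hlt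
  have hp := hpsd 2 ![x + h • v, x] (by
    intro i
    fin_cases i
    · exact (key h hhm h hhm).1.1
    · exact hx) ![1, -1]
  simp [Fin.sum_univ_two] at hp
  simp at hlt
  linarith
end

section
/- Let U ⊆ ℝⁿ be open and let (φ_j)_{j∈ℕ} be smooth real functions on U such that the series of matrix-valued maps ∑_j ∇φ_j(x) ∇φ_j(x)ᵀ converges, locally uniformly on U together with all its partial derivatives, to a smooth map α : U → Sym(n,ℝ). Assume the map x ↦ rank α(x) is locally constant on U. Then for every smooth vector field X : U → ℝⁿ taking values in the characteristic distribution of α (i.e. α(x)X(x) = 0 for all x ∈ U), the Lie derivative L_Xα vanishes identically on U. (Lie-derivative part of Theorem 1, in the local model in which all of the paper's applications take place.) -/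
open Filter Matrix

/-- The Jacobian matrix of a vector field `X : ℝⁿ → ℝⁿ` at `x`, computed with
derivatives taken within the set `U`: `(DX(x))ᵢⱼ = ∂ⱼXᵢ(x)`. -/
noncomputable def jacobianWithin {n : ℕ} (U : Set (Fin n → ℝ))
    (X : (Fin n → ℝ) → (Fin n → ℝ)) (x : Fin n → ℝ) : Matrix (Fin n) (Fin n) ℝ :=
  Matrix.of fun i j => fderivWithin ℝ (fun y => X y i) U x (Pi.single j 1)

/-- The Lie derivative of a symmetric-matrix-valued map `α` along a vector field `X`:
`(L_Xα)(x) = Dα(x)[X(x)] + (DX(x))ᵀ α(x) + α(x) DX(x)`. -/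
noncomputable def lieDerivMat {n : ℕ} (U : Set (Fin n → ℝ))
    (α : (Fin n → ℝ) → Matrix (Fin n) (Fin n) ℝ)
    (X : (Fin n → ℝ) → (Fin n → ℝ)) (x : Fin n → ℝ) : Matrix (Fin n) (Fin n) ℝ :=
  (Matrix.of fun i j => fderivWithin ℝ (fun y => α y i j) U x (X x))
    + (jacobianWithin U X x)ᵀ * α x + α x * jacobianWithin U X x

lemma aux_apply {n : ℕ} (L : (Fin n → ℝ) →L[ℝ] ℝ) (v : Fin n → ℝ) :
    L v = ∑ l, v l * L (Pi.single l 1) := by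
  conv_lhs => rw [pi_eq_sum_univ' v]
  rw [map_sum]
  refine Finset.sum_congr rfl fun l _ => ?_
  rw [map_smul, smul_eq_mul]

lemma aux_g {n : ℕ} {U : Set (Fin n → ℝ)} (hU : IsOpen U)
    {f : (Fin n → ℝ) → ℝ} (hf : ContDiffOn ℝ (⊤ : ℕ∞) f U) {x : Fin n → ℝ} (hx : x ∈ U)
    (v : Fin n → ℝ) :
    HasFDerivWithinAt (fun y => fderivWithin ℝ f U y v)
      ((fderivWithin ℝ (fderivWithin ℝ f U) U x).flip v) U x := by
  have h1 : ContDiffOn ℝ 1 (fderivWithin ℝ f U) U :=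
    hf.fderivWithin hU.uniqueDiffOn (by norm_cast)
  have h2 := ((h1.differentiableOn one_ne_zero) x hx).hasFDerivWithinAt
  have h3 := h2.clm_apply (hasFDerivWithinAt_const v x U)
  refine h3.congr_fderiv ?_
  ext w
  simp

lemma aux_term {n : ℕ} {U : Set (Fin n → ℝ)} (hU : IsOpen U)
    {f : (Fin n → ℝ) → ℝ} (hf : ContDiffOn ℝ (⊤ : ℕ∞) f U)
    {X : (Fin n → ℝ) → (Fin n → ℝ)} (hX : ContDiffOn ℝ (⊤ : ℕ∞) X U)
    (h0 : ∀ y ∈ U, fderivWithin ℝ f U y (X y) = 0) {x : Fin n → ℝ} (hx : x ∈ U) (i : Fin n) :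
    fderivWithin ℝ (fun y => fderivWithin ℝ f U y (Pi.single i 1)) U x (X x)
      + ∑ l, jacobianWithin U X x l i * fderivWithin ℝ f U x (Pi.single l 1) = 0 := by
  have hu : UniqueDiffWithinAt ℝ U x := hU.uniqueDiffOn x hx
  rw [(aux_g hU hf hx _).fderivWithin hu]
  have h1 : ContDiffOn ℝ 1 (fderivWithin ℝ f U) U :=
    hf.fderivWithin hU.uniqueDiffOn (by norm_cast)
  have h2 := ((h1.differentiableOn one_ne_zero) x hx).hasFDerivWithinAt
  have hXd : DifferentiableWithinAt ℝ X U x := (hX.differentiableOn (by simp)) x hx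
  have h3 := h2.clm_apply hXd.hasFDerivWithinAt
  have h4 : HasFDerivWithinAt (fun y => fderivWithin ℝ f U y (X y))
      (0 : (Fin n → ℝ) →L[ℝ] ℝ) U x :=
    (hasFDerivWithinAt_const (0 : ℝ) x U).congr h0 (h0 x hx)
  have h5 := hu.eq h3 h4
  have h6 := DFunLike.congr_fun h5 (Pi.single i 1)
  have hs : IsSymmSndFDerivWithinAt ℝ f U x :=
    (hf x hx).isSymmSndFDerivWithinAt (n := ((⊤ : ℕ∞) : WithTop ℕ∞))
      (by simp; norm_cast) hU.uniqueDiffOn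
      (subset_closure (by rwa [hU.interior_eq])) hx
  have h7 : ∀ l, jacobianWithin U X x l i = fderivWithin ℝ X U x (Pi.single i 1) l := by
    intro l
    simp only [jacobianWithin, Matrix.of_apply]
    rw [(hasFDerivWithinAt_pi'.1 hXd.hasFDerivWithinAt l).fderivWithin hu]
    rfl
  simp only [h7]
  rw [← aux_apply, ContinuousLinearMap.flip_apply, hs.eq]
  simp at h6
  linarith

/-- **Lie-derivative part of Theorem 1 (local model).**
Let `U ⊆ ℝⁿ` be open and `(φ_j)` smooth functions on `U` such that
`∑_j ∇φ_j ∇φ_jᵀ` converges, locally uniformly on `U` together with all of its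
derivatives, to a smooth symmetric-matrix-valued map `α` whose rank is locally
constant on `U`.  Then `L_X α = 0` for every smooth vector field `X` taking values in
the characteristic distribution of `α`. -/
theorem lieDeriv_eq_zero_of_kernel_primitive {n : ℕ}
    (U : Set (Fin n → ℝ)) (hU : IsOpen U)
    (φ : ℕ → (Fin n → ℝ) → ℝ) (hφ : ∀ j, ContDiffOn ℝ (⊤ : ℕ∞) (φ j) U)
    (α : (Fin n → ℝ) → Matrix (Fin n) (Fin n) ℝ)
    (hαsymm : ∀ x ∈ U, (α x)ᵀ = α x)
    (hαsmooth : ∀ i j, ContDiffOn ℝ (⊤ : ℕ∞) (fun x => α x i j) U)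
    -- the series `∑_j ∇φ_j ∇φ_jᵀ` converges to `α`, locally uniformly on `U`
    -- together with all of its derivatives (entrywise)
    (hconv : ∀ (i j : Fin n) (m : ℕ),
      TendstoLocallyUniformlyOn
        (fun (N : ℕ) (x : Fin n → ℝ) => iteratedFDerivWithin ℝ m
          (fun y => ∑ k ∈ Finset.range N,
            fderivWithin ℝ (φ k) U y (Pi.single i 1) *
              fderivWithin ℝ (φ k) U y (Pi.single j 1)) U x)
        (fun x => iteratedFDerivWithin ℝ m (fun y => α y i j) U x) atTop U)
    -- the rank of `α` is locally constant on `U`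
    (hrank : ∀ x ∈ U, ∃ V : Set (Fin n → ℝ), IsOpen V ∧ x ∈ V ∧
      ∀ y ∈ V ∩ U, (α y).rank = (α x).rank) :
    ∀ X : (Fin n → ℝ) → (Fin n → ℝ), ContDiffOn ℝ (⊤ : ℕ∞) X U →
      (∀ x ∈ U, (α x).mulVec (X x) = 0) →
      ∀ x ∈ U, lieDerivMat U α X x = 0 := by
  intro X hX hker x hx
  have hp : ∀ y ∈ U, ∀ i j, Tendsto (fun N : ℕ => ∑ k ∈ Finset.range N,
      fderivWithin ℝ (φ k) U y (Pi.single i 1) * fderivWithin ℝ (φ k) U y (Pi.single j 1))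
      atTop (nhds (α y i j)) := by
    intro y hy i j
    have h := (hconv i j 0).tendsto_at hy
    have h' := ((ContinuousMultilinearMap.apply ℝ (fun _ : Fin 0 => Fin n → ℝ) ℝ
      0).continuous.tendsto _).comp h
    simpa [Function.comp_def] using h'
  have h0 : ∀ k, ∀ y ∈ U, fderivWithin ℝ (φ k) U y (X y) = 0 := by
    intro k y hy
    have ht : Tendsto (fun N : ℕ => ∑ i, ∑ j, X y i * X y j * ∑ k ∈ Finset.range N,
      fderivWithin ℝ (φ k) U y (Pi.single i 1) * fderivWithin ℝ (φ k) U y (Pi.single j 1))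
      atTop (nhds (∑ i, ∑ j, X y i * X y j * α y i j)) :=
      tendsto_finsetSum _ fun i _ => tendsto_finsetSum _ fun j _ =>
        (hp y hy i j).const_mul _
    have hz : ∑ i, ∑ j, X y i * X y j * α y i j = 0 := by
      refine Finset.sum_eq_zero fun i _ => ?_
      have := congrFun (hker y hy) i
      simp only [Matrix.mulVec, dotProduct, Pi.zero_apply] at this
      calc _ = X y i * ∑ j, α y i j * X y j := by
            rw [Finset.mul_sum]; exact Finset.sum_congr rfl fun j _ => by ring
        _ = 0 := by rw [this, mul_zero]
    have he : ∀ N : ℕ, (∑ i, ∑ j, X y i * X y j * ∑ k ∈ Finset.range N,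
      fderivWithin ℝ (φ k) U y (Pi.single i 1) * fderivWithin ℝ (φ k) U y (Pi.single j 1))
      = ∑ k ∈ Finset.range N, (fderivWithin ℝ (φ k) U y (X y)) ^ 2 := by
      intro N
      simp only [Finset.mul_sum]
      rw [Finset.sum_congr rfl fun i _ => Finset.sum_comm, Finset.sum_comm]
      refine Finset.sum_congr rfl fun k _ => ?_
      rw [aux_apply _ (X y), sq, Finset.sum_mul_sum]
      exact Finset.sum_congr rfl fun i _ => Finset.sum_congr rfl fun j _ => by ring
    simp only [he, hz] at ht
    have hs := (hasSum_iff_tendsto_nat_of_nonneg (fun k => sq_nonneg _) _).2 ht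
    have := (hasSum_zero_iff_of_nonneg (fun k => sq_nonneg _)).1 hs
    have := congrFun this k
    simpa using this
  have hu : UniqueDiffWithinAt ℝ U x := hU.uniqueDiffOn x hx
  ext i j
  have hd : Tendsto (fun N : ℕ => fderivWithin ℝ (fun y => ∑ k ∈ Finset.range N,
      fderivWithin ℝ (φ k) U y (Pi.single i 1) * fderivWithin ℝ (φ k) U y (Pi.single j 1)) U x
      (X x)) atTop (nhds (fderivWithin ℝ (fun y => α y i j) U x (X x))) := by
    have h := (hconv i j 1).tendsto_at hx
    have h' := ((ContinuousMultilinearMap.apply ℝ (fun _ : Fin 1 => Fin n → ℝ) ℝ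
      (fun _ => X x)).continuous.tendsto _).comp h
    simpa [Function.comp_def, iteratedFDerivWithin_one_apply hu] using h'
  have hlim := (hd.add (tendsto_finsetSum Finset.univ fun l _ =>
    (hp x hx l j).const_mul (jacobianWithin U X x l i))).add
    (tendsto_finsetSum Finset.univ fun l _ =>
    (hp x hx i l).mul_const (jacobianWithin U X x l j))
  have hgoal : lieDerivMat U α X x i j = fderivWithin ℝ (fun y => α y i j) U x (X x)
      + ∑ l, jacobianWithin U X x l i * α x l j + ∑ l, α x i l * jacobianWithin U X x l j := by
    simp [lieDerivMat, Matrix.mul_apply]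
  rw [hgoal, Matrix.zero_apply]
  refine tendsto_nhds_unique hlim ?_
  refine tendsto_const_nhds.congr fun N => ?_
  have hD := HasFDerivWithinAt.fun_sum (u := Finset.range N) fun k _ =>
    (aux_g hU (hφ k) hx (Pi.single i 1)).mul (aux_g hU (hφ k) hx (Pi.single j 1))
  have hD' := hD.fderivWithin hu
  simp only [Pi.mul_apply] at hD'
  erw [hD']
  simp only [Finset.mul_sum, Finset.sum_mul]
  rw [Finset.sum_comm, Finset.sum_comm (s := Finset.univ), ContinuousLinearMap.sum_apply,
    ← Finset.sum_add_distrib, ← Finset.sum_add_distrib]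
  symm
  refine Finset.sum_eq_zero fun k _ => ?_
  have hi := aux_term hU (hφ k) hX (h0 k) hx i
  have hj := aux_term hU (hφ k) hX (h0 k) hx j
  rw [(aux_g hU (hφ k) hx _).fderivWithin hu] at hi hj
  have e1 : ∑ l, jacobianWithin U X x l i * (fderivWithin ℝ (φ k) U x (Pi.single l 1) *
      fderivWithin ℝ (φ k) U x (Pi.single j 1)) =
      (∑ l, jacobianWithin U X x l i * fderivWithin ℝ (φ k) U x (Pi.single l 1)) *
      fderivWithin ℝ (φ k) U x (Pi.single j 1) := by
    rw [Finset.sum_mul]; exact Finset.sum_congr rfl fun _ _ => by ring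
  have e2 : ∑ l, fderivWithin ℝ (φ k) U x (Pi.single i 1) *
      fderivWithin ℝ (φ k) U x (Pi.single l 1) * jacobianWithin U X x l j =
      (∑ l, jacobianWithin U X x l j * fderivWithin ℝ (φ k) U x (Pi.single l 1)) *
      fderivWithin ℝ (φ k) U x (Pi.single i 1) := by
    rw [Finset.sum_mul]; exact Finset.sum_congr rfl fun _ _ => by ring
  rw [e1, e2]
  simp only [ContinuousLinearMap.add_apply, ContinuousLinearMap.smul_apply, smul_eq_mul]
  linear_combination (fderivWithin ℝ (φ k) U x (Pi.single j 1)) * hi +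
    (fderivWithin ℝ (φ k) U x (Pi.single i 1)) * hj
end

section
/- Let U ⊆ ℝⁿ be open and let α : U → Sym(n,ℝ) be a C¹ map such that L_Xα = 0 for every C¹ vector field X : U → ℝⁿ taking values in the characteristic distribution of α. Then the characteristic distribution of α is involutive (integrable in the sense of Frobenius): for any two C¹ vector fields X, Y : U → ℝⁿ with α(x)X(x) = 0 and α(x)Y(x) = 0 for all x ∈ U, their Lie bracket [X,Y](x) = DY(x)X(x) − DX(x)Y(x) satisfies α(x)[X,Y](x) = 0 for all x ∈ U. (Involutivity conclusion of Theorem 1.) -/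
open Matrix

/-- **Involutivity conclusion of Theorem 1.**
Let `U ⊆ ℝⁿ` be open and `α : U → Sym(n,ℝ)` a `C¹` map such that `L_X α = 0` for
every `C¹` vector field `X` taking values in the characteristic distribution of `α`.
Then the characteristic distribution of `α` is involutive: for any two `C¹` vector
fields `X, Y` with `α X = 0` and `α Y = 0` on `U`, the Lie bracket
`[X,Y] = DY·X − DX·Y` also satisfies `α [X,Y] = 0` on `U`. -/
theorem characteristic_distribution_involutive {n : ℕ}
    (U : Set (Fin n → ℝ)) (hU : IsOpen U)
    (α : (Fin n → ℝ) → Matrix (Fin n) (Fin n) ℝ)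
    (hαsymm : ∀ x ∈ U, (α x)ᵀ = α x)
    (hαC1 : ∀ i j, ContDiffOn ℝ 1 (fun x => α x i j) U)
    (hLie : ∀ X : (Fin n → ℝ) → (Fin n → ℝ), ContDiffOn ℝ 1 X U →
      (∀ x ∈ U, (α x).mulVec (X x) = 0) →
      ∀ x ∈ U, lieDerivMat U α X x = 0) :
    ∀ X Y : (Fin n → ℝ) → (Fin n → ℝ),
      ContDiffOn ℝ 1 X U → ContDiffOn ℝ 1 Y U →
      (∀ x ∈ U, (α x).mulVec (X x) = 0) →
      (∀ x ∈ U, (α x).mulVec (Y x) = 0) →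
      ∀ x ∈ U, (α x).mulVec
        ((jacobianWithin U Y x).mulVec (X x) - (jacobianWithin U X x).mulVec (Y x)) = 0 := by
  intro X Y hX hY hαX hαY x hx
  have hud : UniqueDiffWithinAt ℝ U x := hU.uniqueDiffWithinAt hx
  have hA : ∀ i j, DifferentiableWithinAt ℝ (fun y => α y i j) U x := fun i j =>
    (hαC1 i j).differentiableOn one_ne_zero x hx
  have hYd : ∀ j, DifferentiableWithinAt ℝ (fun y => Y y j) U x := fun j =>
    differentiableWithinAt_pi.1 (hY.differentiableOn one_ne_zero x hx) j
  have hJ : ∀ j, (jacobianWithin U Y x).mulVec (X x) j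
      = fderivWithin ℝ (fun y => Y y j) U x (X x) := by
    intro j
    conv_rhs => rw [pi_eq_sum_univ' (X x)]
    simp only [map_sum, map_smul, Matrix.mulVec, dotProduct, jacobianWithin, Matrix.of_apply,
      smul_eq_mul]
    refine Finset.sum_congr rfl fun k _ => ?_
    rw [mul_comm]
  have key : (Matrix.of fun i j => fderivWithin ℝ (fun y => α y i j) U x (X x)).mulVec (Y x)
      + (α x).mulVec ((jacobianWithin U Y x).mulVec (X x)) = 0 := by
    ext i
    have h0 : fderivWithin ℝ (fun y => ∑ j, α y i j * Y y j) U x = 0 := by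
      have h1 : fderivWithin ℝ (fun y => ∑ j, α y i j * Y y j) U x
          = fderivWithin ℝ (fun _ => (0 : ℝ)) U x :=
        fderivWithin_congr (fun y hy => congrFun (hαY y hy) i) (congrFun (hαY x hx) i)
      rw [h1]; simp
    have h2 := (HasFDerivWithinAt.fun_sum (u := Finset.univ) fun j _ =>
      ((hA i j).hasFDerivWithinAt.mul (hYd j).hasFDerivWithinAt)).fderivWithin hud
    have h3 := congrArg (fun L => L (X x)) (h2.symm.trans h0)
    simp only [ContinuousLinearMap.sum_apply, ContinuousLinearMap.add_apply,
      ContinuousLinearMap.smul_apply, smul_eq_mul, ContinuousLinearMap.zero_apply,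
      Finset.sum_add_distrib] at h3
    simp only [Pi.add_apply, Pi.zero_apply]
    rw [Matrix.mulVec, Matrix.mulVec, dotProduct, dotProduct]
    simp only [hJ, Matrix.of_apply]
    rw [add_comm, ← h3]
    simp only [mul_comm]
  have hL := congrArg (fun M => M.mulVec (Y x)) (hLie X hX hαX x hx)
  simp only [lieDerivMat, Matrix.add_mulVec, ← Matrix.mulVec_mulVec, hαY x hx,
    Matrix.mulVec_zero, Matrix.zero_mulVec, add_zero] at hL
  rw [Matrix.mulVec_sub, sub_eq_zero]
  exact add_left_cancel (key.trans hL.symm)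
end

section
/- Let U ⊆ ℝⁿ be open and let α : U → Sym(n,ℝ) be a smooth map such that: (i) α(x) is positive semi-definite for every x ∈ U; (ii) x ↦ rank α(x) is locally constant on U; (iii) L_Xα = 0 for every smooth vector field X : U → ℝⁿ taking values in the characteristic distribution of α. Then every point x₀ ∈ U has an open neighborhood V ⊆ U on which α admits a reproducing kernel primitive: there exist M ∈ ℕ and smooth functions φ₁,…,φ_M : V → ℝ with α(x) = ∑_{i=1}^M ∇φᵢ(x) ∇φᵢ(x)ᵀ for all x ∈ V. (Theorem 2: local sufficiency of the necessary conditions, in the local model.) -/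
open Matrix
namespace NashRK
open scoped ComplexConjugate

section core
variable {ι : Type*}

/-- real normed space `ℓ¹`. -/
abbrev L1 (ι : Type*) : Type _ := ↥(lp (fun _ : ι => ℂ) 1)

lemma L1.summable (v : L1 ι) : Summable (fun i => ‖v i‖) := by
  simpa using v.2.summable (by simp)

lemma L1.norm_eq (v : L1 ι) : ‖v‖ = ∑' i, ‖v i‖ := by
  rw [lp.norm_eq_tsum_rpow (by simp)]; simp

/-- weighted embedding of finitely supported coefficients -/
noncomputable def emb [DecidableEq ι] (ω : ι → ℝ) (s : ι →₀ ℂ) : L1 ι :=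
  s.sum fun i z => lp.single 1 i ((ω i : ℂ) * z)

lemma emb_apply [DecidableEq ι] (ω : ι → ℝ) (s : ι →₀ ℂ) (i : ι) :
    emb ω s i = (ω i : ℂ) * s i := by
  unfold emb Finsupp.sum
  rw [lp.coeFn_sum, Finset.sum_apply]
  simp only [lp.single_apply]
  by_cases h : i ∈ s.support
  · rw [Finset.sum_eq_single i]
    · simp
    · intro b _ hb
      simp [hb.symm]
    · exact fun h' => absurd h h'
  · rw [Finset.sum_eq_zero]
    · simp [Finsupp.notMem_support_iff.mp h]
    · intro b hb
      have : i ≠ b := fun e => h (e ▸ hb)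
      simp [this]

/-- weighted norm of finitely supported sequence -/
noncomputable def wn (ω : ι → ℝ) (s : ι →₀ ℂ) : ℝ := s.sum fun i z => ω i * ‖z‖

lemma norm_emb [DecidableEq ι] (ω : ι → ℝ) (hω : ∀ i, 0 ≤ ω i) (s : ι →₀ ℂ) :
    ‖emb ω s‖ = wn ω s := by
  rw [L1.norm_eq]
  rw [tsum_eq_sum (s := s.support)]
  · unfold wn Finsupp.sum
    refine Finset.sum_congr rfl fun i _ => ?_
    rw [emb_apply]; simp [abs_of_nonneg (hω i)]
  · intro i hi
    rw [emb_apply]; simp [Finsupp.notMem_support_iff.mp hi]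

variable (Θ : ι → ι → ℂ →ₗ[ℝ] (ι →₀ ℂ))

/-- bilinear map -/
noncomputable def BB [DecidableEq ι] (ω : ι → ℝ) (v w : L1 ι) : L1 ι :=
  ∑' q : ι × ι, emb ω (Θ q.1 q.2 ((v q.1 / ω q.1) * conj (w q.2 / ω q.2)))

structure Wbd (ω : ι → ℝ) (C : ℝ) : Prop where
  pos : ∀ i, 0 < ω i
  bd : ∀ a b z, wn ω (Θ a b z) ≤ C * (ω a * ω b * ‖z‖)

variable {Θ}
variable [DecidableEq ι] {ω : ι → ℝ} {C : ℝ}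

lemma term_norm (h : Wbd Θ ω C) (v w : L1 ι) (q : ι × ι) :
    ‖emb ω (Θ q.1 q.2 ((v q.1 / ω q.1) * conj (w q.2 / ω q.2)))‖ ≤ C * (‖v q.1‖ * ‖w q.2‖) := by
  rw [norm_emb ω (fun i => (h.pos i).le)]
  refine (h.bd _ _ _).trans (le_of_eq ?_)
  have h1 := h.pos q.1
  have h2 := h.pos q.2
  simp only [norm_mul, RCLike.norm_conj, norm_div, Complex.norm_real, Real.norm_eq_abs, abs_of_pos h1,
    abs_of_pos h2]
  field_simp

lemma prod_summable (v w : L1 ι) : Summable fun q : ι × ι => ‖v q.1‖ * ‖w q.2‖ := by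
  have := (L1.summable v).mul_of_nonneg (L1.summable w) (fun _ => norm_nonneg _) (fun _ => norm_nonneg _)
  exact this

lemma prod_tsum (v w : L1 ι) : ∑' q : ι × ι, ‖v q.1‖ * ‖w q.2‖ = ‖v‖ * ‖w‖ := by
  rw [L1.norm_eq, L1.norm_eq, (L1.summable v).tsum_mul_tsum (L1.summable w) (prod_summable v w)]

lemma BB_summable_norm (h : Wbd Θ ω C) (v w : L1 ι) :
    Summable fun q : ι × ι => ‖emb ω (Θ q.1 q.2 ((v q.1 / ω q.1) * conj (w q.2 / ω q.2)))‖ :=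
  Summable.of_nonneg_of_le (fun _ => norm_nonneg _) (term_norm h v w)
    ((prod_summable v w).mul_left C)

lemma BB_summable (h : Wbd Θ ω C) (v w : L1 ι) :
    Summable fun q : ι × ι => emb ω (Θ q.1 q.2 ((v q.1 / ω q.1) * conj (w q.2 / ω q.2))) :=
  (BB_summable_norm h v w).of_norm

lemma BB_norm (h : Wbd Θ ω C) (v w : L1 ι) : ‖BB Θ ω v w‖ ≤ C * (‖v‖ * ‖w‖) := by
  unfold BB
  refine (norm_tsum_le_tsum_norm (BB_summable_norm h v w)).trans ?_
  rw [← prod_tsum, ← tsum_mul_left]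
  exact (BB_summable_norm h v w).tsum_le_tsum (term_norm h v w) ((prod_summable v w).mul_left C)

lemma emb_add (s t : ι →₀ ℂ) : emb ω (s + t) = emb ω s + emb ω t := by
  ext i; simp [emb_apply, mul_add]

lemma BB_diff (h : Wbd Θ ω C) (v w : L1 ι) :
    BB Θ ω v v = BB Θ ω w w + (BB Θ ω (v - w) v + BB Θ ω w (v - w)) := by
  unfold BB
  rw [← (BB_summable h (v-w) v).tsum_add (BB_summable h w (v-w)),
    ← (BB_summable h w w).tsum_add ((BB_summable h (v-w) v).add (BB_summable h w (v-w)))]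
  congr 1
  ext1 q
  rw [← emb_add, ← emb_add, ← map_add, ← map_add]
  congr 2
  simp only [lp.coeFn_sub, Pi.sub_apply, map_sub, map_div₀]
  ring

lemma BB_apply (h : Wbd Θ ω C) (v w : L1 ι) (i : ι) :
    BB Θ ω v w i = ω i * ∑' q : ι × ι, (Θ q.1 q.2 ((v q.1 / ω q.1) * conj (w q.2 / ω q.2))) i := by
  unfold BB
  have := (lp.evalCLM ℝ (fun _ : ι => ℂ) (p := 1) i).map_tsum (BB_summable h v w)
  change (lp.evalCLM ℝ (fun _ : ι => ℂ) (p := 1) i) _ = _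
  rw [this, ← tsum_mul_left]
  congr 1
  ext1 q
  exact emb_apply _ _ _

variable (Θ) in
def Sol (f p : ι → ℂ) : Prop := ∀ i, p i = f i + ∑' q : ι × ι, (Θ q.1 q.2 (p q.1 * conj (p q.2))) i

noncomputable def toL1 (ω : ι → ℝ) (f : ι → ℂ) (h : Summable fun i => ω i * ‖f i‖)
    (hω : ∀ i, 0 < ω i) : L1 ι :=
  ⟨fun i => (ω i : ℂ) * f i, by
    apply memℓp_gen
    simpa [abs_of_pos (hω _)] using h⟩

lemma toL1_norm (f : ι → ℂ) (h : Summable fun i => ω i * ‖f i‖)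
    (hω : ∀ i, 0 < ω i) : ‖toL1 ω f h hω‖ = ∑' i, ω i * ‖f i‖ := by
  rw [L1.norm_eq]
  congr 1; ext1 i
  change ‖(ω i : ℂ) * f i‖ = _
  simp [abs_of_pos (hω i)]

lemma Sol_iff (h : Wbd Θ ω C) (f p : ι → ℂ) (hf : Summable fun i => ω i * ‖f i‖)
    (hp : Summable fun i => ω i * ‖p i‖) :
    Sol Θ f p ↔ toL1 ω p hp h.pos = toL1 ω f hf h.pos + BB Θ ω (toL1 ω p hp h.pos) (toL1 ω p hp h.pos) := by
  have key : ∀ i, (toL1 ω p hp h.pos i / ω i : ℂ) = p i := by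
    intro i
    change (ω i : ℂ) * p i / ω i = _
    have : (ω i : ℂ) ≠ 0 := by exact_mod_cast (h.pos i).ne'
    field_simp
  constructor
  · intro hs
    ext i
    rw [lp.coeFn_add, Pi.add_apply, BB_apply h]
    simp only [key]
    change (ω i : ℂ) * p i = (ω i : ℂ) * f i + _
    rw [hs i]
    have := hs i
    rw [mul_add]
  · intro hs i
    have h1 := congrArg (fun v : L1 ι => v i) hs
    simp only [lp.coeFn_add, Pi.add_apply] at h1
    rw [BB_apply h] at h1
    simp only [key] at h1
    change (ω i : ℂ) * p i = (ω i : ℂ) * f i + _ at h1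
    rw [← mul_add] at h1
    have : (ω i : ℂ) ≠ 0 := by exact_mod_cast (h.pos i).ne'
    exact mul_left_cancel₀ this h1

lemma exists_fix {X : Type*} [NormedAddCommGroup X] [NormedSpace ℝ X] [CompleteSpace X]
    (B : X → X → X) (C : ℝ) (hC : 0 < C) (hB : ∀ v w, ‖B v w‖ ≤ C * (‖v‖ * ‖w‖))
    (hd : ∀ v w, B v v = B w w + (B (v - w) v + B w (v - w))) (f : X) (hf : ‖f‖ ≤ 1 / (8 * C)) :
    ∃ v, ‖v‖ ≤ 1 / (4 * C) ∧ v = f + B v v := by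
  set r := 1 / (4 * C) with hr
  have hrC : C * r = 1 / 4 := by rw [hr]; field_simp
  have hr0 : 0 < r := by positivity
  have hf' : ‖f‖ ≤ r / 2 := by rw [hr]; refine hf.trans (le_of_eq ?_); field_simp; norm_num
  let F : X → X := fun v => f + B v v
  have hmaps : Set.MapsTo F (Metric.closedBall 0 r) (Metric.closedBall 0 r) := by
    intro v hv
    simp only [Metric.mem_closedBall, dist_zero_right] at hv ⊢
    refine (norm_add_le _ _).trans ?_
    have := hB v v
    have h2 : C * (‖v‖ * ‖v‖) ≤ C * (r * r) := by gcongr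
    nlinarith
  have hlip : ∀ v w : X, ‖v‖ ≤ r → ‖w‖ ≤ r → ‖B v v - B w w‖ ≤ (1/2) * ‖v - w‖ := by
    intro v w hv hw
    rw [hd v w, add_sub_cancel_left]
    refine (norm_add_le _ _).trans ?_
    have h1 := hB (v - w) v
    have h2 := hB w (v - w)
    have h3 : C * (‖v - w‖ * ‖v‖) ≤ C * (‖v - w‖ * r) := by gcongr
    have h4 : C * (‖w‖ * ‖v - w‖) ≤ C * (r * ‖v - w‖) := by gcongr
    nlinarith [norm_nonneg (v - w)]
  have hcon : ContractingWith (1/2) (hmaps.restrict F _ _) := by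
    refine ⟨by norm_num, LipschitzWith.of_dist_le_mul ?_⟩
    rintro ⟨v, hv⟩ ⟨w, hw⟩
    simp only [Metric.mem_closedBall, dist_zero_right] at hv hw
    change dist (f + B v v) (f + B w w) ≤ _ * dist v w
    rw [dist_add_left, dist_eq_norm, dist_eq_norm]
    simpa using hlip v w hv hw
  obtain ⟨v, hv, hfix, -⟩ := hcon.exists_fixedPoint' (x := (0 : X)) (s := Metric.closedBall 0 r)
    Metric.isClosed_closedBall.isComplete hmaps (by simp [hr0.le]) (edist_ne_top _ _)
  exact ⟨v, by simpa using hv, hfix.symm⟩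

lemma unique_fix {X : Type*} [NormedAddCommGroup X] [NormedSpace ℝ X]
    (B : X → X → X) (C : ℝ) (hC : 0 < C) (hB : ∀ v w, ‖B v w‖ ≤ C * (‖v‖ * ‖w‖))
    (hd : ∀ v w, B v v = B w w + (B (v - w) v + B w (v - w))) (f : X)
    (v w : X) (hv : ‖v‖ ≤ 1 / (4 * C)) (hw : ‖w‖ ≤ 1 / (4 * C))
    (h1 : v = f + B v v) (h2 : w = f + B w w) : v = w := by
  set r := 1 / (4 * C) with hr
  have hrC : C * r = 1 / 4 := by rw [hr]; field_simp
  have hr0 : 0 < r := by positivity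
  have e : v - w = B (v - w) v + B w (v - w) := by
    have h3 := hd v w
    have h4 : v - w = B v v - B w w := by
      nth_rewrite 1 [h1]; nth_rewrite 1 [h2]; abel
    exact h4.trans (by rw [sub_eq_iff_eq_add']; exact h3)
  have : ‖v - w‖ ≤ (1/2) * ‖v - w‖ := by
    nth_rewrite 1 [e]
    refine (norm_add_le _ _).trans ?_
    have h1 := hB (v - w) v
    have h2 := hB w (v - w)
    have h3 : C * (‖v - w‖ * ‖v‖) ≤ C * (‖v - w‖ * r) := by gcongr
    have h4 : C * (‖w‖ * ‖v - w‖) ≤ C * (r * ‖v - w‖) := by gcongr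
    nlinarith [norm_nonneg (v - w)]
  have h0 : ‖v - w‖ = 0 := by nlinarith [norm_nonneg (v - w)]
  exact sub_eq_zero.mp (norm_eq_zero.mp h0)

lemma exists_sol (hC : 0 < C) (h : Wbd Θ ω C) (f : ι → ℂ) (hf : Summable fun i => ω i * ‖f i‖)
    (hfs : ∑' i, ω i * ‖f i‖ ≤ 1 / (8 * C)) :
    ∃ p : ι → ℂ, Sol Θ f p ∧ (Summable fun i => ω i * ‖p i‖) ∧ ∑' i, ω i * ‖p i‖ ≤ 1 / (4 * C) := by
  obtain ⟨v, hv, hfix⟩ := exists_fix (BB Θ ω) C hC (BB_norm h) (BB_diff h) (toL1 ω f hf h.pos)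
    (by rw [toL1_norm]; exact hfs)
  have e : ∀ i, ω i * ‖v i / (ω i : ℂ)‖ = ‖v i‖ := by
    intro i
    have := h.pos i
    simp [abs_of_pos this]; field_simp
  have hs : Summable fun i => ω i * ‖v i / (ω i : ℂ)‖ := by
    simp only [e]; exact (L1.summable v)
  have e2 : toL1 ω (fun i => v i / (ω i : ℂ)) hs h.pos = v := by
    ext i
    change (ω i : ℂ) * (v i / ω i) = v i
    have : (ω i : ℂ) ≠ 0 := by exact_mod_cast (h.pos i).ne'
    field_simp
  refine ⟨fun i => v i / (ω i : ℂ), ?_, hs, ?_⟩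
  · rw [Sol_iff h f _ hf hs, e2]; exact hfix
  · simp only [e]; rw [← L1.norm_eq]; exact hv

lemma unique_sol (hC : 0 < C) (h : Wbd Θ ω C) (f : ι → ℂ) (hf : Summable fun i => ω i * ‖f i‖)
    (p p' : ι → ℂ) (hp : Sol Θ f p) (hps : Summable fun i => ω i * ‖p i‖)
    (hpn : ∑' i, ω i * ‖p i‖ ≤ 1 / (4 * C)) (hp' : Sol Θ f p') (hps' : Summable fun i => ω i * ‖p' i‖)
    (hpn' : ∑' i, ω i * ‖p' i‖ ≤ 1 / (4 * C)) : p = p' := by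
  have := unique_fix (BB Θ ω) C hC (BB_norm h) (BB_diff h) (toL1 ω f hf h.pos)
    (toL1 ω p hps h.pos) (toL1 ω p' hps' h.pos) (by rwa [toL1_norm]) (by rwa [toL1_norm])
    ((Sol_iff h f p hf hps).1 hp) ((Sol_iff h f p' hf hps').1 hp')
  funext i
  have h1 := congrArg (fun v : L1 ι => v i) this
  change (ω i : ℂ) * p i = (ω i : ℂ) * p' i at h1
  have : (ω i : ℂ) ≠ 0 := by exact_mod_cast (h.pos i).ne'
  exact mul_left_cancel₀ this h1

lemma functional_eq (h : Wbd Θ ω C) (f p : ι → ℂ) (hf : Summable fun i => ω i * ‖f i‖)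
    (hp : Sol Θ f p) (hps : Summable fun i => ω i * ‖p i‖)
    (e : ι → ℂ →ₗ[ℝ] ℝ) (K : ℝ) (he : ∀ i z, |e i z| ≤ K * (ω i * ‖z‖)) :
    ∑' i, e i (p i) = ∑' i, e i (f i) +
      ∑' q : ι × ι, (Θ q.1 q.2 (p q.1 * conj (p q.2))).sum (fun i z => e i z) := by
  have key : ∀ i, (toL1 ω p hps h.pos i / ω i : ℂ) = p i := by
    intro i
    change (ω i : ℂ) * p i / ω i = _
    have : (ω i : ℂ) ≠ 0 := by exact_mod_cast (h.pos i).ne'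
    field_simp
  have hb : ∀ (v : L1 ι) i, ‖e i (v i / (ω i : ℂ))‖ ≤ K * ‖v i‖ := by
    intro v i
    refine (he i _).trans (le_of_eq ?_)
    have := h.pos i
    rw [norm_div, Complex.norm_real, Real.norm_eq_abs, abs_of_pos this]; field_simp
  have hsum : ∀ v : L1 ι, Summable fun i => e i (v i / (ω i : ℂ)) := fun v =>
    (Summable.of_nonneg_of_le (fun _ => norm_nonneg _) (hb v) ((L1.summable v).mul_left K)).of_norm
  let E : L1 ι →L[ℝ] ℝ := LinearMap.mkContinuous
    { toFun := fun v => ∑' i, e i (v i / (ω i : ℂ))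
      map_add' := by
        intro v w
        rw [← (hsum v).tsum_add (hsum w)]
        congr 1; ext1 i
        rw [lp.coeFn_add, Pi.add_apply, add_div, map_add]
      map_smul' := by
        intro c v
        simp only [RingHom.id_apply, smul_eq_mul]
        rw [← tsum_mul_left]
        congr 1; ext1 i
        rw [lp.coeFn_smul, Pi.smul_apply, smul_div_assoc, map_smul, smul_eq_mul] } K (by
      intro v
      simp only [LinearMap.coe_mk, AddHom.coe_mk]
      rw [L1.norm_eq, ← tsum_mul_left]
      have h1 := Summable.of_nonneg_of_le (fun _ => norm_nonneg _) (hb v) ((L1.summable v).mul_left K)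
      exact (norm_tsum_le_tsum_norm h1).trans (h1.tsum_le_tsum (hb v) ((L1.summable v).mul_left K)))
  have hE : ∀ v, E v = ∑' i, e i (v i / (ω i : ℂ)) := fun v => rfl
  have h1 := congrArg E ((Sol_iff h f p hf hps).1 hp)
  rw [map_add] at h1
  have e1 : ∀ (g : ι → ℂ) (hg : Summable fun i => ω i * ‖g i‖), E (toL1 ω g hg h.pos) = ∑' i, e i (g i) := by
    intro g hg
    rw [hE]
    congr 1; ext1 i
    congr 1
    change (ω i : ℂ) * g i / ω i = _
    have : (ω i : ℂ) ≠ 0 := by exact_mod_cast (h.pos i).ne'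
    field_simp
  rw [e1, e1] at h1
  rw [h1]
  congr 1
  unfold BB
  rw [E.map_tsum (BB_summable h _ _)]
  congr 1; ext1 q
  rw [hE, key, key]
  rw [tsum_eq_sum (s := (Θ q.1 q.2 (p q.1 * conj (p q.2))).support)]
  · unfold Finsupp.sum
    refine Finset.sum_congr rfl fun i _ => ?_
    rw [emb_apply]
    have : (ω i : ℂ) ≠ 0 := by exact_mod_cast (h.pos i).ne'
    rw [mul_div_cancel_left₀ _ this]
  · intro i hi
    rw [emb_apply, Finsupp.notMem_support_iff.mp hi]; simp

end core
end NashRK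

namespace NashRK
open scoped ComplexConjugate
section gunther
variable {n : ℕ}

abbrev Idx (n : ℕ) := Fin n × Fin n × Bool
abbrev Fr (n : ℕ) := Fin n → ℤ

def sgn (b : Bool) : ℝ := if b then 1 else -1

def mv (ν : Idx n) : Fr n := fun i =>
  (if i = ν.1 then 1 else 0) + (if ν.2.2 then 1 else -1) * (if i = ν.2.1 then 1 else 0)

noncomputable def fq (k : Fr n) (i : Fin n) : ℝ := 2 * Real.pi * (k i)

lemma fq_sub (k l : Fr n) (i : Fin n) : fq (k - l) i = fq k i - fq l i := by
  simp [fq]; ring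
lemma fq_add (k l : Fr n) (i : Fin n) : fq (k + l) i = fq k i + fq l i := by
  simp [fq]; ring
lemma fq_neg (k : Fr n) (i : Fin n) : fq (-k) i = - fq k i := by
  simp [fq]

lemma sum_mm (S : Fin n → Fin n → ℝ) (hS : ∀ i j, S i j = S j i) (i j : Fin n) :
    ∑ ν : Idx n, fq (mv ν) i * fq (mv ν) j * (sgn ν.2.2 * S ν.1 ν.2.1) =
      16 * Real.pi ^ 2 * S i j := by
  simp only [Fintype.sum_prod_type, Fintype.sum_bool, fq, mv, sgn]
  have : ∀ p q : Fin n, 2 * Real.pi * (((if i = p then 1 else 0) + (if true = true then 1 else -1) * (if i = q then 1 else 0) : ℤ) : ℝ) *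
      (2 * Real.pi * (((if j = p then 1 else 0) + (if true = true then 1 else -1) * (if j = q then 1 else 0) : ℤ) : ℝ)) *
      ((if true = true then 1 else -1) * S p q) + 
      2 * Real.pi * (((if i = p then 1 else 0) + (if false = true then 1 else -1) * (if i = q then 1 else 0) : ℤ) : ℝ) *
      (2 * Real.pi * (((if j = p then 1 else 0) + (if false = true then 1 else -1) * (if j = q then 1 else 0) : ℤ) : ℝ)) *
      ((if false = true then 1 else -1) * S p q) = 
      8 * Real.pi ^ 2 * ((if i = p then 1 else 0) * ((if j = q then 1 else 0) * S p q) + (if j = p then 1 else 0) * ((if i = q then 1 else 0) * S p q)) := by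
    intro p q
    push_cast; simp only [if_true, Bool.false_eq_true, if_false]; ring
  refine (Finset.sum_congr rfl fun p _ => Finset.sum_congr rfl fun q _ => this p q).trans ?_
  simp only [← Finset.mul_sum, Finset.sum_add_distrib]
  simp
  rw [hS j i]; ring

lemma sum_m (A : Fin n → ℝ) (i : Fin n) :
    ∑ ν : Idx n, fq (mv ν) i * (if ν.1 = ν.2.1 ∧ ν.2.2 = true then A ν.1 else 0) =
      4 * Real.pi * A i := by
  simp only [Fintype.sum_prod_type, Fintype.sum_bool, fq, mv]
  have : ∀ p q : Fin n, 2 * Real.pi * (((if i = p then 1 else 0) + (if True then 1 else -1) * (if i = q then 1 else 0) : ℤ) : ℝ) *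
      (if p = q ∧ True then A p else 0) + 
      2 * Real.pi * (((if i = p then 1 else 0) + (if false = true then 1 else -1) * (if i = q then 1 else 0) : ℤ) : ℝ) *
      (if p = q ∧ false = true then A p else 0) =
      4 * Real.pi * (if p = q then (if i = q then A p else 0) else 0) := by
    intro p q
    by_cases h : p = q
    · subst h
      by_cases h' : i = p
      · simp only [h', if_true, and_self, Bool.false_eq_true, and_false, if_false]; push_cast; ring
      · simp [h']
    · simp [h]
  refine (Finset.sum_congr rfl fun p _ => Finset.sum_congr rfl fun q _ => this p q).trans ?_
  simp only [← Finset.mul_sum]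
  simp

/-- the algebra -/
noncomputable def sq (κ : Fin n → ℝ) : ℝ := ∑ i, κ i ^ 2
noncomputable def Av (κ l : Fin n → ℝ) (j : Fin n) : ℝ := sq κ * l j - sq l * κ j
noncomputable def Lm (κ l : Fin n → ℝ) (i j : Fin n) : ℝ :=
  l i * l j * sq κ + sq l * (κ i * κ j) + (1 - 2 * ∑ t, κ t * l t) * ((κ i * l j + κ j * l i) / 2)

lemma sq_nonneg' (κ : Fin n → ℝ) : 0 ≤ sq κ := Finset.sum_nonneg fun _ _ => sq_nonneg _

lemma sq_sub (κ l : Fin n → ℝ) : sq (κ - l) = sq κ + sq l - 2 * ∑ t, κ t * l t := by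
  simp only [sq, Pi.sub_apply, Finset.mul_sum, ← Finset.sum_add_distrib, ← Finset.sum_sub_distrib]
  exact Finset.sum_congr rfl fun i _ => by ring

lemma gunther_id (κ l : Fin n → ℝ) (i j : Fin n) :
    (κ i * l j + κ j * l i) / 2 * (1 + sq (κ - l)) =
      ((κ i - l i) * Av κ l j + (κ j - l j) * Av κ l i) / 2 + Lm κ l i j := by
  rw [sq_sub]; unfold Av Lm; ring

lemma comp_sq_le (κ : Fin n → ℝ) (i : Fin n) : κ i ^ 2 ≤ sq κ :=
  Finset.single_le_sum (f := fun i => κ i ^ 2) (fun _ _ => sq_nonneg _) (Finset.mem_univ i)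

lemma comp_le (κ : Fin n → ℝ) (i : Fin n) : |κ i| ≤ 1 + sq κ := by
  have := comp_sq_le κ i
  rw [abs_le]; constructor <;> nlinarith [sq_nonneg (κ i - 1), sq_nonneg (κ i + 1)]

lemma comp2_le (κ : Fin n → ℝ) (i j : Fin n) : |κ i * κ j| ≤ sq κ := by
  have h1 := comp_sq_le κ i
  have h2 := comp_sq_le κ j
  rw [abs_le]; constructor <;> nlinarith [sq_nonneg (κ i - κ j), sq_nonneg (κ i + κ j)]

lemma Av_le (κ l : Fin n → ℝ) (j : Fin n) : |Av κ l j| ≤ 2 * ((1 + sq κ) * (1 + sq l)) := by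
  have h1 := comp_le κ j
  have h2 := comp_le l j
  have h3 := sq_nonneg' κ
  have h4 := sq_nonneg' l
  unfold Av
  refine (abs_sub _ _).trans ?_
  rw [abs_mul, abs_mul, abs_of_nonneg h3, abs_of_nonneg h4]
  have h5 : sq κ * |l j| ≤ (1 + sq κ) * (1 + sq l) := mul_le_mul (by linarith) h2 (abs_nonneg _) (by linarith)
  have h6 : sq l * |κ j| ≤ (1 + sq l) * (1 + sq κ) := mul_le_mul (by linarith) h1 (abs_nonneg _) (by linarith)
  linarith

lemma Lm_le (κ l : Fin n → ℝ) (i j : Fin n) : |Lm κ l i j| ≤ 5 * ((1 + sq κ) * (1 + sq l)) := by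
  have h3 := sq_nonneg' κ
  have h4 := sq_nonneg' l
  set P := (1 + sq κ) * (1 + sq l) with hP
  have hkl : sq κ * sq l ≤ P := by rw [hP]; nlinarith
  have a1 : |l i * l j * sq κ| ≤ P := by
    rw [abs_mul, abs_of_nonneg h3]
    have := comp2_le l i j
    nlinarith
  have a2 : |sq l * (κ i * κ j)| ≤ P := by
    rw [abs_mul, abs_of_nonneg h4]
    have := comp2_le κ i j
    nlinarith
  have b : ∀ i j, |κ i * l j| ≤ P := fun i j => by
    rw [abs_mul]; exact mul_le_mul (comp_le κ i) (comp_le l j) (abs_nonneg _) (by linarith)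
  have cs : (∑ t, κ t * l t) ^ 2 ≤ sq κ * sq l := Finset.sum_mul_sq_le_sq_mul_sq _ _ _
  have c : ∀ i j, |(∑ t, κ t * l t) * (κ i * l j)| ≤ P := fun i j => by
    have h5 : (κ i * l j) ^ 2 ≤ sq κ * sq l := by
      rw [mul_pow]; exact mul_le_mul (comp_sq_le κ i) (comp_sq_le l j) (sq_nonneg _) h3
    rw [abs_le]; constructor <;> nlinarith [sq_nonneg ((∑ t, κ t * l t) - κ i * l j), sq_nonneg ((∑ t, κ t * l t) + κ i * l j)]
  have b1 := b i j
  have b2 := b j i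
  have c1 := c i j
  have c2 := c j i
  unfold Lm
  rw [abs_le] at *
  constructor <;> nlinarith

variable (δ : ℝ)

noncomputable def ac (κ l : Fin n → ℝ) (ν : Idx n) : ℝ :=
  - (sgn ν.2.2 * Lm κ l ν.1 ν.2.1) / (32 * Real.pi ^ 2 * δ * (1 + sq (κ - l)))
noncomputable def bc (κ l : Fin n → ℝ) (ν : Idx n) : ℝ :=
  (if ν.1 = ν.2.1 ∧ ν.2.2 = true then Av κ l ν.1 else 0) / (8 * Real.pi * δ * (1 + sq (κ - l)))

lemma ab_eq (hδ : 0 < δ) (κ l : Fin n → ℝ) (i j : Fin n) :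
    ∑ ν : Idx n, δ * (2 * fq (mv ν) i * fq (mv ν) j * ac δ κ l ν -
      bc δ κ l ν * (fq (mv ν) i * (κ j - l j) + fq (mv ν) j * (κ i - l i))) =
      - ((κ i * l j + κ j * l i) / 2) := by
  have hden : 0 < 1 + sq (κ - l) := by have := sq_nonneg' (κ - l); linarith
  have hpi := Real.pi_pos
  have h1 := sum_mm (Lm κ l) (fun i j => by unfold Lm; ring) i j
  have h2 := sum_m (Av κ l) i
  have h3 := sum_m (Av κ l) j
  have hg := gunther_id κ l i j
  have e : ∀ ν : Idx n, δ * (2 * fq (mv ν) i * fq (mv ν) j * ac δ κ l ν -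
      bc δ κ l ν * (fq (mv ν) i * (κ j - l j) + fq (mv ν) j * (κ i - l i))) = 
      (- 1 / (16 * Real.pi ^ 2 * (1 + sq (κ - l)))) * (fq (mv ν) i * fq (mv ν) j * (sgn ν.2.2 * Lm κ l ν.1 ν.2.1))
      + (- (κ j - l j) / (8 * Real.pi * (1 + sq (κ - l)))) * (fq (mv ν) i * (if ν.1 = ν.2.1 ∧ ν.2.2 = true then Av κ l ν.1 else 0))
      + (- (κ i - l i) / (8 * Real.pi * (1 + sq (κ - l)))) * (fq (mv ν) j * (if ν.1 = ν.2.1 ∧ ν.2.2 = true then Av κ l ν.1 else 0)) := by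
    intro ν
    unfold ac bc
    field_simp
    ring
  simp only [e, Finset.sum_add_distrib, ← Finset.mul_sum, h1, h2, h3]
  field_simp
  field_simp at hg
  linarith

lemma ab_le (hδ : 0 < δ) (κ l : Fin n → ℝ) (ν : Idx n) :
    (|ac δ κ l ν| + |bc δ κ l ν|) * (1 + sq (κ - l)) ≤ ((1 + sq κ) * (1 + sq l)) / δ := by
  have hden : 0 < 1 + sq (κ - l) := by have := sq_nonneg' (κ - l); linarith
  have hpi := Real.pi_gt_three
  have h3 := sq_nonneg' κ
  have h4 := sq_nonneg' l
  set P := (1 + sq κ) * (1 + sq l) with hP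
  have hP0 : 0 < P := by positivity
  have h1 : |ac δ κ l ν| * (1 + sq (κ - l)) ≤ P / δ / 2 := by
    unfold ac
    rw [abs_div, abs_neg, abs_mul, abs_of_pos (show 0 < 32 * Real.pi ^ 2 * δ * (1 + sq (κ - l)) by positivity)]
    have : |sgn ν.2.2| = 1 := by unfold sgn; split_ifs <;> simp
    rw [this, one_mul]
    have := Lm_le κ l ν.1 ν.2.1
    rw [← hP] at this
    calc |Lm κ l ν.1 ν.2.1| / (32 * Real.pi ^ 2 * δ * (1 + sq (κ - l))) * (1 + sq (κ - l))
        = |Lm κ l ν.1 ν.2.1| / (32 * Real.pi ^ 2) / δ := by field_simp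
      _ ≤ P / 2 / δ := by
        refine div_le_div_of_nonneg_right ?_ hδ.le
        rw [div_le_div_iff₀ (by positivity) (by positivity)]
        nlinarith [mul_pos hP0 (show 0 < Real.pi ^ 2 - 9 by nlinarith), mul_pos hP0 (show 0 < Real.pi - 3 by linarith)]
      _ = _ := by ring
  have h2 : |bc δ κ l ν| * (1 + sq (κ - l)) ≤ P / δ / 2 := by
    unfold bc
    rw [abs_div, abs_of_pos (show 0 < 8 * Real.pi * δ * (1 + sq (κ - l)) by positivity)]
    have : |(if ν.1 = ν.2.1 ∧ ν.2.2 = true then Av κ l ν.1 else 0)| ≤ 2 * P := by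
      split_ifs
      · exact Av_le _ _ _
      · simp; positivity
    calc |(if ν.1 = ν.2.1 ∧ ν.2.2 = true then Av κ l ν.1 else 0)| / (8 * Real.pi * δ * (1 + sq (κ - l))) * (1 + sq (κ - l))
        = |(if ν.1 = ν.2.1 ∧ ν.2.2 = true then Av κ l ν.1 else 0)| / (8 * Real.pi) / δ := by field_simp
      _ ≤ P / 2 / δ := by
        refine div_le_div_of_nonneg_right ?_ hδ.le
        rw [div_le_div_iff₀ (by positivity) (by positivity)]
        nlinarith [mul_pos hP0 (show 0 < Real.pi ^ 2 - 9 by nlinarith), mul_pos hP0 (show 0 < Real.pi - 3 by linarith)]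
      _ = _ := by ring
  have : P / δ = P / δ / 2 + P / δ / 2 := by ring
  rw [this, add_mul]; linarith

end gunther
end NashRK

namespace NashRK
open scoped ComplexConjugate
section concrete
variable {n : ℕ}

abbrev Ix (n : ℕ) := Idx n × Fr n

noncomputable def ek (k : Fr n) (x : Fin n → ℝ) : ℂ :=
  Complex.exp (((∑ i, fq k i * x i : ℝ) : ℂ) * Complex.I)

lemma ek_norm (k : Fr n) (x : Fin n → ℝ) : ‖ek k x‖ = 1 := Complex.norm_exp_ofReal_mul_I _

lemma ek_neg (k : Fr n) (x : Fin n → ℝ) : ek (-k) x = conj (ek k x) := by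
  unfold ek
  rw [← Complex.exp_conj]
  simp [fq_neg]

lemma ek_add (k l : Fr n) (x : Fin n → ℝ) : ek (k + l) x = ek k x * ek l x := by
  unfold ek
  rw [← Complex.exp_add]
  congr 1
  simp only [fq_add, add_mul, Finset.sum_add_distrib]
  push_cast; ring

lemma ek_sub (k l : Fr n) (x : Fin n → ℝ) : ek (k - l) x = ek k x * conj (ek l x) := by
  rw [sub_eq_add_neg, ek_add, ek_neg]

noncomputable def w0 (k : Fr n) : ℝ := 1 + sq (fq k)

lemma w0_pos (k : Fr n) : 1 ≤ w0 k := by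
  have := sq_nonneg' (fq k); unfold w0; linarith

noncomputable def rho (t : ℕ) (R : ℝ) (k : Fr n) : ℝ := (1 + ‖k‖ / R) ^ t

noncomputable def Om (t : ℕ) (R : ℝ) (a : Ix n) : ℝ := w0 a.2 * rho t R a.2

lemma rho_ge (t : ℕ) {R : ℝ} (hR : 0 < R) (k : Fr n) : 1 ≤ rho t R k := by
  unfold rho
  apply one_le_pow₀
  have : 0 ≤ ‖k‖ / R := by positivity
  linarith

lemma rho_sub (t : ℕ) {R : ℝ} (hR : 0 < R) (k l : Fr n) : rho t R (k - l) ≤ rho t R k * rho t R l := by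
  unfold rho
  rw [← mul_pow]
  have h1 : 0 ≤ ‖k‖ / R := by positivity
  have h2 : 0 ≤ ‖l‖ / R := by positivity
  have h3 : ‖k - l‖ / R ≤ ‖k‖ / R + ‖l‖ / R := by
    rw [← add_div]; gcongr; exact norm_sub_le _ _
  gcongr
  nlinarith

lemma rho_neg (t : ℕ) (R : ℝ) (k : Fr n) : rho t R (-k) = rho t R k := by simp [rho]
lemma w0_neg (k : Fr n) : w0 (-k) = w0 k := by simp [w0, sq, fq_neg]

lemma fq_mv_le (ν : Idx n) (i : Fin n) : |fq (mv ν) i| ≤ 4 * Real.pi := by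
  have hpi := Real.pi_pos
  unfold fq
  rw [abs_mul, abs_of_pos (by positivity : 0 < 2 * Real.pi)]
  have : |((mv ν i : ℤ) : ℝ)| ≤ 2 := by
    have : |mv ν i| ≤ 2 := by
      unfold mv
      split_ifs <;> simp
    exact_mod_cast this
  nlinarith

/-- constant -/
noncomputable def c1 (n : ℕ) : ℝ := 2 + 32 * Real.pi ^ 2 * n

lemma c1_pos (n : ℕ) : 0 < c1 n := by unfold c1; positivity

lemma kap_le (ν : Idx n) (k : Fr n) : 1 + sq (fq (k + mv ν)) ≤ c1 n * w0 k := by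
  have h : sq (fq (k + mv ν)) ≤ 2 * sq (fq k) + 32 * Real.pi ^ 2 * n := by
    unfold sq
    calc ∑ i, fq (k + mv ν) i ^ 2 ≤ ∑ i, (2 * fq k i ^ 2 + 32 * Real.pi ^ 2) := by
          refine Finset.sum_le_sum fun i _ => ?_
          rw [fq_add]
          have h1 := abs_le.1 (fq_mv_le ν i)
          nlinarith [sq_nonneg (fq k i - fq (mv ν) i)]
      _ = _ := by rw [Finset.sum_add_distrib, ← Finset.mul_sum]; simp; ring
  have h1 := sq_nonneg' (fq k)
  have h2 : 0 ≤ 32 * Real.pi ^ 2 * n := by positivity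
  unfold c1 w0
  nlinarith

/-- generic output -/
noncomputable def outp (k : Fr n) (a b : Idx n → ℝ) : ℂ →ₗ[ℝ] (Ix n →₀ ℂ) :=
  ∑ ν : Idx n, ((Finsupp.lsingle (R := ℝ) (ν, k)).comp (((a ν - b ν) / 2) • LinearMap.id)
    + (Finsupp.lsingle (R := ℝ) (ν, -k)).comp (((a ν + b ν) / 2) • Complex.conjAe.toLinearMap))

lemma outp_apply (k : Fr n) (a b : Idx n → ℝ) (z : ℂ) :
    outp k a b z = ∑ ν : Idx n, (Finsupp.single (ν, k) (((a ν - b ν) / 2) • z)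
      + Finsupp.single (ν, -k) (((a ν + b ν) / 2) • conj z)) := by
  simp [outp]

noncomputable def Th (δ : ℝ) (q r : Ix n) : ℂ →ₗ[ℝ] (Ix n →₀ ℂ) :=
  if q.1 = r.1 then outp (q.2 - r.2) (ac δ (fq (q.2 + mv q.1)) (fq (r.2 + mv r.1)))
    (bc δ (fq (q.2 + mv q.1)) (fq (r.2 + mv r.1))) else 0

lemma wn_add {ι : Type*} (ω : ι → ℝ) (hω : ∀ i, 0 ≤ ω i) (s t : ι →₀ ℂ) :
    wn ω (s + t) ≤ wn ω s + wn ω t := by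
  classical
  rw [← norm_emb ω hω, ← norm_emb ω hω, ← norm_emb ω hω, emb_add]
  exact norm_add_le _ _

lemma wn_single {ι : Type*} (ω : ι → ℝ) (i : ι) (z : ℂ) : wn ω (Finsupp.single i z) = ω i * ‖z‖ := by
  simp [wn]

lemma wn_zero {ι : Type*} (ω : ι → ℝ) : wn ω 0 = 0 := by simp [wn]

lemma wn_sum {ι κ : Type*} (ω : ι → ℝ) (hω : ∀ i, 0 ≤ ω i) (S : Finset κ) (s : κ → ι →₀ ℂ) :
    wn ω (∑ i ∈ S, s i) ≤ ∑ i ∈ S, wn ω (s i) :=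
  Finset.le_sum_of_subadditive _ (wn_zero ω).le (wn_add ω hω) _ _

noncomputable def CC (n : ℕ) (δ : ℝ) : ℝ := (Fintype.card (Idx n) + 1) * c1 n ^ 2 / δ

lemma CC_pos (n : ℕ) {δ : ℝ} (hδ : 0 < δ) : 0 < CC n δ := by
  have := c1_pos n
  unfold CC; positivity

lemma Om_pos (t : ℕ) {R : ℝ} (hR : 0 < R) (a : Ix n) : 0 < Om t R a :=
  mul_pos (by have := w0_pos a.2; linarith) (by have := rho_ge t hR a.2; linarith)

lemma Th_wbd {δ : ℝ} (hδ : 0 < δ) (t : ℕ) {R : ℝ} (hR : 0 < R) :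
    Wbd (Th (n := n) δ) (Om t R) (CC n δ) := by
  refine ⟨Om_pos t hR, ?_⟩
  have hOm := fun a => (Om_pos (n := n) t hR a).le
  intro q r z
  have hq := Om_pos t hR q
  have hr := Om_pos t hR r
  have hC := CC_pos n hδ
  unfold Th
  split_ifs with h
  swap
  · simp only [LinearMap.zero_apply, wn_zero]; positivity
  rw [outp_apply]
  refine (wn_sum _ hOm _ _).trans ?_
  set κ := fq (q.2 + mv q.1) with hκ
  set l := fq (r.2 + mv r.1) with hl
  have hμ : κ - l = fq (q.2 - r.2) := by
    funext i; simp only [Pi.sub_apply, hκ, hl, fq_add, fq_sub, h]; ring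
  have key : ∀ ν : Idx n, wn (Om t R) (Finsupp.single (ν, q.2 - r.2) (((ac δ κ l ν - bc δ κ l ν) / 2) • z)
      + Finsupp.single (ν, -(q.2 - r.2)) (((ac δ κ l ν + bc δ κ l ν) / 2) • conj z)) ≤
      c1 n ^ 2 / δ * (Om t R q * Om t R r * ‖z‖) := by
    intro ν
    refine (wn_add _ hOm _ _).trans ?_
    rw [wn_single, wn_single, norm_smul, norm_smul, RCLike.norm_conj, Real.norm_eq_abs, Real.norm_eq_abs]
    have e1 : Om t R (ν, -(q.2 - r.2)) = Om t R (ν, q.2 - r.2) := by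
      simp only [Om, w0_neg, rho_neg]
    rw [e1]
    have e2 : |(ac δ κ l ν - bc δ κ l ν) / 2| ≤ (|ac δ κ l ν| + |bc δ κ l ν|) / 2 := by
      rw [abs_div, abs_two]; gcongr; exact abs_sub _ _
    have e3 : |(ac δ κ l ν + bc δ κ l ν) / 2| ≤ (|ac δ κ l ν| + |bc δ κ l ν|) / 2 := by
      rw [abs_div, abs_two]; gcongr; exact abs_add_le _ _
    have e4 := ab_le δ hδ κ l ν
    have e5 : 1 + sq (κ - l) = w0 (q.2 - r.2) := by rw [hμ]; rfl
    rw [e5] at e4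
    have e6 := rho_sub t hR q.2 r.2
    have e7 := kap_le q.1 q.2
    have e8 := kap_le r.1 r.2
    have p1 := w0_pos q.2
    have p2 := w0_pos r.2
    have p3 := w0_pos (q.2 - r.2)
    have p4 := rho_ge t hR (q.2 - r.2)
    have hh := hOm (ν, q.2 - r.2)
    have hc1 := c1_pos n
    calc _ ≤ Om t R (ν, q.2 - r.2) * ((|ac δ κ l ν| + |bc δ κ l ν|) / 2 * ‖z‖) +
          Om t R (ν, q.2 - r.2) * ((|ac δ κ l ν| + |bc δ κ l ν|) / 2 * ‖z‖) := by gcongr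
      _ = ((|ac δ κ l ν| + |bc δ κ l ν|) * w0 (q.2 - r.2)) * rho t R (q.2 - r.2) * ‖z‖ := by
          simp only [Om]; ring
      _ ≤ (((1 + sq κ) * (1 + sq l)) / δ) * (rho t R q.2 * rho t R r.2) * ‖z‖ := by
          have := sq_nonneg' κ
          have := sq_nonneg' l
          gcongr
      _ ≤ (((c1 n * w0 q.2) * (c1 n * w0 r.2)) / δ) * (rho t R q.2 * rho t R r.2) * ‖z‖ := by
          have := sq_nonneg' κ
          have := sq_nonneg' l
          have := rho_ge t hR q.2
          have := rho_ge t hR r.2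
          gcongr
      _ = _ := by simp only [Om]; ring
  refine (Finset.sum_le_sum fun ν _ => key ν).trans ?_
  rw [Finset.sum_const, nsmul_eq_mul, ← mul_assoc, Finset.card_univ]
  refine mul_le_mul_of_nonneg_right ?_ (by positivity)
  have hc1 := c1_pos n
  unfold CC
  rw [mul_div_assoc]
  gcongr
  linarith

/-- decay -/
def Rapid (c : Fr n → ℂ) : Prop := ∀ t : ℕ, Summable fun k => (1 + ‖k‖) ^ t * ‖c k‖
def Rapid' (p : Ix n → ℂ) : Prop := ∀ t : ℕ, Summable fun a => (1 + ‖a.2‖) ^ t * ‖p a‖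

lemma fq_le (k : Fr n) (i : Fin n) : |fq k i| ≤ 2 * Real.pi * (1 + ‖k‖) := by
  have hpi := Real.pi_pos
  unfold fq
  rw [abs_mul, abs_of_pos (by positivity : 0 < 2 * Real.pi)]
  have : |((k i : ℤ) : ℝ)| ≤ ‖k‖ := by
    have := norm_le_pi_norm k i
    rwa [Int.norm_eq_abs] at this
  gcongr
  linarith

lemma w0_le (k : Fr n) : w0 k ≤ (1 + 4 * Real.pi ^ 2 * n) * (1 + ‖k‖) ^ 2 := by
  have : sq (fq k) ≤ 4 * Real.pi ^ 2 * n * (1 + ‖k‖) ^ 2 := by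
    unfold sq
    calc ∑ i, fq k i ^ 2 ≤ ∑ i : Fin n, (2 * Real.pi * (1 + ‖k‖)) ^ 2 :=
          Finset.sum_le_sum fun i _ => sq_le_sq' (abs_le.1 (fq_le k i)).1 (abs_le.1 (fq_le k i)).2
      _ = _ := by simp; ring
  unfold w0
  nlinarith [norm_nonneg k]

lemma Om_summable {p : Ix n → ℂ} (hp : Rapid' p) (t : ℕ) : Summable fun a => Om t 1 a * ‖p a‖ := by
  refine Summable.of_nonneg_of_le (fun a => by have := Om_pos t one_pos a; positivity) ?_
    ((hp (t + 2)).mul_left (1 + 4 * Real.pi ^ 2 * n))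
  intro a
  have := w0_le a.2
  unfold Om rho
  rw [div_one]
  calc _ ≤ ((1 + 4 * Real.pi ^ 2 * n) * (1 + ‖a.2‖) ^ 2) * (1 + ‖a.2‖) ^ t * ‖p a‖ := by gcongr
    _ = _ := by ring

lemma Om_mono (t : ℕ) {R : ℝ} (hR : 1 ≤ R) (a : Ix n) : Om t R a ≤ Om t 1 a := by
  unfold Om rho
  have := w0_pos a.2
  gcongr

lemma Om_ge (t : ℕ) {R : ℝ} (hR : 0 < R) (a : Ix n) : Om 0 1 a ≤ Om t R a := by
  unfold Om
  have h := w0_pos a.2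
  have : rho 0 1 a.2 = 1 := by simp [rho]
  rw [this]
  have := rho_ge t hR a.2
  gcongr

lemma exists_R {f : Ix n → ℂ} (hf : Rapid' f) (t : ℕ) {B : ℝ} (hB : ∑' a, Om 0 1 a * ‖f a‖ < B) :
    ∃ R : ℝ, 1 ≤ R ∧ ∑' a, Om t R a * ‖f a‖ ≤ B := by
  have : Filter.Tendsto (fun R : ℝ => ∑' a, Om t R a * ‖f a‖) Filter.atTop
      (nhds (∑' a, Om 0 1 a * ‖f a‖)) := by
    refine tendsto_tsum_of_dominated_convergence (Om_summable hf t) ?_ ?_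
    · intro a
      refine Filter.Tendsto.mul_const _ ?_
      unfold Om rho
      refine Filter.Tendsto.const_mul _ ?_
      have h1 : Filter.Tendsto (fun R : ℝ => 1 + ‖a.2‖ / R) Filter.atTop (nhds (1 + 0)) :=
        (tendsto_const_nhds.div_atTop Filter.tendsto_id).const_add 1
      simpa using h1.pow t
    · filter_upwards [Filter.eventually_ge_atTop (1:ℝ)] with R hR a
      rw [Real.norm_of_nonneg (by have := Om_pos t (by linarith : 0 < R) a; positivity)]
      exact mul_le_mul_of_nonneg_right (Om_mono t hR a) (norm_nonneg _)
  obtain ⟨R, h1, h2⟩ := ((this.eventually_lt_const hB).and (Filter.eventually_ge_atTop (1:ℝ))).exists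
  exact ⟨R, h2, h1.le⟩

lemma exists_rapid {δ : ℝ} (hδ : 0 < δ) {f : Ix n → ℂ} (hf : Rapid' f)
    (hs : ∑' a, Om 0 1 a * ‖f a‖ < 1 / (8 * CC n δ)) :
    ∃ p : Ix n → ℂ, Sol (Th δ) f p ∧ Rapid' p := by
  classical
  have hC := CC_pos n hδ
  have hsum : ∀ t (R : ℝ), 1 ≤ R → Summable fun a => Om t R a * ‖f a‖ := fun t R hR =>
    Summable.of_nonneg_of_le (fun a => by have := Om_pos t (by linarith : 0 < R) a; positivity)
      (fun a => mul_le_mul_of_nonneg_right (Om_mono t hR a) (norm_nonneg _)) (Om_summable hf t)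
  obtain ⟨p, h1, h2, h3⟩ := exists_sol hC (Th_wbd hδ 0 one_pos) f (hsum 0 1 le_rfl) hs.le
  refine ⟨p, h1, fun t => ?_⟩
  obtain ⟨R, hR, hR'⟩ := exists_R hf t hs
  have hR0 : 0 < R := by linarith
  obtain ⟨p', h1', h2', h3'⟩ := exists_sol hC (Th_wbd hδ t hR0) f (hsum t R hR) hR'
  have hle : ∀ a, Om 0 1 a * ‖p' a‖ ≤ Om t R a * ‖p' a‖ := fun a =>
    mul_le_mul_of_nonneg_right (Om_ge t hR0 a) (norm_nonneg _)
  have h2'' : Summable fun a => Om 0 1 a * ‖p' a‖ := Summable.of_nonneg_of_le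
    (fun a => by have := Om_pos 0 one_pos a; positivity) hle h2'
  have : p = p' := unique_sol hC (Th_wbd hδ 0 one_pos) f (hsum 0 1 le_rfl) p p' h1 h2 h3 h1' h2''
    ((h2''.tsum_le_tsum hle h2').trans h3')
  rw [this]
  refine Summable.of_nonneg_of_le (fun a => by positivity) (fun a => ?_) (h2'.mul_left (R ^ t))
  have e : (1 + ‖a.2‖) ^ t ≤ R ^ t * rho t R a.2 := by
    unfold rho
    rw [← mul_pow]
    gcongr
    rw [mul_add, mul_div_cancel₀ _ hR0.ne']
    linarith
  have e2 : rho t R a.2 ≤ Om t R a := by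
    unfold Om
    have := w0_pos a.2
    have := rho_ge t hR0 a.2
    nlinarith
  rw [← mul_assoc]
  gcongr
  refine e.trans ?_
  gcongr

end concrete
end NashRK

namespace NashRK
open scoped ComplexConjugate
section concrete2
variable {n : ℕ}

noncomputable def cf (δ : ℝ) (i j : Fin n) (a : Ix n) : ℝ :=
  δ * (fq (mv a.1) i * fq (a.2 + mv a.1) j + fq (mv a.1) j * fq (a.2 + mv a.1) i)

noncomputable def ef (δ : ℝ) (i j : Fin n) (x : Fin n → ℝ) (a : Ix n) : ℂ →ₗ[ℝ] ℝ :=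
  cf δ i j a • (Complex.reLm.comp (LinearMap.mulRight ℝ (ek a.2 x)))

lemma ef_apply (δ : ℝ) (i j : Fin n) (x : Fin n → ℝ) (a : Ix n) (z : ℂ) :
    ef δ i j x a z = cf δ i j a * (z * ek a.2 x).re := by
  simp [ef]

lemma cf_le {δ : ℝ} (hδ : 0 < δ) (i j : Fin n) (a : Ix n) :
    |cf δ i j a| ≤ (8 * Real.pi * δ * c1 n) * w0 a.2 := by
  unfold cf
  have h1 := fq_mv_le a.1 i
  have h2 := fq_mv_le a.1 j
  have h3 := (comp_le (fq (a.2 + mv a.1)) i).trans (kap_le a.1 a.2)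
  have h4 := (comp_le (fq (a.2 + mv a.1)) j).trans (kap_le a.1 a.2)
  have hpi := Real.pi_pos
  rw [abs_mul, abs_of_pos hδ]
  have := (abs_add_le (fq (mv a.1) i * fq (a.2 + mv a.1) j) (fq (mv a.1) j * fq (a.2 + mv a.1) i))
  rw [abs_mul, abs_mul] at this
  have h5 : |fq (mv a.1) i| * |fq (a.2 + mv a.1) j| ≤ (4 * Real.pi) * (c1 n * w0 a.2) := by gcongr
  have h6 : |fq (mv a.1) j| * |fq (a.2 + mv a.1) i| ≤ (4 * Real.pi) * (c1 n * w0 a.2) := by gcongr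
  calc _ ≤ δ * ((4 * Real.pi) * (c1 n * w0 a.2) + (4 * Real.pi) * (c1 n * w0 a.2)) := by gcongr; linarith
    _ = _ := by ring

lemma ef_le {δ : ℝ} (hδ : 0 < δ) (i j : Fin n) (x : Fin n → ℝ) (a : Ix n) (z : ℂ) :
    |ef δ i j x a z| ≤ (8 * Real.pi * δ * c1 n) * (Om 0 1 a * ‖z‖) := by
  rw [ef_apply, abs_mul]
  have h1 := cf_le hδ i j a
  have h2 : |(z * ek a.2 x).re| ≤ ‖z‖ := by
    refine (Complex.abs_re_le_norm _).trans ?_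
    rw [norm_mul, ek_norm, mul_one]
  have h3 : Om 0 1 a = w0 a.2 := by simp [Om, rho]
  rw [h3]
  have := w0_pos a.2
  have := c1_pos n
  have := Real.pi_pos
  calc _ ≤ ((8 * Real.pi * δ * c1 n) * w0 a.2) * ‖z‖ := by gcongr
    _ = _ := by ring

lemma outp_ef (δ : ℝ) (i j : Fin n) (x : Fin n → ℝ) (k : Fr n) (a b : Idx n → ℝ) (z : ℂ) :
    (outp k a b z).sum (fun c w => ef δ i j x c w) =
      (∑ ν : Idx n, δ * (2 * fq (mv ν) i * fq (mv ν) j * a ν -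
      b ν * (fq (mv ν) i * fq k j + fq (mv ν) j * fq k i))) * (z * ek k x).re := by
  change Finsupp.lsum ℝ (fun c => ef δ i j x c) (outp k a b z) = _
  rw [outp_apply, map_sum, Finset.sum_mul]
  refine Finset.sum_congr rfl fun ν _ => ?_
  rw [map_add, Finsupp.lsum_single, Finsupp.lsum_single, map_smul, map_smul, ef_apply, ef_apply]
  have : conj z * ek (-k) x = conj (z * ek k x) := by rw [ek_neg, map_mul]
  simp only [this, Complex.conj_re, cf, fq_add, fq_neg, smul_eq_mul]
  ring

lemma Th_ef {δ : ℝ} (hδ : 0 < δ) (i j : Fin n) (x : Fin n → ℝ) (q r : Ix n) (z : ℂ) :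
    (Th δ q r z).sum (fun c w => ef δ i j x c w) =
      if q.1 = r.1 then - ((fq (q.2 + mv q.1) i * fq (r.2 + mv r.1) j +
        fq (q.2 + mv q.1) j * fq (r.2 + mv r.1) i) / 2) * (z * ek (q.2 - r.2) x).re else 0 := by
  unfold Th
  split_ifs with h
  · rw [outp_ef, ← ab_eq δ hδ]
    congr 1
    refine Finset.sum_congr rfl fun ν _ => ?_
    have : ∀ i, fq (q.2 - r.2) i = fq (q.2 + mv q.1) i - fq (r.2 + mv r.1) i := by
      intro i; rw [fq_sub, fq_add, fq_add, h]; ring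
    rw [this, this]
  · simp

lemma tsum_odd (g : Fr n → ℝ) (hg : ∀ k, g (-k) = - g k) : ∑' k, g k = 0 := by
  have h1 := (Equiv.neg (Fr n)).tsum_eq g
  simp only [Equiv.neg_apply, hg, tsum_neg] at h1
  linarith

/-- data -/
noncomputable def ff (δ : ℝ) (c : Fin n → Fin n → Fr n → ℂ) (a : Ix n) : ℂ :=
  ((sgn a.1.2.2 / (32 * Real.pi ^ 2 * δ) : ℝ) : ℂ) * c a.1.1 a.1.2.1 a.2

lemma ff_norm {δ : ℝ} (hδ : 0 < δ) (c : Fin n → Fin n → Fr n → ℂ) (a : Ix n) :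
    ‖ff δ c a‖ = 1 / (32 * Real.pi ^ 2 * δ) * ‖c a.1.1 a.1.2.1 a.2‖ := by
  have : |sgn a.1.2.2| = 1 := by unfold sgn; split_ifs <;> simp
  unfold ff
  rw [norm_mul, Complex.norm_real, Real.norm_eq_abs, abs_div, this,
    abs_of_pos (by have := Real.pi_pos; positivity)]

lemma summable_prod_fin {I K : Type*} [Fintype I] (g : I × K → ℝ) (hg : ∀ i, Summable fun k => g (i, k)) :
    Summable g := by
  classical
  have h : ∀ i, Summable fun a : I × K => if a.1 = i then g a else 0 := by
    intro i
    have hinj : Function.Injective (fun k : K => (i, k)) := fun a b h => (Prod.ext_iff.1 h).2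
    have := (hinj.summable_iff (f := fun a : I × K => if a.1 = i then g a else 0) (by
      rintro ⟨a, b⟩ hab
      simp only
      rw [if_neg]
      rintro rfl
      exact hab ⟨b, rfl⟩)).1
    apply this
    simpa [Function.comp_def] using hg i
  have h2 : g = fun a => ∑ i, if a.1 = i then g a else 0 := by
    funext a; simp
  rw [h2]
  exact summable_sum fun i _ => h i

lemma ff_rapid {δ : ℝ} (hδ : 0 < δ) (c : Fin n → Fin n → Fr n → ℂ) (hc : ∀ i j, Rapid (c i j)) :
    Rapid' (ff δ c) := by
  intro t
  apply summable_prod_fin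
  intro ν
  simp only [ff_norm hδ]
  refine ((hc ν.1 ν.2.1 t).mul_left (1 / (32 * Real.pi ^ 2 * δ))).congr fun k => ?_
  ring

lemma Om_sum_le {δ : ℝ} (hδ : 0 < δ) (c : Fin n → Fin n → Fr n → ℂ) (hc : ∀ i j, Rapid (c i j))
    {η : ℝ} (hη : ∀ i j, ∑' k, w0 k * ‖c i j k‖ ≤ η) :
    ∑' a, Om 0 1 a * ‖ff δ c a‖ ≤ Fintype.card (Idx n) * (1 / (32 * Real.pi ^ 2 * δ) * η) := by
  have hs := Om_summable (ff_rapid hδ c hc) 0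
  rw [hs.tsum_prod, tsum_fintype]
  have : ∀ ν : Idx n, ∑' k, Om 0 1 (ν, k) * ‖ff δ c (ν, k)‖ ≤ 1 / (32 * Real.pi ^ 2 * δ) * η := by
    intro ν
    have e : (fun k => Om 0 1 (ν, k) * ‖ff δ c (ν, k)‖) = fun k =>
        1 / (32 * Real.pi ^ 2 * δ) * (w0 k * ‖c ν.1 ν.2.1 k‖) := by
      funext k; rw [ff_norm hδ]; simp [Om, rho]; ring
    rw [e, tsum_mul_left]
    have := Real.pi_pos
    gcongr
    exact hη _ _
  refine (Finset.sum_le_sum fun ν _ => this ν).trans (le_of_eq ?_)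
  rw [Finset.sum_const, nsmul_eq_mul, Finset.card_univ]

lemma ef_summable {δ : ℝ} (hδ : 0 < δ) (i j : Fin n) (x : Fin n → ℝ) {p : Ix n → ℂ} (hp : Rapid' p) :
    Summable fun a => ef δ i j x a (p a) := by
  refine Summable.of_norm ?_
  exact Summable.of_nonneg_of_le (fun _ => norm_nonneg _) (fun a => ef_le hδ i j x a (p a))
    ((Om_summable hp 0).mul_left _)

set_option maxHeartbeats 1000000 in
lemma ef_ff {δ : ℝ} (hδ : 0 < δ) (c : Fin n → Fin n → Fr n → ℂ) (hc : ∀ i j, Rapid (c i j))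
    (hsym : ∀ i j, c i j = c j i) (hherm : ∀ i j k, c i j (-k) = conj (c i j k))
    (i j : Fin n) (x : Fin n → ℝ) :
    ∑' a, ef δ i j x a (ff δ c a) = ∑' k, (c i j k * ek k x).re := by
  have hpi := Real.pi_pos
  rw [(ef_summable hδ i j x (ff_rapid hδ c hc)).tsum_prod, tsum_fintype]
  have hsumc : ∀ (p q : Fin n) (i : Fin n), Summable fun k => fq k i * (c p q k * ek k x).re := by
    intro p q i
    refine Summable.of_norm (Summable.of_nonneg_of_le (fun _ => norm_nonneg _) (fun k => ?_)
      ((hc p q 1).mul_left (2 * Real.pi)))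
    rw [norm_mul, Real.norm_eq_abs, Real.norm_eq_abs]
    have h1 := fq_le k i
    have h2 : |(c p q k * ek k x).re| ≤ ‖c p q k‖ := by
      refine (Complex.abs_re_le_norm _).trans ?_
      rw [norm_mul, ek_norm, mul_one]
    calc _ ≤ (2 * Real.pi * (1 + ‖k‖)) * ‖c p q k‖ := by gcongr
      _ = _ := by ring
  have hsumr : ∀ (p q : Fin n), Summable fun k => (c p q k * ek k x).re := by
    intro p q
    refine Summable.of_norm (Summable.of_nonneg_of_le (fun _ => norm_nonneg _) (fun k => ?_) (hc p q 0))
    refine (Complex.abs_re_le_norm _).trans ?_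
    rw [norm_mul, ek_norm, mul_one]; simp
  have hev : ∀ (p q : Fin n) k, (c p q (-k) * ek (-k) x).re = (c p q k * ek k x).re := by
    intro p q k
    rw [hherm, ek_neg, ← map_mul, Complex.conj_re]
  have key : ∀ ν : Idx n, ∑' k, ef δ i j x (ν, k) (ff δ c (ν, k)) =
      ∑' k, (1 / (16 * Real.pi ^ 2)) * (fq (mv ν) i * fq (mv ν) j * (sgn ν.2.2 * (c ν.1 ν.2.1 k * ek k x).re)) := by
    intro ν
    have e : ∀ k, ef δ i j x (ν, k) (ff δ c (ν, k)) =
        (1 / (16 * Real.pi ^ 2)) * (fq (mv ν) i * fq (mv ν) j * (sgn ν.2.2 * (c ν.1 ν.2.1 k * ek k x).re))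
        + (sgn ν.2.2 / (32 * Real.pi ^ 2)) * ((fq (mv ν) i * (fq k j * (c ν.1 ν.2.1 k * ek k x).re)) +
          (fq (mv ν) j * (fq k i * (c ν.1 ν.2.1 k * ek k x).re))) := by
      intro k
      rw [ef_apply]
      simp only [ff, cf, fq_add]
      rw [mul_assoc (_ : ℂ) (c _ _ _), Complex.re_ofReal_mul]
      field_simp
      ring
    simp only [e]
    have s1 : Summable fun k => (1 / (16 * Real.pi ^ 2)) * (fq (mv ν) i * fq (mv ν) j * (sgn ν.2.2 * (c ν.1 ν.2.1 k * ek k x).re)) :=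
      ((((hsumr ν.1 ν.2.1).mul_left _).mul_left _).mul_left _)
    have s2 : Summable fun k => (sgn ν.2.2 / (32 * Real.pi ^ 2)) * ((fq (mv ν) i * (fq k j * (c ν.1 ν.2.1 k * ek k x).re)) +
          (fq (mv ν) j * (fq k i * (c ν.1 ν.2.1 k * ek k x).re))) :=
      ((((hsumc ν.1 ν.2.1 j).mul_left _).add ((hsumc ν.1 ν.2.1 i).mul_left _)).mul_left _)
    rw [s1.tsum_add s2]
    rw [tsum_odd (fun k => (sgn ν.2.2 / (32 * Real.pi ^ 2)) * ((fq (mv ν) i * (fq k j * (c ν.1 ν.2.1 k * ek k x).re)) +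
          (fq (mv ν) j * (fq k i * (c ν.1 ν.2.1 k * ek k x).re)))) (by
      intro k; simp only [hev, fq_neg]; ring), add_zero]
  simp only [key]
  rw [← Summable.tsum_finsetSum (fun ν _ => ((((hsumr ν.1 ν.2.1).mul_left _).mul_left _).mul_left _))]
  congr 1
  funext k
  rw [← Finset.mul_sum, sum_mm (fun p q => (c p q k * ek k x).re) (fun p q => by rw [hsym p q])]
  field_simp

theorem core {δ : ℝ} (hδ : 0 < δ) : ∃ η : ℝ, 0 < η ∧ ∀ c : Fin n → Fin n → Fr n → ℂ,
    (∀ i j, Rapid (c i j)) → (∀ i j, c i j = c j i) → (∀ i j k, c i j (-k) = conj (c i j k)) →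
    (∀ i j, ∑' k, w0 k * ‖c i j k‖ ≤ η) → ∃ p : Ix n → ℂ, Rapid' p ∧ ∀ x i j,
      ∑' a, cf δ i j a * (p a * ek a.2 x).re + 
      ∑' q : Ix n × Ix n, (if q.1.1 = q.2.1 then ((fq (q.1.2 + mv q.1.1) i * fq (q.2.2 + mv q.2.1) j +
        fq (q.1.2 + mv q.1.1) j * fq (q.2.2 + mv q.2.1) i) / 2) * 
          (p q.1 * conj (p q.2) * ek (q.1.2 - q.2.2) x).re else 0) = ∑' k, (c i j k * ek k x).re := by
  classical
  have hpi := Real.pi_pos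
  have hC := CC_pos n hδ
  set N : ℝ := (Fintype.card (Idx n) : ℝ) with hN
  have hN0 : 0 ≤ N := by positivity
  refine ⟨32 * Real.pi ^ 2 * δ / ((N + 1) * (16 * CC n δ)), by positivity, ?_⟩
  intro c hc hsym hherm hη
  have hb := Om_sum_le hδ c hc hη
  have hlt : ∑' a, Om 0 1 a * ‖ff δ c a‖ < 1 / (8 * CC n δ) := by
    refine hb.trans_lt ?_
    rw [← hN]
    have : N * (1 / (32 * Real.pi ^ 2 * δ) * (32 * Real.pi ^ 2 * δ / ((N + 1) * (16 * CC n δ)))) =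
      (N / (N + 1)) * (1 / (16 * CC n δ)) := by field_simp
    rw [this]
    have h1 : N / (N + 1) ≤ 1 := by rw [div_le_one (by positivity)]; linarith
    have h2 : 1 / (16 * CC n δ) < 1 / (8 * CC n δ) := by
      apply one_div_lt_one_div_of_lt <;> linarith
    have h3 : 0 < 1 / (16 * CC n δ) := by positivity
    nlinarith
  obtain ⟨p, hp, hr⟩ := exists_rapid hδ (ff_rapid hδ c hc) hlt
  refine ⟨p, hr, fun x i j => ?_⟩
  have := functional_eq (Th_wbd hδ 0 one_pos) (ff δ c) p (Om_summable (ff_rapid hδ c hc) 0) hp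
    (Om_summable hr 0) (ef δ i j x) _ (ef_le hδ i j x)
  rw [ef_ff hδ c hc hsym hherm] at this
  simp only [ef_apply] at this
  rw [this, add_assoc]
  simp only [← ef_apply, Th_ef hδ]
  rw [add_eq_left, ← eq_neg_iff_add_eq_zero, ← tsum_neg]
  congr 1
  funext q
  split_ifs
  · ring
  · simp

end concrete2
end NashRK

namespace NashRK
open scoped ComplexConjugate
section series
variable {n : ℕ}

noncomputable def dotL (k : Fr n) : (Fin n → ℝ) →L[ℝ] ℝ := ∑ i, fq k i • ContinuousLinearMap.proj i

lemma dotL_apply (k : Fr n) (x : Fin n → ℝ) : dotL k x = ∑ i, fq k i * x i := by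
  simp [dotL, ContinuousLinearMap.sum_apply]

lemma dotL_le (k : Fr n) (x : Fin n → ℝ) : |dotL k x| ≤ (2 * Real.pi * n * (1 + ‖k‖)) * ‖x‖ := by
  rw [dotL_apply]
  have hpi := Real.pi_pos
  calc |∑ i, fq k i * x i| ≤ ∑ i, |fq k i * x i| := Finset.abs_sum_le_sum_abs _ _
    _ ≤ ∑ i : Fin n, (2 * Real.pi * (1 + ‖k‖)) * ‖x‖ := by
      refine Finset.sum_le_sum fun i _ => ?_
      rw [abs_mul]
      have := norm_le_pi_norm x i
      rw [Real.norm_eq_abs] at this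
      have := fq_le k i
      gcongr
    _ = _ := by simp; ring

noncomputable def ekd (k : Fr n) (x : Fin n → ℝ) : (Fin n → ℝ) →L[ℝ] ℂ :=
  (ek k x * Complex.I) • (Complex.ofRealCLM.comp (dotL k))

lemma ekd_apply (k : Fr n) (x v : Fin n → ℝ) :
    ekd k x v = Complex.I * (dotL k v : ℝ) * ek k x := by
  simp [ekd]; ring

lemma ek_hasFDerivAt (k : Fr n) (x : Fin n → ℝ) : HasFDerivAt (ek k) (ekd k x) x := by
  have h1 : HasFDerivAt (fun x => ((dotL k x : ℝ) : ℂ) * Complex.I)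
      (Complex.I • (Complex.ofRealCLM.comp (dotL k))) x := by
    have := (Complex.ofRealCLM.comp (dotL k)).hasFDerivAt (x := x)
    simpa using this.mul_const Complex.I
  have h2 := h1.cexp
  have e : ek k = fun x => Complex.exp (((dotL k x : ℝ) : ℂ) * Complex.I) := by
    funext x; rw [dotL_apply]; rfl
  rw [ekd, mul_smul, e]
  exact h2

lemma ekd_norm (k : Fr n) (x : Fin n → ℝ) : ‖ekd k x‖ ≤ 2 * Real.pi * n * (1 + ‖k‖) := by
  have hpi := Real.pi_pos
  refine ContinuousLinearMap.opNorm_le_bound _ (by positivity) fun v => ?_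
  rw [ekd_apply, norm_mul, norm_mul, ek_norm, Complex.norm_I, Complex.norm_real, one_mul, mul_one]
  exact dotL_le k v

variable {ι : Type*}

def RapidG (φ : ι → Fr n) (s : ι → ℂ) : Prop := ∀ t : ℕ, Summable fun a => (1 + ‖φ a‖) ^ t * ‖s a‖

noncomputable def ser (φ : ι → Fr n) (s : ι → ℂ) (x : Fin n → ℝ) : ℂ := ∑' a, s a * ek (φ a) x

lemma RapidG.summable {φ : ι → Fr n} {s : ι → ℂ} (h : RapidG φ s) (x : Fin n → ℝ) :
    Summable fun a => s a * ek (φ a) x := by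
  refine Summable.of_norm ?_
  refine (h 0).congr fun a => ?_
  rw [norm_mul, ek_norm]; simp

lemma RapidG.deriv {φ : ι → Fr n} {s : ι → ℂ} (h : RapidG φ s) (v : Fin n → ℝ) :
    RapidG φ (fun a => s a * (Complex.I * (dotL (φ a) v : ℝ))) := by
  intro t
  refine Summable.of_nonneg_of_le (fun a => by positivity) (fun a => ?_)
    ((h (t + 1)).mul_left (2 * Real.pi * n * ‖v‖))
  have hpi := Real.pi_pos
  rw [norm_mul, norm_mul, Complex.norm_I, one_mul, Complex.norm_real, Real.norm_eq_abs]
  have := dotL_le (φ a) v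
  calc _ ≤ (1 + ‖φ a‖) ^ t * (‖s a‖ * ((2 * Real.pi * n * (1 + ‖φ a‖)) * ‖v‖)) := by gcongr
    _ = _ := by ring

lemma ser_hasFDerivAt {φ : ι → Fr n} {s : ι → ℂ} (h : RapidG φ s) (x : Fin n → ℝ) :
    HasFDerivAt (ser φ s) (∑' a, s a • ekd (φ a) x) x := by
  have hpi := Real.pi_pos
  refine hasFDerivAt_tsum (u := fun a => 2 * Real.pi * n * ((1 + ‖φ a‖) ^ 1 * ‖s a‖)) ((h 1).mul_left _)
    (f := fun a x => s a * ek (φ a) x) (f' := fun a x => s a • ekd (φ a) x)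
    (fun a x => (ek_hasFDerivAt (φ a) x).const_mul (s a)) (fun a x => ?_) (x₀ := x) (h.summable x) x
  rw [norm_smul]
  have := ekd_norm (φ a) x
  calc _ ≤ ‖s a‖ * (2 * Real.pi * n * (1 + ‖φ a‖)) := by gcongr
    _ = _ := by ring

lemma ser_fderiv {φ : ι → Fr n} {s : ι → ℂ} (h : RapidG φ s) (x v : Fin n → ℝ) :
    fderiv ℝ (ser φ s) x v = ser φ (fun a => s a * (Complex.I * (dotL (φ a) v : ℝ))) x := by
  have hpi := Real.pi_pos
  rw [(ser_hasFDerivAt h x).fderiv]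
  have hs : Summable fun a => s a • ekd (φ a) x := by
    refine Summable.of_norm (Summable.of_nonneg_of_le (fun _ => norm_nonneg _) (fun a => ?_)
      ((h 1).mul_left (2 * Real.pi * n)))
    rw [norm_smul]
    have := ekd_norm (φ a) x
    calc _ ≤ ‖s a‖ * (2 * Real.pi * n * (1 + ‖φ a‖)) := by gcongr
      _ = _ := by ring
  have := (ContinuousLinearMap.apply ℝ ℂ v).map_tsum hs
  simp only [ContinuousLinearMap.apply_apply] at this
  rw [this]
  unfold ser
  congr 1
  funext a
  rw [ContinuousLinearMap.smul_apply, ekd_apply, smul_eq_mul]; ring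

lemma ser_contDiff {φ : ι → Fr n} {s : ι → ℂ} (h : RapidG φ s) : ContDiff ℝ (⊤ : ℕ∞) (ser φ s) := by
  rw [contDiff_infty]
  intro m
  induction m generalizing s with
  | zero =>
    rw [Nat.cast_zero, contDiff_zero]
    exact (Differentiable.continuous fun x => (ser_hasFDerivAt h x).differentiableAt : _)
  | succ m ih =>
    rw [Nat.cast_succ, contDiff_succ_iff_fderiv_apply]
    refine ⟨fun x => (ser_hasFDerivAt h x).differentiableAt, by simp, fun v => ?_⟩
    have : (fun x => fderiv ℝ (ser φ s) x v) = ser φ (fun a => s a * (Complex.I * (dotL (φ a) v : ℝ))) := by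
      funext x; exact ser_fderiv h x v
    rw [this]
    exact ih (h.deriv v)

end series
end NashRK

namespace NashRK
open scoped ComplexConjugate

lemma gen_summ {ι : Type*} {f g : ι → ℂ} (hf : Summable fun a => ‖f a‖) (hg : Summable fun a => ‖g a‖) :
    Summable fun q : ι × ι => f q.1 * conj (g q.2) :=
  summable_mul_of_summable_norm (f := f) (g := fun a => conj (g a)) hf (by simpa using hg)

lemma gen_summ_re {ι : Type*} {f g : ι → ℂ} (hf : Summable fun a => ‖f a‖) (hg : Summable fun a => ‖g a‖) :
    Summable fun q : ι × ι => (f q.1 * conj (g q.2)).re := by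
  simpa using Complex.reCLM.summable (gen_summ hf hg)

lemma gen_tsum {ι : Type*} {f g : ι → ℂ} (hf : Summable fun a => ‖f a‖) (hg : Summable fun a => ‖g a‖) :
    ∑' q : ι × ι, (f q.1 * conj (g q.2)).re = ((∑' a, f a) * conj (∑' a, g a)).re := by
  rw [Complex.conj_tsum, tsum_mul_tsum_of_summable_norm (f := f) (g := fun a => conj (g a)) hf (by simpa using hg),
    Complex.re_tsum (gen_summ hf hg)]

section metric
variable {n : ℕ}

lemma dotL_single (k : Fr n) (i : Fin n) : dotL k (Pi.single i 1) = fq k i := by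
  rw [dotL_apply]; simp [Pi.single_apply]

lemma mv_norm (ν : Idx n) : ‖mv ν‖ ≤ 2 := by
  rw [pi_norm_le_iff_of_nonneg (by norm_num)]
  intro i
  rw [Int.norm_eq_abs]
  have : |mv ν i| ≤ 2 := by
    unfold mv
    split_ifs <;> simp
  exact_mod_cast this

noncomputable def phi (a : Ix n) : Fr n := a.2 + mv a.1
noncomputable def sv (p : Ix n → ℂ) (ν : Idx n) (a : Ix n) : ℂ := if a.1 = ν then p a else 0

lemma sv_rapid {p : Ix n → ℂ} (hp : Rapid' p) (ν : Idx n) : RapidG phi (sv p ν) := by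
  intro t
  refine Summable.of_nonneg_of_le (fun a => by positivity) (fun a => ?_) ((hp t).mul_left (3 ^ t))
  have h1 : ‖sv p ν a‖ ≤ ‖p a‖ := by
    unfold sv; split_ifs <;> simp
  have h2 : 1 + ‖phi a‖ ≤ 3 * (1 + ‖a.2‖) := by
    have := norm_add_le a.2 (mv a.1)
    have := mv_norm a.1
    have := norm_nonneg a.2
    unfold phi; linarith
  calc (1 + ‖phi a‖) ^ t * ‖sv p ν a‖ ≤ (3 * (1 + ‖a.2‖)) ^ t * ‖p a‖ := by gcongr
    _ = _ := by rw [mul_pow]; ring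

noncomputable def Uf (δ : ℝ) (p : Ix n → ℂ) (ν : Idx n) (x : Fin n → ℝ) : ℂ :=
  (δ : ℂ) * ek (mv ν) x + ser phi (sv p ν) x

lemma ek_contDiff (k : Fr n) : ContDiff ℝ (⊤ : ℕ∞) (ek k) := by
  have : ek k = ser (fun _ : Unit => k) (fun _ => 1) := by
    funext x; simp [ser]
  rw [this]
  exact ser_contDiff fun t => Summable.of_finite

lemma Uf_contDiff (δ : ℝ) {p : Ix n → ℂ} (hp : Rapid' p) (ν : Idx n) :
    ContDiff ℝ (⊤ : ℕ∞) (Uf δ p ν) :=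
  (contDiff_const.mul (ek_contDiff _)).add (ser_contDiff (sv_rapid hp ν))

noncomputable def dd (p : Ix n → ℂ) (x : Fin n → ℝ) (ν : Idx n) (i : Fin n) (a : Ix n) : ℂ :=
  sv p ν a * (fq (phi a) i : ℂ) * ek a.2 x

lemma dd_summable {p : Ix n → ℂ} (hp : Rapid' p) (x : Fin n → ℝ) (ν : Idx n) (i : Fin n) :
    Summable fun a => ‖dd p x ν i a‖ := by
  have := ((sv_rapid hp ν).deriv (Pi.single i 1)) 0
  refine this.congr fun a => ?_
  simp only [dd, norm_mul, ek_norm, dotL_single]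
  simp

lemma Uf_fderiv (δ : ℝ) {p : Ix n → ℂ} (hp : Rapid' p) (ν : Idx n) (x : Fin n → ℝ) (i : Fin n) :
    fderiv ℝ (Uf δ p ν) x (Pi.single i 1) =
      Complex.I * ek (mv ν) x * ((δ * fq (mv ν) i : ℝ) + ∑' a, dd p x ν i a) := by
  have h1 : HasFDerivAt (Uf δ p ν) ((δ : ℂ) • ekd (mv ν) x + ∑' a, sv p ν a • ekd (phi a) x) x :=
    ((ek_hasFDerivAt (mv ν) x).const_mul (δ : ℂ)).add (ser_hasFDerivAt (sv_rapid hp ν) x)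
  rw [h1.fderiv, _root_.add_apply, ← (ser_hasFDerivAt (sv_rapid hp ν) x).fderiv, ser_fderiv (sv_rapid hp ν),
    _root_.smul_apply, ekd_apply, dotL_single]
  have e : ser phi (fun a => sv p ν a * (Complex.I * (dotL (phi a) (Pi.single i 1) : ℝ))) x =
      Complex.I * ek (mv ν) x * ∑' a, dd p x ν i a := by
    unfold ser
    rw [← tsum_mul_left]
    congr 1
    funext a
    simp only [dotL_single, dd, sv]
    split_ifs with h
    · rw [← h]
      have : ek (phi a) x = ek a.2 x * ek (mv a.1) x := ek_add _ _ _
      rw [this]; ring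
    · simp
  rw [e]
  push_cast
  simp only [smul_eq_mul]
  ring

lemma Uf_metric_one (δ : ℝ) {p : Ix n → ℂ} (hp : Rapid' p) (ν : Idx n) (x : Fin n → ℝ) (i j : Fin n) :
    (fderiv ℝ (Uf δ p ν) x (Pi.single i 1) * conj (fderiv ℝ (Uf δ p ν) x (Pi.single j 1))).re =
      δ ^ 2 * (fq (mv ν) i * fq (mv ν) j) +
      ∑' a, δ * (fq (mv ν) i * (dd p x ν j a).re + fq (mv ν) j * (dd p x ν i a).re) +
      ∑' q : Ix n × Ix n, (1 / 2) * ((dd p x ν i q.1 * conj (dd p x ν j q.2)).re +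
        (dd p x ν j q.1 * conj (dd p x ν i q.2)).re) := by
  have hs : ∀ i, Summable (dd p x ν i) := fun i => (dd_summable hp x ν i).of_norm
  have hre : ∀ i, Summable fun a => (dd p x ν i a).re := fun i => by
    simpa using Complex.reCLM.summable (hs i)
  have hprr : ∀ i j, Summable fun q : Ix n × Ix n => (dd p x ν i q.1 * conj (dd p x ν j q.2)).re := fun i j =>
    gen_summ_re (dd_summable hp x ν i) (dd_summable hp x ν j)
  rw [((hprr i j).add (hprr j i)).tsum_mul_left, (hprr i j).tsum_add (hprr j i)]
  rw [(((hre j).mul_left _).add ((hre i).mul_left _)).tsum_mul_left, ((hre j).mul_left _).tsum_add ((hre i).mul_left _),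
    (hre j).tsum_mul_left, (hre i).tsum_mul_left]
  have hD : ∀ i, ∑' a, (dd p x ν i a).re = (∑' a, dd p x ν i a).re := fun i => (Complex.re_tsum (hs i)).symm
  have hDD : ∀ i j, ∑' q : Ix n × Ix n, (dd p x ν i q.1 * conj (dd p x ν j q.2)).re =
      ((∑' a, dd p x ν i a) * conj (∑' a, dd p x ν j a)).re :=
    fun i j => gen_tsum (dd_summable hp x ν i) (dd_summable hp x ν j)
  rw [hD, hD, hDD, hDD, Uf_fderiv δ hp, Uf_fderiv δ hp]
  set A := ∑' a, dd p x ν i a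
  set B := ∑' a, dd p x ν j a
  have hu : ek (mv ν) x * conj (ek (mv ν) x) = 1 := by
    rw [Complex.mul_conj, Complex.normSq_eq_norm_sq, ek_norm]; simp
  have : Complex.I * ek (mv ν) x * ((δ * fq (mv ν) i : ℝ) + A) * conj (Complex.I * ek (mv ν) x * ((δ * fq (mv ν) j : ℝ) + B))
      = ((δ * fq (mv ν) i : ℝ) + A) * ((δ * fq (mv ν) j : ℝ) + conj B) := by
    simp only [map_mul, map_add, Complex.conj_I, Complex.conj_ofReal]
    calc _ = - (Complex.I * Complex.I) * (ek (mv ν) x * conj (ek (mv ν) x)) * (((δ * fq (mv ν) i : ℝ) + A) * ((δ * fq (mv ν) j : ℝ) + conj B)) := by ring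
      _ = _ := by rw [hu, Complex.I_mul_I]; ring
  rw [this]
  simp only [Complex.mul_re, Complex.add_re, Complex.add_im, Complex.ofReal_re, Complex.ofReal_im,
    Complex.conj_re, Complex.conj_im]
  ring

theorem core2 {δ : ℝ} (hδ : 0 < δ) : ∃ η : ℝ, 0 < η ∧ ∀ c : Fin n → Fin n → Fr n → ℂ,
    (∀ i j, Rapid (c i j)) → (∀ i j, c i j = c j i) → (∀ i j k, c i j (-k) = conj (c i j k)) →
    (∀ i j, ∑' k, w0 k * ‖c i j k‖ ≤ η) → ∃ U : Idx n → (Fin n → ℝ) → ℂ,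
      (∀ ν, ContDiff ℝ (⊤ : ℕ∞) (U ν)) ∧ ∀ x i j,
      ∑ ν, (fderiv ℝ (U ν) x (Pi.single i 1) * conj (fderiv ℝ (U ν) x (Pi.single j 1))).re = 
        δ ^ 2 * ∑ ν : Idx n, fq (mv ν) i * fq (mv ν) j + ∑' k, (c i j k * ek k x).re := by
  obtain ⟨η, hη, H⟩ := core (n := n) hδ
  refine ⟨η, hη, fun c h1 h2 h3 h4 => ?_⟩
  obtain ⟨p, hp, hx⟩ := H c h1 h2 h3 h4
  refine ⟨Uf δ p, Uf_contDiff δ hp, fun x i j => ?_⟩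
  rw [← hx x i j]
  simp only [Uf_metric_one δ hp, Finset.sum_add_distrib, ← Finset.mul_sum]
  rw [add_assoc]
  congr 1
  have hs : ∀ ν i, Summable (dd p x ν i) := fun ν i => (dd_summable hp x ν i).of_norm
  have hre : ∀ ν i, Summable fun a => (dd p x ν i a).re := fun ν i => by
    simpa using Complex.reCLM.summable (hs ν i)
  have hprr : ∀ ν i j, Summable fun q : Ix n × Ix n => (dd p x ν i q.1 * conj (dd p x ν j q.2)).re := fun ν i j =>
    gen_summ_re (dd_summable hp x ν i) (dd_summable hp x ν j)
  rw [← Summable.tsum_finsetSum (fun ν _ => (((hre ν j).mul_left _).add ((hre ν i).mul_left _)).mul_left δ),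
    ← Summable.tsum_finsetSum (fun ν _ => ((hprr ν i j).add (hprr ν j i)).mul_left _)]
  congr 1
  · congr 1
    funext a
    rw [Finset.sum_eq_single a.1]
    · simp only [dd, sv, if_true, cf, phi]
      rw [mul_right_comm, Complex.re_mul_ofReal, mul_right_comm, Complex.re_mul_ofReal]
      ring
    · intro b _ hb
      simp [dd, sv, hb.symm]
    · simp
  · congr 1
    funext q
    rw [Finset.sum_eq_single q.1.1]
    · simp only [dd, sv, if_true, phi]
      by_cases h : q.1.1 = q.2.1
      · simp only [h, if_true]
        have : ∀ u v : ℝ, p q.1 * (u : ℂ) * ek q.1.2 x * conj (p q.2 * (v : ℂ) * ek q.2.2 x) =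
            (u * v : ℝ) * (p q.1 * conj (p q.2) * ek (q.1.2 - q.2.2) x) := by
          intro u v
          simp only [ek_sub, map_mul, Complex.conj_ofReal]
          push_cast; ring
        rw [this, this, Complex.re_ofReal_mul, Complex.re_ofReal_mul]
        ring
      · simp [h, Ne.symm h]
    · intro b _ hb
      simp [dd, sv, hb.symm]
    · simp

end metric
end NashRK

namespace NashRK
open scoped ComplexConjugate
section fourier
variable {n : ℕ}

lemma summable_pi_prod {g : ℤ → ℝ} (hg0 : ∀ k, 0 ≤ g k) (hg : Summable g) :
    ∀ n : ℕ, Summable fun k : Fin n → ℤ => ∏ i, g (k i) := by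
  intro n
  induction n with
  | zero => exact Summable.of_finite
  | succ n ih =>
    rw [← (Fin.consEquiv (fun _ : Fin (n+1) => ℤ)).summable_iff]
    have := Summable.mul_of_nonneg hg ih hg0 (fun k => Finset.prod_nonneg fun i _ => hg0 _)
    refine this.congr fun q => ?_
    simp [Fin.consEquiv, Fin.prod_univ_succ]

lemma summable_int_sq : Summable fun k : ℤ => ((1 + |(k : ℝ)|) ^ 2)⁻¹ := by
  have h : Summable fun k : ℤ => 1 / |(k : ℝ)| ^ 2 := by
    simpa using (Real.summable_one_div_int_pow (p := 2)).mpr (by norm_num)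
  have h2 : Summable fun k : ℤ => if k = 0 then (1:ℝ) else 0 := (hasSum_ite_eq 0 1).summable
  refine Summable.of_nonneg_of_le (fun _ => by positivity) (fun k => ?_) (h.add h2)
  by_cases hk : k = 0
  · simp [hk]
  · have : 0 < |(k : ℝ)| := by positivity
    rw [← one_div, if_neg hk, add_zero]
    gcongr
    linarith

lemma summable_Fr (n : ℕ) : Summable fun k : Fr n => ((1 + ‖k‖) ^ (2 * n))⁻¹ := by
  refine Summable.of_nonneg_of_le (fun _ => by positivity) (fun k => ?_)
    (summable_pi_prod (fun _ => by positivity) summable_int_sq n)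
  rw [Finset.prod_inv_distrib]
  gcongr
  calc ∏ i, (1 + |((k i : ℤ) : ℝ)|) ^ 2 ≤ ∏ _i : Fin n, (1 + ‖k‖) ^ 2 := by
        refine Finset.prod_le_prod (fun _ _ => by positivity) fun i _ => ?_
        gcongr
        have := norm_le_pi_norm k i
        rwa [Int.norm_eq_abs] at this
    _ = _ := by simp [pow_mul]

noncomputable def fc (G : (Fin n → ℝ) → ℂ) (k : Fr n) : ℂ :=
  ∫ x in Set.Icc (0 : Fin n → ℝ) 1, ek (-k) x * G x

lemma ek_periodic (k : Fr n) (x : Fin n → ℝ) (i : Fin n) : ek k (x + Pi.single i 1) = ek k x := by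
  unfold ek
  have : ∑ j, fq k j * (x + Pi.single i 1 : Fin n → ℝ) j = ∑ j, fq k j * x j + 2 * Real.pi * k i := by
    simp [mul_add, Finset.sum_add_distrib, Pi.single_apply, fq]
  rw [this]
  push_cast
  rw [add_mul, Complex.exp_add]
  have : (2 * Real.pi * k i : ℂ) * Complex.I = (k i) * (2 * Real.pi * Complex.I) := by ring
  rw [this, Complex.exp_int_mul_two_pi_mul_I, mul_one]

lemma int_deriv_zero (G : (Fin n → ℝ) → ℂ) (hG : ContDiff ℝ 1 G) (i : Fin n)
    (hper : ∀ x, G (x + Pi.single i 1) = G x) :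
    ∫ x in Set.Icc (0 : Fin n → ℝ) 1, fderiv ℝ G x (Pi.single i 1) = 0 := by
  cases n with
  | zero => exact i.elim0
  | succ m =>
    have hd := hG.differentiable (by norm_num)
    have hcont : Continuous fun x => fderiv ℝ G x (Pi.single i 1) :=
      (hG.continuous_fderiv (by norm_num)).clm_apply continuous_const
    have := MeasureTheory.integral_divergence_of_hasFDerivAt_off_countable
      (0 : Fin (m+1) → ℝ) 1 (by intro; simp)
      (fun x => Pi.single i (G x)) (fun x => ContinuousLinearMap.pi fun j => if j = i then fderiv ℝ G x else 0)
      ∅ Set.countable_empty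
      (by
        refine Continuous.continuousOn ?_
        exact (continuous_single i).comp hG.continuous)
      (by
        intro x _
        rw [hasFDerivAt_pi]
        intro j
        by_cases h : j = i
        · subst h; simpa using (hd x).hasFDerivAt
        · simp [h]
          exact hasFDerivAt_const _ _)
      (by
        refine ContinuousOn.integrableOn_compact isCompact_Icc ?_
        refine Continuous.continuousOn ?_
        refine continuous_finsetSum _ fun j _ => ?_
        by_cases h : j = i
        · subst h; simpa using hcont
        · simpa [h] using continuous_const)
    have e : ∀ x, ∑ j, (ContinuousLinearMap.pi fun j => if j = i then fderiv ℝ G x else 0) (Pi.single j (1:ℝ)) j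
        = fderiv ℝ G x (Pi.single i 1) := by
      intro x
      rw [Finset.sum_eq_single i]
      · simp
      · intro b _ hb; simp [hb]
      · simp
    simp only [e] at this
    rw [this]
    refine Finset.sum_eq_zero fun j _ => ?_
    by_cases h : j = i
    · subst h
      rw [sub_eq_zero]
      congr 1
      funext x
      simp only [Pi.single_eq_same]
      rw [← hper (Fin.insertNth j ((0 : Fin (m+1) → ℝ) j) x)]
      congr 1
      ext l
      refine Fin.succAboveCases j ?_ ?_ l
      · simp
      · intro l; simp
    · simp [h]

lemma fc_deriv (G : (Fin n → ℝ) → ℂ) (hG : ContDiff ℝ 1 G) (i : Fin n)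
    (hper : ∀ x, G (x + Pi.single i 1) = G x) (k : Fr n) :
    fc (fun x => fderiv ℝ G x (Pi.single i 1)) k = (Complex.I * fq k i) * fc G k := by
  have h := int_deriv_zero (fun x => ek (-k) x * G x) (((ek_contDiff (-k)).of_le (by exact_mod_cast le_top)).mul hG) i
    (fun x => by rw [ek_periodic, hper])
  have hd := hG.differentiable (by norm_num)
  have e : ∀ x, fderiv ℝ (fun x => ek (-k) x * G x) x (Pi.single i 1) =
      ek (-k) x * fderiv ℝ G x (Pi.single i 1) - (Complex.I * fq k i) * (ek (-k) x * G x) := by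
    intro x
    have := ((ek_hasFDerivAt (-k) x).mul (hd x).hasFDerivAt).fderiv
    rw [show (fun x => ek (-k) x * G x) = ek (-k) * G from rfl, this]
    simp [ekd_apply, dotL_single, fq]
    ring
  simp only [e] at h
  have hcont : Continuous fun x => fderiv ℝ G x (Pi.single i 1) :=
    (hG.continuous_fderiv (by norm_num)).clm_apply continuous_const
  have hk := (ek_contDiff (-k)).continuous
  rw [MeasureTheory.integral_sub, MeasureTheory.integral_const_mul, sub_eq_zero] at h
  · exact h
  · exact ContinuousOn.integrableOn_compact isCompact_Icc (hk.mul hcont).continuousOn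
  · exact ContinuousOn.integrableOn_compact isCompact_Icc (continuous_const.mul (hk.mul hG.continuous)).continuousOn

lemma fc_bound (G : (Fin n → ℝ) → ℂ) (C : ℝ) (hC : ∀ x ∈ Set.Icc (0 : Fin n → ℝ) 1, ‖G x‖ ≤ C) (k : Fr n) :
    ‖fc G k‖ ≤ C := by
  have h0 : (MeasureTheory.volume (Set.Icc (0 : Fin n → ℝ) 1)).toReal = 1 := by
    rw [Real.volume_Icc_pi]; simp
  have := MeasureTheory.norm_setIntegral_le_of_norm_le_const (μ := MeasureTheory.volume)
    (s := Set.Icc (0 : Fin n → ℝ) 1) (f := fun x => ek (-k) x * G x) (C := C)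
    isCompact_Icc.measure_lt_top (fun x hx => by
      rw [norm_mul, ek_norm, one_mul]; exact hC x hx)
  rw [MeasureTheory.measureReal_def, h0, mul_one] at this
  exact this

lemma fc_herm (G : (Fin n → ℝ) → ℝ) (k : Fr n) :
    fc (fun x => (G x : ℂ)) (-k) = conj (fc (fun x => (G x : ℂ)) k) := by
  unfold fc
  rw [← integral_conj]
  congr 1
  funext x
  rw [map_mul, Complex.conj_ofReal, ek_neg]

end fourier
end NashRK

namespace NashRK
open scoped ComplexConjugate
section fourier2
variable {n : ℕ}

lemma mFourier_ek (k : Fr n) (x : Fin n → ℝ) :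
    UnitAddTorus.mFourier k (fun i => (x i : UnitAddCircle)) = ek k x := by
  simp only [UnitAddTorus.mFourier, ContinuousMap.coe_mk]
  simp only [fourier_coe_apply]
  rw [← Complex.exp_sum]
  unfold ek fq
  congr 1
  push_cast
  rw [Finset.sum_mul]
  refine Finset.sum_congr rfl fun i _ => ?_
  simp; ring

lemma fc_torus (g : C(UnitAddTorus (Fin n), ℂ)) (k : Fr n) :
    UnitAddTorus.mFourierCoeff g k = fc (fun x => g (fun i => (x i : UnitAddCircle))) k := by
  rw [UnitAddTorus.mFourierCoeff_eq_integral g k 0]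
  unfold fc
  have : {x : Fin n → ℝ | ∀ i, x i ∈ Set.Ioc ((0 : Fin n → ℝ) i) ((0 : Fin n → ℝ) i + 1)} =
      Set.univ.pi fun i => Set.Ioc ((0 : Fin n → ℝ) i) ((1 : Fin n → ℝ) i) := by
    ext x; simp
  rw [this, MeasureTheory.volume_pi, MeasureTheory.setIntegral_congr_set MeasureTheory.Measure.univ_pi_Ioc_ae_eq_Icc]
  simp only [mFourier_ek, smul_eq_mul]

lemma fc_inv (g : C(UnitAddTorus (Fin n), ℂ)) 
    (h : Summable fun k => ‖fc (fun x => g (fun i => (x i : UnitAddCircle))) k‖) (x : Fin n → ℝ) :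
    HasSum (fun k => fc (fun x => g (fun i => (x i : UnitAddCircle))) k * ek k x) 
      (g (fun i => (x i : UnitAddCircle))) := by
  have := UnitAddTorus.hasSum_mFourier_series_apply_of_summable (f := g) (by
    refine Summable.of_norm ?_
    simpa only [fc_torus] using h) (fun i => (x i : UnitAddCircle))
  simpa only [fc_torus, mFourier_ek, smul_eq_mul] using this

structure Per (G : ℝ × (Fin n → ℝ) → ℂ) : Prop where
  smooth : ContDiff ℝ (⊤ : ℕ∞) G
  per : ∀ ε x i, G (ε, x + Pi.single i 1) = G (ε, x)
  zero : ∀ x, G (0, x) = 0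

noncomputable def pd (i : Fin n) (G : ℝ × (Fin n → ℝ) → ℂ) : ℝ × (Fin n → ℝ) → ℂ :=
  fun p => fderiv ℝ G p (0, Pi.single i 1)

lemma pd_slice {G : ℝ × (Fin n → ℝ) → ℂ} (h : ContDiff ℝ (⊤ : ℕ∞) G) (i : Fin n) (ε : ℝ) (x : Fin n → ℝ) :
    pd i G (ε, x) = fderiv ℝ (fun y => G (ε, y)) x (Pi.single i 1) := by
  have h1 : HasFDerivAt G (fderiv ℝ G (ε, x)) (ε, x) :=
    (h.differentiable (by simp) _).hasFDerivAt
  have h2 := h1.comp x (hasFDerivAt_prodMk_right ε x)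
  rw [show (fun y => G (ε, y)) = G ∘ (fun y => (ε, y)) from rfl, h2.fderiv]
  simp [pd]

lemma Per.pd {G : ℝ × (Fin n → ℝ) → ℂ} (h : Per G) (i : Fin n) : Per (pd i G) where
  smooth := (h.smooth.fderiv_right (m := (⊤ : ℕ∞)) (by simp)).clm_apply contDiff_const
  per := by
    intro ε x j
    rw [pd_slice h.smooth, pd_slice h.smooth]
    have : (fun y => G (ε, y)) = fun y => G (ε, y + Pi.single j 1) := by
      funext y; rw [h.per]
    conv_rhs => rw [this]
    rw [fderiv_comp_add_right (f := fun y => G (ε, y)) (Pi.single j 1)]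
  zero := by
    intro x
    rw [pd_slice h.smooth]
    simp [h.zero]

lemma Per.pd_iter {G : ℝ × (Fin n → ℝ) → ℂ} (h : Per G) (i : Fin n) (t : ℕ) : Per ((NashRK.pd i)^[t] G) := by
  induction t with
  | zero => exact h
  | succ t ih => rw [Function.iterate_succ_apply']; exact ih.pd i

lemma slice_contDiff {G : ℝ × (Fin n → ℝ) → ℂ} (h : Per G) (ε : ℝ) : ContDiff ℝ 1 fun y => G (ε, y) :=
  (h.smooth.comp (contDiff_prodMk_right ε)).of_le (by exact_mod_cast le_top)

lemma fc_pd_iter {G : ℝ × (Fin n → ℝ) → ℂ} (h : Per G) (i : Fin n) (t : ℕ) (ε : ℝ) (k : Fr n) :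
    fc (fun x => (pd i)^[t] G (ε, x)) k = (Complex.I * fq k i) ^ t * fc (fun x => G (ε, x)) k := by
  induction t with
  | zero => simp
  | succ t ih =>
    simp only [Function.iterate_succ_apply']
    have hp := h.pd_iter i t
    simp only [pd_slice hp.smooth]
    rw [fc_deriv _ (slice_contDiff hp ε) i (fun x => hp.per ε x i), ih, pow_succ]
    ring

lemma Per.bdd {G : ℝ × (Fin n → ℝ) → ℂ} (h : Per G) (ε : ℝ) : ∃ C, ∀ k, ‖fc (fun x => G (ε, x)) k‖ ≤ C := by
  obtain ⟨C, hC⟩ := (isCompact_Icc (a := (0 : Fin n → ℝ)) (b := 1)).exists_bound_of_continuousOn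
    (slice_contDiff h ε).continuous.continuousOn
  exact ⟨C, fun k => fc_bound _ C hC k⟩

lemma Per.small {G : ℝ × (Fin n → ℝ) → ℂ} (h : Per G) {η : ℝ} (hη : 0 < η) :
    ∀ᶠ ε in nhds (0:ℝ), ∀ k, ‖fc (fun x => G (ε, x)) k‖ ≤ η := by
  have h1 : ∀ᶠ ε in nhds (0:ℝ), ∀ x ∈ Set.Icc (0 : Fin n → ℝ) 1, ‖G (ε, x)‖ ≤ η := by
    refine isCompact_Icc.eventually_forall_of_forall_eventually fun x _ => ?_
    have hc : Continuous fun p : ℝ × (Fin n → ℝ) => ‖G p‖ := h.smooth.continuous.norm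
    have : ‖G (0, x)‖ < η := by rw [h.zero]; simpa using hη
    exact (hc.continuousAt.eventually (gt_mem_nhds this)).mono fun _ h => h.le
  exact h1.mono fun ε hε k => fc_bound _ η hε k

lemma pow_norm_le (k : Fr n) (t : ℕ) : (1 + ‖k‖) ^ t ≤ 2 ^ t * (1 + ∑ i, |fq k i| ^ t) := by
  have hpi := Real.pi_gt_three
  have hs : 0 ≤ ∑ i, |fq k i| ^ t := Finset.sum_nonneg fun _ _ => by positivity
  by_cases h : ‖k‖ ≤ 1
  · calc (1 + ‖k‖) ^ t ≤ 2 ^ t := by gcongr; linarith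
      _ ≤ _ := le_mul_of_one_le_right (by positivity) (by linarith)
  · push Not at h
    have : ∃ i, ‖k i‖ = ‖k‖ := by
      by_contra hc
      push Not at hc
      have h3 : ‖k‖ < ‖k‖ := (pi_norm_lt_iff (by linarith)).2 fun i => lt_of_le_of_ne (norm_le_pi_norm k i) (hc i)
      exact lt_irrefl _ h3
    obtain ⟨i, hi⟩ := this
    have h2 : ‖k‖ ≤ |fq k i| := by
      rw [← hi, Int.norm_eq_abs, fq, abs_mul, abs_of_pos (by positivity : 0 < 2 * Real.pi)]
      exact le_mul_of_one_le_left (abs_nonneg _) (by linarith)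
    have h3 : |fq k i| ^ t ≤ ∑ i, |fq k i| ^ t :=
      Finset.single_le_sum (f := fun i => |fq k i| ^ t) (fun _ _ => by positivity) (Finset.mem_univ i)
    calc (1 + ‖k‖) ^ t ≤ (2 * |fq k i|) ^ t := by gcongr; linarith
      _ = 2 ^ t * |fq k i| ^ t := mul_pow _ _ _
      _ ≤ _ := by gcongr; linarith

lemma Per.decay {G : ℝ × (Fin n → ℝ) → ℂ} (h : Per G) (t : ℕ) (ε C : ℝ)
    (h0 : ∀ k, ‖fc (fun x => G (ε, x)) k‖ ≤ C)
    (h1 : ∀ i k, ‖fc (fun x => (NashRK.pd i)^[t] G (ε, x)) k‖ ≤ C) (k : Fr n) :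
    (1 + ‖k‖) ^ t * ‖fc (fun x => G (ε, x)) k‖ ≤ 2 ^ t * (1 + n) * C := by
  have h2 : ∀ i, |fq k i| ^ t * ‖fc (fun x => G (ε, x)) k‖ ≤ C := by
    intro i
    have := h1 i k
    rw [fc_pd_iter h] at this
    simpa using this
  calc _ ≤ 2 ^ t * (1 + ∑ i, |fq k i| ^ t) * ‖fc (fun x => G (ε, x)) k‖ := by
        gcongr; exact pow_norm_le k t
    _ = 2 ^ t * (‖fc (fun x => G (ε, x)) k‖ + ∑ i, |fq k i| ^ t * ‖fc (fun x => G (ε, x)) k‖) := by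
        rw [← Finset.sum_mul]; ring
    _ ≤ 2 ^ t * (C + ∑ i : Fin n, C) := by
        gcongr
        · exact h0 k
        · exact h2 _
    _ = _ := by simp; ring

lemma Per.rapid {G : ℝ × (Fin n → ℝ) → ℂ} (h : Per G) (ε : ℝ) : Rapid (fc fun x => G (ε, x)) := by
  intro t
  obtain ⟨C0, hC0⟩ := h.bdd ε
  choose C hC using fun i => (h.pd_iter i (t + 2 * n)).bdd ε
  set D := |C0| + ∑ i, |C i|
  have hs : ∀ i, |C i| ≤ ∑ i, |C i| := fun i =>
    Finset.single_le_sum (f := fun i => |C i|) (fun _ _ => by positivity) (Finset.mem_univ i)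
  have hs0 : 0 ≤ ∑ i, |C i| := Finset.sum_nonneg fun _ _ => by positivity
  have := h.decay (t + 2 * n) ε D (fun k => (hC0 k).trans (by have := le_abs_self C0; simp only [D]; linarith))
    (fun i k => (hC i k).trans (by
      have := le_abs_self (C i); have := hs i; have := abs_nonneg C0; simp only [D]; linarith))
  refine Summable.of_nonneg_of_le (fun _ => by positivity) (fun k => ?_)
    ((summable_Fr n).mul_left (2 ^ (t + 2 * n) * (1 + n) * D))
  rw [← div_eq_mul_inv, le_div_iff₀ (by positivity)]
  refine le_trans (le_of_eq ?_) (this k)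
  rw [pow_add]; ring

lemma Per.w0_small {G : ℝ × (Fin n → ℝ) → ℂ} (h : Per G) {η : ℝ} (hη : 0 < η) :
    ∀ᶠ ε in nhds (0:ℝ), ∑' k, w0 k * ‖fc (fun x => G (ε, x)) k‖ ≤ η := by
  have hw : ∃ A : ℝ, 0 < A ∧ ∀ k : Fr n, w0 k ≤ A * (1 + ‖k‖) ^ 2 := by
    refine ⟨1 + n * (2 * Real.pi) ^ 2, by positivity, fun k => ?_⟩
    unfold w0 sq
    have : ∀ i, fq k i ^ 2 ≤ (2 * Real.pi * (1 + ‖k‖)) ^ 2 := fun i => sq_le_sq' (by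
      have := abs_le.1 (fq_le k i); linarith) ((le_abs_self _).trans (fq_le k i))
    have h2 : ∑ i, fq k i ^ 2 ≤ n * (2 * Real.pi * (1 + ‖k‖)) ^ 2 := by
      refine (Finset.sum_le_sum fun i _ => this i).trans ?_
      simp
    have h3 : (1:ℝ) ≤ (1 + ‖k‖) ^ 2 := one_le_pow₀ (by have := norm_nonneg k; linarith)
    nlinarith
  obtain ⟨A, hA, hw⟩ := hw
  set S := ∑' k : Fr n, ((1 + ‖k‖) ^ (2 * n))⁻¹
  have hS : 0 ≤ S := tsum_nonneg fun _ => by positivity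
  set B := A * (2 ^ (2 + 2 * n) * (1 + n))
  have hB : 0 < B := by positivity
  set η' := η / (B * (S + 1))
  have hη' : 0 < η' := by positivity
  have e := (h.small hη').and (Filter.eventually_all.2 fun i => (h.pd_iter i (2 + 2 * n)).small hη')
  refine e.mono fun ε hε => ?_
  have hd := h.decay (2 + 2 * n) ε η' hε.1 hε.2
  have hb : ∀ k : Fr n, w0 k * ‖fc (fun x => G (ε, x)) k‖ ≤ B * η' * ((1 + ‖k‖) ^ (2 * n))⁻¹ := by
    intro k
    rw [← div_eq_mul_inv, le_div_iff₀ (by positivity)]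
    calc _ ≤ A * (1 + ‖k‖) ^ 2 * ‖fc (fun x => G (ε, x)) k‖ * (1 + ‖k‖) ^ (2 * n) := by
          gcongr; exact hw k
      _ = A * ((1 + ‖k‖) ^ (2 + 2 * n) * ‖fc (fun x => G (ε, x)) k‖) := by rw [pow_add]; ring
      _ ≤ A * (2 ^ (2 + 2 * n) * (1 + n) * η') := mul_le_mul_of_nonneg_left (hd k) hA.le
      _ = _ := by simp only [B]; ring
  have hsum := (summable_Fr n).mul_left (B * η')
  have hs2 : Summable fun k => w0 k * ‖fc (fun x => G (ε, x)) k‖ :=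
    Summable.of_nonneg_of_le (fun k => by have := w0_pos k; positivity) hb hsum
  calc _ ≤ ∑' k : Fr n, B * η' * ((1 + ‖k‖) ^ (2 * n))⁻¹ := hs2.tsum_le_tsum hb hsum
    _ = B * η' * S := tsum_mul_left
    _ ≤ B * η' * (S + 1) := by gcongr; linarith
    _ = η := by simp only [η']; field_simp

end fourier2
end NashRK

namespace NashRK
open scoped ComplexConjugate
section nash
variable {n : ℕ}

noncomputable def bmp : ContDiffBump (0 : ℝ) := ⟨1/4, 1/2, by norm_num, by norm_num⟩

noncomputable def tau (u : ℝ) : ℝ := bmp u * (Real.arcsin u / (2 * Real.pi))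

lemma tau_contDiff : ContDiff ℝ (⊤ : ℕ∞) tau := by
  rw [contDiff_iff_contDiffAt]
  intro u
  by_cases h : |u| < 1
  · have := abs_lt.1 h
    exact bmp.contDiff.contDiffAt.mul ((Real.contDiffAt_arcsin (by linarith) (by linarith)).div_const _)
  · have : tau =ᶠ[nhds u] fun _ => 0 := by
      have h2 : ∀ᶠ v : ℝ in nhds u, 1/2 < |v| :=
        continuous_abs.continuousAt.eventually (lt_mem_nhds (by linarith : 1/2 < |u|))
      refine h2.mono fun v hv => ?_
      have : bmp v = 0 := bmp.zero_of_le_dist (by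
        simp only [Real.dist_eq, sub_zero]; exact hv.le)
      simp [tau, this]
    exact contDiffAt_const.congr_of_eventuallyEq this

lemma tau_sin {x : ℝ} (hx : |x| < 1/32) : tau (Real.sin (2 * Real.pi * x)) = x := by
  have hpi := Real.pi_pos
  have h4 := Real.pi_le_four
  have h1 : |2 * Real.pi * x| ≤ 1/4 := by
    rw [abs_mul, abs_of_pos (by positivity)]
    nlinarith [abs_nonneg x]
  have hb : bmp (Real.sin (2 * Real.pi * x)) = 1 := bmp.one_of_mem_closedBall (by
    simp only [Metric.mem_closedBall, Real.dist_eq, sub_zero]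
    exact Real.abs_sin_le_abs.trans h1)
  have h3 := Real.pi_gt_three
  have h2 := abs_le.1 h1
  rw [tau, hb, Real.arcsin_sin (by linarith) (by linarith)]
  field_simp

noncomputable def Sm (x : Fin n → ℝ) : Fin n → ℝ := fun i => tau (Real.sin (2 * Real.pi * x i))

lemma Sm_contDiff : ContDiff ℝ (⊤ : ℕ∞) (Sm (n := n)) := by
  rw [contDiff_pi]
  intro i
  exact tau_contDiff.comp (Real.contDiff_sin.comp (contDiff_const.mul (contDiff_apply ℝ ℝ i)))

lemma Sm_eq {x : Fin n → ℝ} (hx : ‖x‖ < 1/32) : Sm x = x := by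
  funext i
  exact tau_sin ((norm_le_pi_norm x i).trans_lt hx)

lemma Sm_per (x : Fin n → ℝ) (i : Fin n) : Sm (x + Pi.single i 1) = Sm x := by
  funext j
  unfold Sm
  by_cases h : j = i
  · subst h
    simp [mul_add, Real.sin_add_two_pi]
  · simp [h]

noncomputable def FG (f : (Fin n → ℝ) → ℝ) (x0 : Fin n → ℝ) (p : ℝ × (Fin n → ℝ)) : ℝ :=
  f (x0 + p.1 • Sm p.2) - f x0

lemma FG_per {f : (Fin n → ℝ) → ℝ} (hf : ContDiff ℝ (⊤ : ℕ∞) f) (x0 : Fin n → ℝ) :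
    Per fun p => (FG f x0 p : ℂ) where
  smooth := by
    refine Complex.ofRealCLM.contDiff.comp ?_
    refine (hf.comp (contDiff_const.add (contDiff_fst.smul (Sm_contDiff.comp contDiff_snd)))).sub contDiff_const
  per := by
    intro ε x i
    simp only [FG, Sm_per]
  zero := by
    intro x; simp [FG]

lemma FG_series {f : (Fin n → ℝ) → ℝ} (hf : ContDiff ℝ (⊤ : ℕ∞) f) (x0 : Fin n → ℝ) (ε : ℝ)
    {x : Fin n → ℝ} (hx : ‖x‖ < 1/32) :
    f (x0 + ε • x) = f x0 + ∑' k, (fc (fun x => (FG f x0 (ε, x) : ℂ)) k * ek k x).re := by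
  let s : C(UnitAddTorus (Fin n), Fin n → ℝ) :=
    ⟨fun z i => tau ((fourier 1 (z i)).im), by
      refine continuous_pi fun i => tau_contDiff.continuous.comp ?_
      exact Complex.continuous_im.comp ((fourier 1).continuous.comp (continuous_apply i))⟩
  have hs : ∀ x : Fin n → ℝ, s (fun i => (x i : UnitAddCircle)) = Sm x := by
    intro x
    funext i
    simp only [s, ContinuousMap.coe_mk, Sm]
    congr 1
    rw [fourier_coe_apply]
    have : (2 * Real.pi * Complex.I * ((1:ℤ):ℂ) * (x i : ℂ) / ((1:ℝ) : ℂ)) = ((2 * Real.pi * x i : ℝ) : ℂ) * Complex.I := by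
      push_cast; ring
    rw [this, Complex.exp_ofReal_mul_I_im]
  let g : C(UnitAddTorus (Fin n), ℂ) :=
    ⟨fun z => ((f (x0 + ε • s z) - f x0 : ℝ) : ℂ), by
      have := hf.continuous
      fun_prop⟩
  have hg : ∀ x : Fin n → ℝ, g (fun i => (x i : UnitAddCircle)) = (FG f x0 (ε, x) : ℂ) := by
    intro x
    simp only [g, ContinuousMap.coe_mk, hs, FG]
  have hr := (FG_per hf x0).rapid ε 0
  simp only [pow_zero, one_mul] at hr
  have := fc_inv g (by simpa only [hg] using hr) x
  simp only [hg] at this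
  have h2 := Complex.hasSum_re this
  rw [h2.tsum_eq]
  simp [FG, Sm_eq hx]

theorem exists_delta (A : Matrix (Fin n) (Fin n) ℝ) (hA : A.PosDef) (G : Matrix (Fin n) (Fin n) ℝ)
    (hG : ∀ i j, G i j = G j i) :
    ∃ δ : ℝ, 0 < δ ∧ (A - δ ^ 2 • G).PosSemidef := by
  have key : ∀ᶠ t in nhds (0:ℝ), ∀ x ∈ Metric.sphere (0 : Fin n → ℝ) 1, 0 < x ⬝ᵥ ((A - t ^ 2 • G) *ᵥ x) := by
    refine (isCompact_sphere _ _).eventually_forall_of_forall_eventually fun x hx => ?_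
    have hc : Continuous fun p : ℝ × (Fin n → ℝ) => p.2 ⬝ᵥ ((A - p.1 ^ 2 • G) *ᵥ p.2) := by
      fun_prop
    have h0 : x ≠ 0 := by
      rintro rfl; simp at hx
    have : 0 < x ⬝ᵥ ((A - (0:ℝ) ^ 2 • G) *ᵥ x) := by
      have := hA.dotProduct_mulVec_pos h0
      simpa using this
    exact hc.continuousAt.eventually (lt_mem_nhds this)
  obtain ⟨ε, hε, H⟩ := Metric.eventually_nhds_iff.1 key
  refine ⟨ε / 2, by positivity, ?_⟩
  have H := @H (ε / 2) (by rw [Real.dist_eq, sub_zero, abs_of_pos (by positivity)]; linarith)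
  refine Matrix.PosSemidef.of_dotProduct_mulVec_nonneg ?_ fun x => ?_
  · ext i j
    have := congrFun (congrFun hA.1 i) j
    simp [Matrix.conjTranspose_apply] at this ⊢
    rw [this, hG]
  · by_cases h0 : x = 0
    · simp [h0]
    have hx : 0 < ‖x‖ := norm_pos_iff.2 h0
    have := H (‖x‖⁻¹ • x) (by simp [norm_smul, hx.ne'])
    rw [Matrix.mulVec_smul, smul_dotProduct, dotProduct_smul, smul_eq_mul, smul_eq_mul] at this
    have h2 : 0 < ‖x‖⁻¹ := by positivity
    simpa using (pos_of_mul_pos_right (pos_of_mul_pos_right this h2.le) h2.le).le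

end nash
end NashRK

namespace NashRK
open scoped ComplexConjugate
section nash2
variable {n : ℕ}

theorem nash (g : (Fin n → ℝ) → Matrix (Fin n) (Fin n) ℝ) (x0 : Fin n → ℝ)
    (hg : ∀ i j, ContDiff ℝ (⊤ : ℕ∞) fun x => g x i j) (hsym : ∀ x i j, g x i j = g x j i)
    (hpd : (g x0).PosDef) :
    ∃ r : ℝ, 0 < r ∧ ∃ (M : ℕ) (ψ : Fin M → (Fin n → ℝ) → ℝ), (∀ i, ContDiff ℝ (⊤ : ℕ∞) (ψ i)) ∧
      ∀ x, ‖x - x0‖ < r → ∀ a b, g x a b =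
        ∑ i, fderiv ℝ (ψ i) x (Pi.single a 1) * fderiv ℝ (ψ i) x (Pi.single b 1) := by
  obtain ⟨δ, hδ, hps⟩ := exists_delta (g x0) hpd
    (Matrix.of fun i j => ∑ ν : Idx n, fq (mv ν) i * fq (mv ν) j) (fun i j => by
      simp only [Matrix.of_apply, mul_comm])
  obtain ⟨m, v, hv⟩ := Matrix.posSemidef_iff_eq_sum_vecMulVec.1 hps
  obtain ⟨η, hη, H⟩ := core2 (n := n) hδ
  have hev : ∀ᶠ ε in nhds (0:ℝ), ∀ i j, 
      ∑' k, w0 k * ‖fc (fun x => (FG (fun y => g y i j) x0 (ε, x) : ℂ)) k‖ ≤ η :=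
    Filter.eventually_all.2 fun i => Filter.eventually_all.2 fun j => (FG_per (hg i j) x0).w0_small hη
  obtain ⟨ρ, hρ, hev⟩ := Metric.eventually_nhds_iff.1 hev
  have hev := @hev (ρ / 2) (by rw [Real.dist_eq, sub_zero, abs_of_pos (by positivity)]; linarith)
  set ε := ρ / 2 with hεd
  have hε : 0 < ε := by positivity
  obtain ⟨U, hU, hm⟩ := H (fun i j => fc (fun x => (FG (fun y => g y i j) x0 (ε, x) : ℂ)))
    (fun i j => (FG_per (hg i j) x0).rapid ε)
    (fun i j => by simp only [hsym _ i j])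
    (fun i j k => fc_herm _ k) hev
  refine ⟨ε / 32, by positivity, ?_⟩
  let Ψ : (Idx n ⊕ Idx n) ⊕ Fin m → (Fin n → ℝ) → ℝ := fun ι x => match ι with
    | .inl (.inl ν) => ε * (U ν (ε⁻¹ • (x - x0))).re
    | .inl (.inr ν) => ε * (U ν (ε⁻¹ • (x - x0))).im
    | .inr l => ∑ i, v l i * x i
  have hL : ContDiff ℝ (⊤ : ℕ∞) fun x : Fin n → ℝ => ε⁻¹ • (x - x0) :=
    (contDiff_id.sub contDiff_const).const_smul ε⁻¹
  have hUL : ∀ ν, ContDiff ℝ (⊤ : ℕ∞) fun x : Fin n → ℝ => U ν (ε⁻¹ • (x - x0)) := fun ν => (hU ν).comp hL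
  have hsm : ∀ ι, ContDiff ℝ (⊤ : ℕ∞) (Ψ ι) := by
    rintro ((ν | ν) | l)
    · exact contDiff_const.mul (Complex.reCLM.contDiff.comp (hUL ν))
    · exact contDiff_const.mul (Complex.imCLM.contDiff.comp (hUL ν))
    · exact ContDiff.sum fun i _ => contDiff_const.mul (contDiff_apply ℝ ℝ i)
  have hd : ∀ ν x, HasFDerivAt (fun x : Fin n → ℝ => U ν (ε⁻¹ • (x - x0)))
      (ε⁻¹ • fderiv ℝ (U ν) (ε⁻¹ • (x - x0))) x := by
    intro ν x
    have h1 : HasFDerivAt (fun x : Fin n → ℝ => ε⁻¹ • (x - x0)) (ε⁻¹ • ContinuousLinearMap.id ℝ (Fin n → ℝ)) x :=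
      ((hasFDerivAt_id x).sub_const x0).const_smul ε⁻¹
    have h2 := (((hU ν).differentiable (by simp)) (ε⁻¹ • (x - x0))).hasFDerivAt.comp x h1
    refine HasFDerivAt.congr_fderiv h2 ?_
    ext w; simp
  have hre : ∀ ν x a, fderiv ℝ (Ψ (.inl (.inl ν))) x (Pi.single a 1) = 
      (fderiv ℝ (U ν) (ε⁻¹ • (x - x0)) (Pi.single a 1)).re := by
    intro ν x a
    have := ((Complex.reCLM.hasFDerivAt.comp x (hd ν x)).const_mul ε).fderiv
    have e : Ψ (.inl (.inl ν)) = fun y => ε * ((Complex.reCLM ∘ fun x : Fin n → ℝ => U ν (ε⁻¹ • (x - x0))) y) := rfl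
    rw [e, this]
    simp [hε.ne']
  have him : ∀ ν x a, fderiv ℝ (Ψ (.inl (.inr ν))) x (Pi.single a 1) = 
      (fderiv ℝ (U ν) (ε⁻¹ • (x - x0)) (Pi.single a 1)).im := by
    intro ν x a
    have := ((Complex.imCLM.hasFDerivAt.comp x (hd ν x)).const_mul ε).fderiv
    have e : Ψ (.inl (.inr ν)) = fun y => ε * ((Complex.imCLM ∘ fun x : Fin n → ℝ => U ν (ε⁻¹ • (x - x0))) y) := rfl
    rw [e, this]
    simp [hε.ne']
  have hlin : ∀ l x a, fderiv ℝ (Ψ (.inr l)) x (Pi.single a 1) = v l a := by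
    intro l x a
    have e : Ψ (.inr l) = (∑ i, v l i • ContinuousLinearMap.proj (R := ℝ) (φ := fun _ : Fin n => ℝ) i : (Fin n → ℝ) →L[ℝ] ℝ) := by
      funext x; simp [Ψ]
    rw [e, ContinuousLinearMap.fderiv]
    simp [Pi.single_apply]
  refine ⟨Fintype.card ((Idx n ⊕ Idx n) ⊕ Fin m), fun i => Ψ ((Fintype.equivFin _).symm i), fun i => hsm _, fun x hx a b => ?_⟩
  rw [Equiv.sum_comp (Fintype.equivFin ((Idx n ⊕ Idx n) ⊕ Fin m)).symm
    (fun ι => fderiv ℝ (Ψ ι) x (Pi.single a 1) * fderiv ℝ (Ψ ι) x (Pi.single b 1))]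
  simp only [Fintype.sum_sum_type, hre, him, hlin]
  rw [← Finset.sum_add_distrib]
  set y := ε⁻¹ • (x - x0) with hy
  have hy1 : ‖y‖ < 1 / 32 := by
    rw [hy, norm_smul, norm_inv, Real.norm_eq_abs, abs_of_pos hε, inv_mul_lt_iff₀ hε]
    linarith
  have hxy : x0 + ε • y = x := by
    rw [hy, smul_smul, mul_inv_cancel₀ hε.ne', one_smul]; abel
  have hm := hm y a b
  have hs := FG_series (hg a b) x0 ε hy1
  simp only [hxy] at hs
  have hv := congrFun (congrFun hv a) b
  simp [Matrix.sum_apply, Matrix.vecMulVec_apply] at hv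
  have e : ∀ ν, (fderiv ℝ (U ν) y (Pi.single a 1)).re * (fderiv ℝ (U ν) y (Pi.single b 1)).re +
      (fderiv ℝ (U ν) y (Pi.single a 1)).im * (fderiv ℝ (U ν) y (Pi.single b 1)).im = 
      (fderiv ℝ (U ν) y (Pi.single a 1) * conj (fderiv ℝ (U ν) y (Pi.single b 1))).re := by
    intro ν; simp
  simp only [e]
  rw [hm, ← hv, hs]
  ring

end nash2
end NashRK

namespace NashRK
section nem
universe v
variable {K : Type} [TopologicalSpace K] [CompactSpace K]
variable {E : Type v} [NormedAddCommGroup E] [NormedSpace ℝ E]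

def nem {F : Type*} [TopologicalSpace F] (f : E → F) (hf : Continuous f) (u : C(K, E)) : C(K, F) := ⟨fun s => f (u s), hf.comp u.continuous⟩

/-- pointwise application -/
noncomputable def papp {F : Type v} [NormedAddCommGroup F] [NormedSpace ℝ F] :
    C(K, E →L[ℝ] F) →L[ℝ] C(K, E) →L[ℝ] C(K, F) :=
  LinearMap.mkContinuous₂ (LinearMap.mk₂ ℝ (fun (a : C(K, E →L[ℝ] F)) (v : C(K, E)) =>
      (⟨fun s => a s (v s), a.continuous.clm_apply v.continuous⟩ : C(K, F)))
    (by intros; ext; simp) (by intros; ext; simp) (by intros; ext; simp) (by intros; ext; simp)) 1 (by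
      intro a v
      rw [ContinuousMap.norm_le _ (by positivity)]
      intro s
      simp only [LinearMap.mk₂_apply, ContinuousMap.coe_mk, one_mul]
      exact ((a s).le_opNorm _).trans (mul_le_mul (a.norm_coe_le_norm s) (v.norm_coe_le_norm s) (norm_nonneg _) (by positivity)))

@[simp] lemma papp_apply {F : Type v} [NormedAddCommGroup F] [NormedSpace ℝ F]
    (a : C(K, E →L[ℝ] F)) (v : C(K, E)) (s : K) : papp a v s = a s (v s) := rfl

lemma nem_hasFDerivAt {F : Type v} [NormedAddCommGroup F] [NormedSpace ℝ F] {f : E → F} (hf : ContDiff ℝ 1 f)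
    (u : C(K, E)) :
    HasFDerivAt (nem f hf.continuous) (papp (nem (fderiv ℝ f) (hf.continuous_fderiv (by norm_num)) u)) u := by
  rw [hasFDerivAt_iff_isLittleO_nhds_zero, Asymptotics.isLittleO_iff]
  intro ε hε
  have hS : IsCompact (Set.range u) := isCompact_range u.continuous
  have key : ∀ᶠ h in nhds (0 : E), ∀ x ∈ Set.range u, ‖f (x + h) - f x - fderiv ℝ f x h‖ ≤ ε * ‖h‖ := by
    refine hS.eventually_forall_of_forall_eventually fun x _ => ?_
    have h1 : HasStrictFDerivAt f (fderiv ℝ f x) x := hf.contDiffAt.hasStrictFDerivAt (by norm_num)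
    have h2 := h1.isLittleO.def (half_pos hε)
    have ht : Filter.Tendsto (fun p : E × E => (p.2 + p.1, p.2)) (nhds ((0 : E), x)) (nhds (x, x)) := by
      have : Continuous (fun p : E × E => (p.2 + p.1, p.2)) := by fun_prop
      simpa using this.tendsto ((0 : E), x)
    have h3 := ht.eventually h2
    have hc : Continuous fun p : E × E => ‖fderiv ℝ f p.2 - fderiv ℝ f x‖ :=
      (((hf.continuous_fderiv (by norm_num)).comp continuous_snd).sub continuous_const).norm
    have h4 : ∀ᶠ p : E × E in nhds ((0 : E), x), ‖fderiv ℝ f p.2 - fderiv ℝ f x‖ < ε / 2 :=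
      hc.continuousAt.eventually (gt_mem_nhds (by simpa using half_pos hε))
    filter_upwards [h3, h4] with p hp3 hp4
    have e : f (p.2 + p.1) - f p.2 - fderiv ℝ f p.2 p.1 = 
      (f (p.2 + p.1) - f p.2 - fderiv ℝ f x p.1) - (fderiv ℝ f p.2 - fderiv ℝ f x) p.1 := by
      simp
    have a1 : ‖f (p.2 + p.1) - f p.2 - fderiv ℝ f x p.1‖ ≤ ε / 2 * ‖p.1‖ := by simpa using hp3
    have a2 := ((fderiv ℝ f p.2 - fderiv ℝ f x).le_opNorm p.1).trans
      (mul_le_mul_of_nonneg_right hp4.le (norm_nonneg _))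
    rw [e]
    refine (norm_sub_le _ _).trans ?_
    linarith
  obtain ⟨δ, hδ, H⟩ := Metric.eventually_nhds_iff.1 key
  refine Metric.eventually_nhds_iff.2 ⟨δ, hδ, fun h hh => ?_⟩
  rw [ContinuousMap.norm_le _ (by positivity)]
  intro s
  have hs : ‖h s‖ ≤ ‖h‖ := h.norm_coe_le_norm s
  have := @H (h s) (by rw [dist_zero_right] at hh ⊢; exact hs.trans_lt hh) (u s) ⟨s, rfl⟩
  exact this.trans (by gcongr)

lemma nem_contDiff_nat (m : ℕ) : ∀ {F : Type v} [NormedAddCommGroup F] [NormedSpace ℝ F] {f : E → F} (hf : ContDiff ℝ (⊤ : ℕ∞) f),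
    ContDiff ℝ m (nem (K := K) f hf.continuous) := by
  induction m with
  | zero => 
    intro F _ _ f hf
    have h1 : ContDiff ℝ 1 f := hf.of_le (by exact_mod_cast le_top)
    simp only [CharP.cast_eq_zero, contDiff_zero]
    exact continuous_iff_continuousAt.2 fun u => (nem_hasFDerivAt h1 u).continuousAt
  | succ m ih =>
    intro F _ _ f hf
    have h1 : ContDiff ℝ 1 f := hf.of_le (by exact_mod_cast le_top)
    have hf' : ContDiff ℝ (⊤ : ℕ∞) (fderiv ℝ f) := hf.fderiv_right (by simp)
    refine contDiff_succ_iff_hasFDerivAt.2 ?_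
    · refine ⟨fun u => papp (nem (fderiv ℝ f) hf'.continuous u), ?_, fun u => nem_hasFDerivAt h1 u⟩
      exact papp.contDiff.comp (ih hf')

lemma nem_contDiff {F : Type v} [NormedAddCommGroup F] [NormedSpace ℝ F] {f : E → F} (hf : ContDiff ℝ (⊤ : ℕ∞) f) :
    ContDiff ℝ (⊤ : ℕ∞) (nem (K := K) f hf.continuous) :=
  contDiff_infty.2 fun m => nem_contDiff_nat m hf

end nem
end NashRK

namespace NashRK
section flow
open Filter Topology

abbrev II : Type := Set.Icc (0:ℝ) 1
def i0 : II := ⟨0, by simp⟩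
def i1 : II := ⟨1, by simp⟩

variable {E : Type} [NormedAddCommGroup E] [NormedSpace ℝ E] [CompleteSpace E]

noncomputable def ext (v : C(II, E)) : ℝ → E := Set.IccExtend (zero_le_one (α := ℝ)) v

lemma ext_cont (v : C(II, E)) : Continuous (ext v) := v.continuous.Icc_extend'

lemma ext_norm (v : C(II, E)) (t : ℝ) : ‖ext v t‖ ≤ ‖v‖ := v.norm_coe_le_norm _

lemma ext_coe (v : C(II, E)) (s : II) : ext v s = v s := Set.IccExtend_val _ _ _

noncomputable def kop : C(II, E) →L[ℝ] C(II, E) :=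
  LinearMap.mkContinuous
    { toFun := fun v => ⟨fun s => ∫ t in (1:ℝ)..(s:ℝ), ext v t,
        (intervalIntegral.continuous_primitive (fun a b => (ext_cont v).intervalIntegrable a b) 1).comp continuous_subtype_val⟩
      map_add' := by
        intro v w
        ext s
        simp only [ContinuousMap.coe_mk, ContinuousMap.add_apply]
        rw [← intervalIntegral.integral_add ((ext_cont v).intervalIntegrable _ _) ((ext_cont w).intervalIntegrable _ _)]
        rfl
      map_smul' := by
        intro c v
        ext s
        simp only [ContinuousMap.coe_mk, ContinuousMap.smul_apply, RingHom.id_apply]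
        rw [← intervalIntegral.integral_smul]
        rfl } 1 (by
    intro v
    rw [ContinuousMap.norm_le _ (by positivity)]
    intro s
    have h := intervalIntegral.norm_integral_le_of_norm_le_const (a := (1:ℝ)) (b := (s:ℝ)) (f := ext v) (C := ‖v‖)
      (fun t _ => ext_norm v t)
    refine h.trans ?_
    have h1 : |(s:ℝ) - 1| ≤ 1 := by
      have := s.2.1; have := s.2.2
      rw [abs_le]; constructor <;> linarith
    rw [one_mul]
    exact mul_le_of_le_one_right (norm_nonneg _) h1)

lemma kop_apply (v : C(II, E)) (s : II) : kop v s = ∫ t in (1:ℝ)..(s:ℝ), ext v t := rfl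

lemma kop_one (v : C(II, E)) : kop v i1 = 0 := by
  rw [kop_apply]; simp [i1]

lemma ext_kop_deriv (v : C(II, E)) {s : ℝ} (hs : s ∈ Set.Ioo (0:ℝ) 1) :
    HasDerivAt (ext (kop v)) (ext v s) s := by
  have h := ((ext_cont v).integral_hasStrictDerivAt 1 s).hasDerivAt
  refine h.congr_of_eventuallyEq ?_
  filter_upwards [Ioo_mem_nhds hs.1 hs.2] with t ht
  exact ext_coe (kop v) ⟨t, ht.1.le, ht.2.le⟩

/-- the pair map -/
noncomputable def pairL : (E × C(II, E)) →L[ℝ] C(II, E × E) :=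
  ((ContinuousLinearMap.inl ℝ E E).compLeftContinuous ℝ II).comp (ContinuousLinearMap.snd ℝ E C(II, E)) +
  ((ContinuousLinearMap.inr ℝ E E).compLeftContinuous ℝ II).comp
    ((ContinuousLinearMap.const ℝ II).comp (ContinuousLinearMap.fst ℝ E C(II, E)))

lemma pairL_apply (p : E × C(II, E)) (s : II) : pairL p s = (p.2 s, p.1) := by
  have : pairL p s = (p.2 s, (0:E)) + ((0:E), p.1) := rfl
  rw [this]; simp

noncomputable abbrev cst : E →L[ℝ] C(II, E) := ContinuousLinearMap.const ℝ II

lemma cst_apply (x : E) (s : II) : cst x s = x := rfl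

theorem implicit_fix {C : Type} [NormedAddCommGroup C] [NormedSpace ℝ C] [CompleteSpace C]
    (G : E × C → C) (hG : ContDiff ℝ (⊤:ℕ∞) G) (x0 : E) (u0 : C) (h0 : G (x0, u0) = u0)
    (hz : ∀ v, fderiv ℝ G (x0, u0) (0, v) = 0) :
    ∃ u : E → C, u x0 = u0 ∧ ∀ᶠ x in 𝓝 x0, ContDiffAt ℝ (⊤:ℕ∞) u x ∧ u x = G (x, u x) := by
  have hn : ((⊤:ℕ∞) : WithTop ℕ∞) ≠ 0 := by simp
  let Γ : E × C → E × C := fun p => (p.1, p.2 - G p)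
  have hΓ : ContDiff ℝ (⊤:ℕ∞) Γ := contDiff_fst.prodMk (contDiff_snd.sub hG)
  let p0 : E × C := (x0, u0)
  let R : E →L[ℝ] C := (fderiv ℝ G p0).comp (ContinuousLinearMap.inl ℝ E C)
  let Λ : (E × C) ≃L[ℝ] (E × C) := ContinuousLinearEquiv.equivOfInverse
    ((ContinuousLinearMap.fst ℝ E C).prod (ContinuousLinearMap.snd ℝ E C - R.comp (ContinuousLinearMap.fst ℝ E C)))
    ((ContinuousLinearMap.fst ℝ E C).prod (ContinuousLinearMap.snd ℝ E C + R.comp (ContinuousLinearMap.fst ℝ E C)))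
    (by intro p; simp) (by intro p; simp)
  have hD : HasFDerivAt Γ (Λ : (E × C) →L[ℝ] (E × C)) p0 := by
    have a : HasFDerivAt Γ ((ContinuousLinearMap.fst ℝ E C).prod
      (ContinuousLinearMap.snd ℝ E C - fderiv ℝ G p0)) p0 :=
      hasFDerivAt_fst.prodMk (hasFDerivAt_snd.sub (hG.differentiable hn _).hasFDerivAt)
    convert a using 1
    refine ContinuousLinearMap.ext fun p => ?_
    obtain ⟨h, v⟩ := p
    refine Prod.ext rfl ?_
    change v - fderiv ℝ G p0 (h, 0) = v - fderiv ℝ G p0 (h, v)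
    have e : (h, v) = (h, (0:C)) + ((0:E), v) := by simp
    rw [e, map_add, hz, add_zero]
  let e := (hΓ.contDiffAt (x := p0)).toOpenPartialHomeomorph Γ hD hn
  have he : ∀ p, e p = Γ p := fun p => rfl
  have hsrc : p0 ∈ e.source := ContDiffAt.mem_toOpenPartialHomeomorph_source _ hD hn
  have hG0 : Γ p0 = (x0, 0) := by
    refine Prod.ext rfl ?_
    change u0 - G (x0, u0) = 0
    rw [h0, sub_self]
  have hsym0 : e.symm (x0, 0) = p0 := by rw [← hG0]; exact e.left_inv hsrc
  have htgt : (x0, (0 : C)) ∈ e.target := by rw [← hG0]; exact e.map_source hsrc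
  have hcont : ContinuousAt (fun x : E => e.symm (x, (0 : C))) x0 :=
    ContinuousAt.comp (f := fun x : E => (x, (0 : C))) (e.continuousAt_symm htgt) (by fun_prop)
  have hi : ∀ᶠ x in 𝓝 x0, fderiv ℝ Γ (e.symm (x, 0)) ∈ Set.range ((↑) : ((E × C) ≃L[ℝ] (E × C)) → _) := by
    have c : ContinuousAt (fun x : E => fderiv ℝ Γ (e.symm (x, (0 : C)))) x0 :=
      ContinuousAt.comp (g := fderiv ℝ Γ) ((hΓ.continuous_fderiv hn).continuousAt) hcont
    refine c.eventually ?_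
    beta_reduce
    rw [hsym0, hD.fderiv]
    exact ContinuousLinearEquiv.nhds Λ
  have ht : ∀ᶠ x in 𝓝 x0, (x, (0 : C)) ∈ e.target :=
    (show ContinuousAt (fun x : E => (x, (0 : C))) x0 by fun_prop).eventually (e.open_target.mem_nhds htgt)
  refine ⟨fun x => (e.symm (x, 0)).2, by simp only [hsym0, p0], ?_⟩
  filter_upwards [ht, hi] with x hx hxi
  constructor
  · obtain ⟨L, hL⟩ := hxi
    have d : HasFDerivAt e (L : (E × C) →L[ℝ] (E × C)) (e.symm (x, 0)) := by
      rw [hL]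
      exact (hΓ.differentiable hn _).hasFDerivAt
    have := e.contDiffAt_symm hx d (hΓ.contDiffAt)
    have h3 : ContDiffAt ℝ (⊤:ℕ∞) (fun x : E => e.symm (x, (0 : C))) x :=
      ContDiffAt.comp (f := fun x : E => (x, (0 : C))) x this (by fun_prop)
    exact h3.snd
  · have := e.right_inv hx
    rw [he] at this
    have a1 : (e.symm (x, 0)).1 = x := congrArg Prod.fst this
    have a2 : (e.symm (x, 0)).2 - G (e.symm (x, 0)) = 0 := congrArg Prod.snd this
    have a3 : e.symm (x, 0) = (x, (e.symm (x, 0)).2) := Prod.ext a1 rfl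
    rw [sub_eq_zero] at a2
    rw [← a3]; exact a2

noncomputable def gmap (W : E × E → E) (hW : Continuous W) (p : E × C(II, E)) : C(II, E) :=
  cst p.1 + kop (nem W hW (pairL p))

lemma gmap_contDiff (W : E × E → E) (hW : ContDiff ℝ (⊤:ℕ∞) W) :
    ContDiff ℝ (⊤:ℕ∞) (gmap W hW.continuous) := by
  have a : ContDiff ℝ (⊤:ℕ∞) (fun p : E × C(II, E) => (cst p.1 : C(II, E))) :=
    ContDiff.comp (g := fun x => (cst x : C(II, E))) (cst : E →L[ℝ] C(II, E)).contDiff contDiff_fst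
  have b : ContDiff ℝ (⊤:ℕ∞) (fun p : E × C(II, E) => nem W hW.continuous (pairL p)) :=
    (nem_contDiff hW).comp (pairL : (E × C(II, E)) →L[ℝ] C(II, E × E)).contDiff
  have c : ContDiff ℝ (⊤:ℕ∞) (fun p : E × C(II, E) => kop (nem W hW.continuous (pairL p))) :=
    ContDiff.comp (g := fun w => (kop w : C(II, E))) (kop : C(II, E) →L[ℝ] C(II, E)).contDiff b
  exact a.add c

lemma gmap_fderiv (W : E × E → E) (hW : ContDiff ℝ (⊤:ℕ∞) W) (p : E × C(II, E)) (q : E × C(II, E)) :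
    fderiv ℝ (gmap W hW.continuous) p q = cst q.1 +
      kop (papp (nem (fderiv ℝ W) (hW.continuous_fderiv (by simp)) (pairL p)) (pairL q)) := by
  have h1 : ContDiff ℝ 1 W := hW.of_le (by exact_mod_cast le_top)
  have a : HasFDerivAt (fun p : E × C(II, E) => (cst p.1 : C(II, E))) (cst.comp (ContinuousLinearMap.fst ℝ E C(II, E))) p :=
    (cst.comp (ContinuousLinearMap.fst ℝ E C(II, E))).hasFDerivAt
  have b := (nem_hasFDerivAt (K := II) h1 (pairL p)).comp p (pairL : (E × C(II, E)) →L[ℝ] C(II, E × E)).hasFDerivAt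
  have c := (kop : C(II, E) →L[ℝ] C(II, E)).hasFDerivAt.comp p b
  have d := a.add c
  have e : HasFDerivAt (gmap W hW.continuous) _ p := d
  rw [e.fderiv]
  rfl

theorem flow (W : E × E → E) (hW : ContDiff ℝ (⊤:ℕ∞) W) (x0 : E) (h0 : ∀ y, W (y, x0) = 0) :
    ∃ u : E → C(II, E), u x0 = cst x0 ∧ ∀ᶠ x in 𝓝 x0, ContDiffAt ℝ (⊤:ℕ∞) u x ∧
      u x = cst x + kop (nem W hW.continuous (pairL (x, u x))) ∧
      ∀ h, fderiv ℝ u x h = cst h + kop (papp (nem (fderiv ℝ W) (hW.continuous_fderiv (by simp)) (pairL (x, u x)))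
        (pairL (h, fderiv ℝ u x h))) := by
  have hn : ((⊤:ℕ∞) : WithTop ℕ∞) ≠ 0 := by simp
  have hz : ∀ y v, fderiv ℝ W (y, x0) (v, 0) = 0 := by
    intro y v
    have a := HasFDerivAt.comp (g := W) (f := fun e => (e, x0)) y ((hW.differentiable hn) (y, x0)).hasFDerivAt (hasFDerivAt_prodMk_left y x0)
    have b : (W ∘ fun e => (e, x0)) = fun _ => (0:E) := by funext e; exact h0 e
    rw [b] at a
    have := a.unique (hasFDerivAt_const (0:E) y)
    simpa using congrArg (fun L => L v) this
  obtain ⟨u, hu0, hu⟩ := implicit_fix (gmap W hW.continuous) (gmap_contDiff W hW) x0 (cst x0) (by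
      have : nem W hW.continuous (pairL (x0, cst x0)) = 0 := by
        ext s
        change W (pairL (x0, cst x0) s) = 0
        rw [pairL_apply]; exact h0 _
      rw [gmap, this, map_zero, add_zero]) (by
      intro v
      rw [gmap_fderiv W hW]
      have : papp (nem (fderiv ℝ W) (hW.continuous_fderiv (by simp)) (pairL (x0, cst x0))) (pairL ((0:E), v)) = 0 := by
        ext s
        rw [papp_apply, pairL_apply]
        change fderiv ℝ W (pairL (x0, cst x0) s) _ = 0
        rw [pairL_apply]; exact hz _ _
      rw [this, map_zero, map_zero, add_zero])
  refine ⟨u, hu0, ?_⟩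
  filter_upwards [hu.eventually_nhds, hu] with x hx1 hx
  refine ⟨hx.1, hx.2, fun h => ?_⟩
  have hd : HasFDerivAt u (fderiv ℝ u x) x := (hx.1.differentiableAt hn).hasFDerivAt
  have d2 : HasFDerivAt (fun x => gmap W hW.continuous (x, u x)) 
      ((fderiv ℝ (gmap W hW.continuous) (x, u x)).comp ((ContinuousLinearMap.id ℝ E).prod (fderiv ℝ u x))) x :=
    HasFDerivAt.comp (g := gmap W hW.continuous) (f := fun x => (x, u x)) x
      ((gmap_contDiff W hW).differentiable hn _).hasFDerivAt ((hasFDerivAt_id x).prodMk hd)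
  have := hd.unique (d2.congr_of_eventuallyEq (hx1.mono fun y hy => hy.2))
  have := congrArg (fun L => L h) this
  refine this.trans ?_
  exact gmap_fderiv W hW (x, u x) (h, fderiv ℝ u x h)

end flow
end NashRK

namespace NashRK
section lin
open Filter Topology

lemma exists_proj {n : ℕ} (a : Matrix (Fin n) (Fin n) ℝ) (ha : a.PosSemidef) :
    ∃ P : Matrix (Fin n) (Fin n) ℝ, Pᵀ = P ∧ P * P = P ∧ a * P = 0 ∧ (a + P).PosDef := by
  classical
  have hs := ha.1.spectral_theorem
  set φ := Unitary.conjStarAlgAut ℝ _ ha.1.eigenvectorUnitary with hφ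
  set l : Fin n → ℝ := RCLike.ofReal ∘ ha.1.eigenvalues with hl
  let f : Fin n → ℝ := fun i => if l i = 0 then 1 else 0
  have e1 : star (φ (diagonal f)) = φ (diagonal f) := by
    rw [← map_star]
    congr 1
    rw [star_eq_conjTranspose, diagonal_conjTranspose]
    congr 1
  have e2 : φ (diagonal f) * φ (diagonal f) = φ (diagonal f) := by
    rw [← map_mul, diagonal_mul_diagonal]
    congr 2
    funext i
    simp [f]
  have e3 : a * φ (diagonal f) = 0 := by
    conv_lhs => rw [hs]
    rw [← map_mul, diagonal_mul_diagonal]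
    have : (fun i => l i * f i) = 0 := by
      funext i
      by_cases h : l i = 0 <;> simp [f, h]
    rw [this]; simp
  have e4 : IsUnit (a + φ (diagonal f)) := by
    conv_rhs => rw [hs]
    rw [← map_add, diagonal_add]
    refine IsUnit.map _ ?_
    rw [isUnit_diagonal, Pi.isUnit_iff]
    intro i
    rw [isUnit_iff_ne_zero]
    by_cases h : l i = 0 <;> simp [f, h]
  have e5 : (φ (diagonal f)).PosSemidef := by
    have := posSemidef_self_mul_conjTranspose (φ (diagonal f))
    rw [← star_eq_conjTranspose, e1, e2] at this
    exact this
  refine ⟨φ (diagonal f), ?_, e2, e3, ?_⟩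
  · rw [← conjTranspose_eq_transpose_of_trivial]; exact e1
  · exact ((ha.add e5).posDef_iff_isUnit).2 e4

variable {E : Type} [NormedAddCommGroup E] [NormedSpace ℝ E] [FiniteDimensional ℝ E]

lemma char_alg (B P M : E →L[ℝ] E) (r : ℕ) (hP : P * P = P)
    (hM : M = (1 - P) * B * (1 - P) + P) (hu : IsUnit M)
    (hr : Module.finrank ℝ (LinearMap.range (B : E →ₗ[ℝ] E)) ≤ r)
    (hr' : r ≤ Module.finrank ℝ (LinearMap.range ((1 - P : E →L[ℝ] E) : E →ₗ[ℝ] E))) :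
    let A := P - Ring.inverse M * ((1 - P) * B * P)
    B * A = 0 ∧ A * P = A ∧ P * A = P := by
  intro A
  set Z := Ring.inverse M * ((1 - P) * B * P) with hZ
  have hMZ : M * Z = (1 - P) * B * P := by
    rw [hZ, ← mul_assoc, Ring.mul_inverse_cancel _ hu, one_mul]
  have hPQ : P * (1 - P) = 0 := by rw [mul_sub, hP, mul_one, sub_self]
  have hQP : (1 - P) * P = 0 := by rw [sub_mul, hP, one_mul, sub_self]
  have hQQ : (1 - P) * (1 - P) = 1 - P := by rw [mul_sub, hQP, mul_one, sub_zero]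
  have hPM : P * M = P := by
    rw [hM, mul_add, hP, ← mul_assoc, ← mul_assoc, hPQ]; simp
  have hPZ : P * Z = 0 := by
    calc P * Z = P * M * Z := by rw [hPM]
      _ = P * ((1 - P) * B * P) := by rw [mul_assoc, hMZ]
      _ = 0 := by rw [← mul_assoc, ← mul_assoc, hPQ]; simp
  have hQZ : (1 - P) * Z = Z := by rw [sub_mul, hPZ, one_mul, sub_zero]
  have hQBZ : (1 - P) * B * Z = (1 - P) * B * P := by
    rw [← hMZ, hM, add_mul, hPZ, add_zero, mul_assoc _ (1 - P) Z, hQZ]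
  have hQBA : (1 - P) * (B * A) = 0 := by
    rw [← mul_assoc]
    change (1 - P) * B * (P - Z) = 0
    rw [mul_sub, hQBZ, sub_self]
  refine ⟨?_, ?_, ?_⟩
  · -- injectivity
    let S := LinearMap.range (B : E →ₗ[ℝ] E)
    let q : S →ₗ[ℝ] E := ((1 - P : E →L[ℝ] E) : E →ₗ[ℝ] E).domRestrict S
    have hle : LinearMap.range ((1 - P : E →L[ℝ] E) : E →ₗ[ℝ] E) ≤ LinearMap.range q := by
      rintro _ ⟨v, rfl⟩
      have h1 : (1 - P) * M = (1 - P) * B * (1 - P) := by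
        rw [hM, mul_add, hQP, add_zero, ← mul_assoc, ← mul_assoc, hQQ]
      have h2 : M * Ring.inverse M = 1 := Ring.mul_inverse_cancel _ hu
      have h3 : (1 - P) = (1 - P) * (B * ((1 - P) * Ring.inverse M)) := by
        rw [← mul_assoc, ← mul_assoc, ← h1, mul_assoc, h2, mul_one]
      refine ⟨⟨B (((1 - P) * Ring.inverse M) v), ⟨_, rfl⟩⟩, ?_⟩
      exact (congrArg (fun L : E →L[ℝ] E => L v) h3).symm
    have hfr := LinearMap.finrank_range_add_finrank_ker q
    have h4 := Submodule.finrank_mono hle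
    have h5 : Module.finrank ℝ (LinearMap.ker q) = 0 := by
      change _ + _ = Module.finrank ℝ (LinearMap.range (B : E →ₗ[ℝ] E)) at hfr
      omega
    have h6 : LinearMap.ker q = ⊥ := Submodule.finrank_eq_zero.1 h5
    refine ContinuousLinearMap.ext fun v => ?_
    have h7 : (⟨B (A v), ⟨_, rfl⟩⟩ : S) ∈ LinearMap.ker q := by
      rw [LinearMap.mem_ker]
      exact congrArg (fun L : E →L[ℝ] E => L v) hQBA
    rw [h6, Submodule.mem_bot] at h7
    exact congrArg Subtype.val h7
  · change (P - Z) * P = P - Z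
    rw [sub_mul, hP, hZ, mul_assoc, mul_assoc, hP]
  · change P * (P - Z) = P
    rw [mul_sub, hP, hPZ, sub_zero]

theorem exists_char (B : E → E →L[ℝ] E) (P : E →L[ℝ] E) (x0 : E) (hP : P * P = P)
    (hB : ∀ᶠ x in 𝓝 x0, ContDiffAt ℝ (⊤:ℕ∞) B x)
    (h1 : B x0 * P = 0) (h2 : P * B x0 = 0) (hu : IsUnit (B x0 + P))
    (hr : ∀ᶠ x in 𝓝 x0, Module.finrank ℝ (LinearMap.range (B x : E →ₗ[ℝ] E)) =
      Module.finrank ℝ (LinearMap.range (B x0 : E →ₗ[ℝ] E))) :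
    ∃ A : E → E →L[ℝ] E, ∀ᶠ x in 𝓝 x0, ContDiffAt ℝ (⊤:ℕ∞) A x ∧ B x * A x = 0 ∧ A x * P = A x ∧ P * A x = P := by
  have : CompleteSpace E := FiniteDimensional.complete ℝ E
  let M : E → E →L[ℝ] E := fun x => (1 - P) * B x * (1 - P) + P
  have hM : ∀ x, ContDiffAt ℝ (⊤:ℕ∞) B x → ContDiffAt ℝ (⊤:ℕ∞) M x := by
    intro x hx
    exact ((contDiffAt_const.mul hx).mul contDiffAt_const).add contDiffAt_const
  have hM0 : M x0 = B x0 + P := by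
    simp only [M]
    rw [sub_mul, h2, one_mul, sub_zero, mul_sub, h1]; simp
  have hMu : ∀ᶠ x in 𝓝 x0, IsUnit (M x) := by
    refine (hM x0 hB.self_of_nhds).continuousAt.eventually ?_
    rw [hM0]
    exact Units.isOpen.mem_nhds hu
  refine ⟨fun x => P - Ring.inverse (M x) * ((1 - P) * B x * P), ?_⟩
  filter_upwards [hMu, hB, hr] with x hx hxB hxr
  refine ⟨?_, char_alg (B x) P (M x) _ hP rfl hx hxr.le ?_⟩
  · have hi : ContDiffAt ℝ (⊤:ℕ∞) (fun x => Ring.inverse (M x)) x := by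
      obtain ⟨w, hw⟩ := hx
      have := contDiffAt_ringInverse (n := (⊤:ℕ∞)) ℝ w
      rw [hw] at this
      exact ContDiffAt.comp (g := Ring.inverse) x this (hM x hxB)
    exact contDiffAt_const.sub (hi.mul ((contDiffAt_const.mul hxB).mul contDiffAt_const))
  · refine Submodule.finrank_mono ?_
    rintro _ ⟨v, rfl⟩
    refine ⟨B x0 v, ?_⟩
    have : (1 - P) * B x0 = B x0 := by rw [sub_mul, h2, one_mul, sub_zero]
    exact congrArg (fun L : E →L[ℝ] E => L v) this

end lin
end NashRK

namespace NashRK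
section inv
open Filter Topology

variable {E : Type} [NormedAddCommGroup E] [NormedSpace ℝ E] [CompleteSpace E]

theorem invariance (A : E → E →L[ℝ] E) (hA : ContDiff ℝ (⊤:ℕ∞) A) (P : E →L[ℝ] E) (x0 : E)
    (O : Set E) (hO : IsOpen O) (hx0 : x0 ∈ O) (hAP : ∀ y, A y * P = A y) (hPA : ∀ y ∈ O, P * A y = P)
    (β : E → E →L[ℝ] E →L[ℝ] ℝ) (hβ : ∀ y ∈ O, DifferentiableAt ℝ β y)
    (hL : ∀ y ∈ O, ∀ a b, fderiv ℝ β y (A y (y - x0)) a b + β y (fderiv ℝ (fun y => A y (y - x0)) y a) b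
      + β y a (fderiv ℝ (fun y => A y (y - x0)) y b) = 0) :
    ∃ Φ : E → E, Φ x0 = x0 ∧ ∀ᶠ x in 𝓝 x0, ContDiffAt ℝ (⊤:ℕ∞) Φ x ∧ (∀ h, P (fderiv ℝ Φ x h) = 0) ∧
      ∀ h k, β x h k = β (Φ x) (fderiv ℝ Φ x h) (fderiv ℝ Φ x k) := by
  have hn : ((⊤:ℕ∞) : WithTop ℕ∞) ≠ 0 := by simp
  have hAd : ∀ y, HasFDerivAt A (fderiv ℝ A y) y := fun y => (hA.differentiable hn y).hasFDerivAt
  let W : E × E → E := fun p => A p.1 (p.2 - x0)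
  have hW : ContDiff ℝ (⊤:ℕ∞) W := (hA.comp contDiff_fst).clm_apply (contDiff_snd.sub contDiff_const)
  have hWd : ∀ p q, fderiv ℝ W p q = fderiv ℝ A p.1 q.1 (p.2 - x0) + A p.1 q.2 := by
    intro p q
    have a : HasFDerivAt (fun p : E × E => A p.1) ((fderiv ℝ A p.1).comp (ContinuousLinearMap.fst ℝ E E)) p :=
      HasFDerivAt.comp (g := A) p (hAd p.1) hasFDerivAt_fst
    have b : HasFDerivAt (fun p : E × E => p.2 - x0) (ContinuousLinearMap.snd ℝ E E) p :=
      hasFDerivAt_snd.sub_const x0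
    have c : HasFDerivAt W _ p := a.clm_apply b
    rw [c.fderiv]
    simp [add_comm]
  have hXd : ∀ y v, fderiv ℝ (fun y => A y (y - x0)) y v = fderiv ℝ A y v (y - x0) + A y v := by
    intro y v
    have c := (hAd y).clm_apply ((hasFDerivAt_id y).sub_const x0)
    have c' : HasFDerivAt (fun y => A y (y - x0)) _ y := c
    rw [c'.fderiv]
    simp [add_comm]
  have hDAP : ∀ y v w, fderiv ℝ A y v w = fderiv ℝ A y v (P w) := by
    intro y v w
    have a : HasFDerivAt (fun y => A y * P) _ y := (hAd y).mul_const' P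
    have b : (fun y => A y * P) = A := by funext y; exact hAP y
    rw [b] at a
    have := congrArg (fun L => L v w) ((hAd y).unique a)
    simpa using this
  have hAP' : ∀ y w, A y (P w) = A y w := fun y w => congrArg (fun L : E →L[ℝ] E => L w) (hAP y)
  obtain ⟨u, hu0, hu⟩ := flow W hW x0 (by intro y; simp [W])
  obtain ⟨r, hr, hrO⟩ := Metric.isOpen_iff.1 hO x0 hx0
  have hin : ∀ᶠ x in 𝓝 x0, ∀ s, u x s ∈ O := by
    have hc : ContinuousAt u x0 := hu.self_of_nhds.1.continuousAt
    have := hc.eventually (Metric.ball_mem_nhds _ hr)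
    filter_upwards [this] with x hx s
    apply hrO
    rw [hu0] at hx
    rw [Metric.mem_ball]
    exact (ContinuousMap.dist_apply_le_dist (f := u x) (g := cst x0) s).trans_lt hx
  have hPu : ∀ᶠ x in 𝓝 x0, ∀ s, P (u x s) = P x + ((s:ℝ) - 1) • P (x - x0) := by
    filter_upwards [hu, hin] with x hx hxO s
    have h1 := congrArg (fun w : C(II, E) => P (w s)) hx.2.1
    simp only [ContinuousMap.add_apply, map_add, kop_apply] at h1
    rw [h1]
    congr 1
    rw [← ContinuousLinearMap.intervalIntegral_comp_comm P ((ext_cont _).intervalIntegrable _ _)]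
    have : ∀ t, P (ext (nem W hW.continuous (pairL (x, u x))) t) = P (x - x0) := by
      intro t
      have e : ext (nem W hW.continuous (pairL (x, u x))) t = W (pairL (x, u x) (Set.projIcc 0 1 zero_le_one t)) := rfl
      rw [e, pairL_apply]
      exact congrArg (fun L : E →L[ℝ] E => L (x - x0)) (hPA _ (hxO _))
    simp only [this]
    rw [intervalIntegral.integral_const]
  refine ⟨fun x => u x i0, by simp [hu0], ?_⟩
  filter_upwards [hu, hin, hPu, hPu.eventually_nhds] with x hx hxO hxP hxP'
  obtain ⟨hsm, hint, hdint⟩ := hx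
  have hud : HasFDerivAt u (fderiv ℝ u x) x := (hsm.differentiableAt hn).hasFDerivAt
  have hev : ∀ s : II, HasFDerivAt (fun x => u x s) ((ContinuousMap.evalCLM ℝ s).comp (fderiv ℝ u x)) x := fun s =>
    HasFDerivAt.comp (g := fun w : C(II, E) => w s) x (ContinuousMap.evalCLM ℝ s : C(II, E) →L[ℝ] E).hasFDerivAt hud
  have hPJ : ∀ (s : II) h, P (fderiv ℝ u x h s) = (s:ℝ) • P h := by
    intro s h
    have a : HasFDerivAt (fun x => P (u x s)) (P.comp ((ContinuousMap.evalCLM ℝ s).comp (fderiv ℝ u x))) x :=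
      P.hasFDerivAt.comp x (hev s)
    have b : HasFDerivAt (fun x => P x + ((s:ℝ) - 1) • P (x - x0)) (P + ((s:ℝ) - 1) • P) x :=
      P.hasFDerivAt.add ((P.hasFDerivAt.comp (g := P) x ((hasFDerivAt_id x).sub_const x0)).const_smul ((s:ℝ) - 1))
    have := a.unique (b.congr_of_eventuallyEq (hxP'.mono fun y hy => hy s))
    have := congrArg (fun L => L h) this
    simp only [_root_.add_apply, _root_.smul_apply] at this
    refine Eq.trans this ?_
    rw [sub_smul, one_smul]; abel
  have hΦd : ∀ h, fderiv ℝ (fun x => u x i0) x h = fderiv ℝ u x h i0 := by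
    intro h; rw [(hev i0).fderiv]; rfl
  have hsm' : ContDiffAt ℝ (⊤:ℕ∞) (fun x => u x i0) x :=
    ContDiffAt.comp (g := fun w : C(II, E) => w i0) x (ContinuousMap.evalCLM ℝ i0 : C(II, E) →L[ℝ] E).contDiff.contDiffAt hsm
  refine ⟨hsm', fun h => by rw [hΦd, hPJ]; simp [i0], fun h k => ?_⟩
  rw [hΦd, hΦd]
  -- derivatives along the curve
  have hcd : ∀ s ∈ Set.Ioo (0:ℝ) 1, HasDerivAt (ext (u x)) (A (ext (u x) s) (x - x0)) s := by
    intro s hs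
    have a := ext_kop_deriv (nem W hW.continuous (pairL (x, u x))) hs
    have e : ext (nem W hW.continuous (pairL (x, u x))) s = A (ext (u x) s) (x - x0) := by
      change W (pairL (x, u x) (Set.projIcc 0 1 zero_le_one s)) = _
      rw [pairL_apply]; rfl
    rw [e] at a
    have f : ext (u x) = fun t => x + ext (kop (nem W hW.continuous (pairL (x, u x)))) t := by
      funext t
      conv_lhs => rw [hint]
      rfl
    rw [f] at a ⊢
    exact a.const_add x
  have hJd : ∀ h, ∀ s ∈ Set.Ioo (0:ℝ) 1, HasDerivAt (ext (fderiv ℝ u x h))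
      (fderiv ℝ A (ext (u x) s) (ext (fderiv ℝ u x h) s) (x - x0) + A (ext (u x) s) h) s := by
    intro h s hs
    have a := ext_kop_deriv (papp (nem (fderiv ℝ W) (hW.continuous_fderiv (by simp)) (pairL (x, u x)))
        (pairL (h, fderiv ℝ u x h))) hs
    have e : ext (papp (nem (fderiv ℝ W) (hW.continuous_fderiv (by simp)) (pairL (x, u x)))
        (pairL (h, fderiv ℝ u x h))) s = fderiv ℝ A (ext (u x) s) (ext (fderiv ℝ u x h) s) (x - x0) + A (ext (u x) s) h := by
      change fderiv ℝ W (pairL (x, u x) (Set.projIcc 0 1 zero_le_one s)) (pairL (h, fderiv ℝ u x h) (Set.projIcc 0 1 zero_le_one s)) = _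
      rw [hWd, pairL_apply, pairL_apply]; rfl
    rw [e] at a
    have a' := a.const_add h
    refine a'.congr_of_eventuallyEq (Eventually.of_forall fun t => ?_)
    have := congrArg (fun w : C(II, E) => ext w t) (hdint h)
    exact this
  have hPc : ∀ s ∈ Set.Ioo (0:ℝ) 1, P (ext (u x) s - x0) = s • P (x - x0) := by
    intro s hs
    have a := hxP ⟨s, hs.1.le, hs.2.le⟩
    rw [← ext_coe] at a
    simp only at a
    rw [map_sub, a, map_sub, sub_smul, one_smul]; abel
  have hPJ' : ∀ h, ∀ s ∈ Set.Ioo (0:ℝ) 1, P (ext (fderiv ℝ u x h) s) = s • P h := by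
    intro h s hs
    have a := hPJ ⟨s, hs.1.le, hs.2.le⟩ h
    rw [← ext_coe] at a
    exact a
  let f : ℝ → ℝ := fun s => β (ext (u x) s) (ext (fderiv ℝ u x h) s) (ext (fderiv ℝ u x k) s)
  have hfc : Continuous f := by
    have hb : Continuous fun s => β (ext (u x) s) := by
      rw [continuous_iff_continuousAt]
      intro s
      exact ContinuousAt.comp (g := β) (hβ _ (hxO _)).continuousAt (ext_cont (u x)).continuousAt
    exact (hb.clm_apply (ext_cont _)).clm_apply (ext_cont _)
  have hfd : ∀ s ∈ Set.Ioo (0:ℝ) 1, HasDerivAt f 0 s := by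
    intro s hs
    have b1 : HasDerivAt (fun s => β (ext (u x) s)) (fderiv ℝ β (ext (u x) s) (A (ext (u x) s) (x - x0))) s :=
      HasFDerivAt.comp_hasDerivAt (l := β) s (hβ (ext (u x) s) (hxO _)).hasFDerivAt (hcd s hs)
    have b2 := (b1.clm_apply (hJd h s hs)).clm_apply (hJd k s hs)
    refine HasDerivAt.congr_deriv (f := f) b2 ?_
    have l := hL (ext (u x) s) (hxO _) (ext (fderiv ℝ u x h) s) (ext (fderiv ℝ u x k) s)
    have m1 : A (ext (u x) s) (ext (u x) s - x0) = s • A (ext (u x) s) (x - x0) := by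
      rw [← hAP', hPc s hs, map_smul, hAP']
    have m2 : ∀ h, fderiv ℝ (fun y => A y (y - x0)) (ext (u x) s) (ext (fderiv ℝ u x h) s) =
        s • (fderiv ℝ A (ext (u x) s) (ext (fderiv ℝ u x h) s) (x - x0) + A (ext (u x) s) h) := by
      intro h
      rw [hXd, hDAP, hPc s hs, map_smul, ← hDAP, ← hAP' _ (ext (fderiv ℝ u x h) s), hPJ' h s hs, map_smul, hAP', smul_add]
    rw [m1, m2, m2] at l
    simp only [map_smul, _root_.smul_apply, smul_eq_mul, ← mul_add] at l
    have l' := (mul_eq_zero.1 l).resolve_left hs.1.ne'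
    refine Eq.trans ?_ l'
    simp only [_root_.add_apply]
  obtain ⟨c, hc, hc'⟩ := exists_hasDerivAt_eq_slope f (fun _ => 0) (zero_lt_one (α := ℝ)) hfc.continuousOn hfd
  have hf01 : f 1 = f 0 := by
    have : f 1 - f 0 = 0 := by simpa using hc'.symm
    linarith
  have hx1 : u x i1 = x := by
    rw [hint, ContinuousMap.add_apply, kop_one, add_zero]; rfl
  have hJ1 : ∀ h, fderiv ℝ u x h i1 = h := by
    intro h
    rw [hdint, ContinuousMap.add_apply, kop_one, add_zero]; rfl
  have e1 : f 1 = β x h k := by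
    have a1 : ∀ w : C(II, E), ext w 1 = w i1 := fun w => ext_coe w i1
    simp only [f, a1, hx1, hJ1]
  have e0 : f 0 = β (u x i0) (fderiv ℝ u x h i0) (fderiv ℝ u x k i0) := by
    have a1 : ∀ w : C(II, E), ext w 0 = w i0 := fun w => ext_coe w i0
    simp only [f, a1]
  rw [← e1, hf01, e0]

end inv
end NashRK

namespace NashRK
section fin
open Filter Topology

lemma cutoff {E F : Type} [NormedAddCommGroup E] [NormedSpace ℝ E] [FiniteDimensional ℝ E]
    [NormedAddCommGroup F] [NormedSpace ℝ F]
    (f : E → F) (x0 : E) (hf : ∀ᶠ x in 𝓝 x0, ContDiffAt ℝ (⊤:ℕ∞) f x) (S : Set E) (hS : S ∈ 𝓝 x0) :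
    ∃ χ : E → ℝ, (∀ᶠ x in 𝓝 x0, χ x = 1) ∧ (∀ x, x ∉ S → χ x = 0) ∧ ContDiff ℝ (⊤:ℕ∞) (fun x => χ x • f x) := by
  obtain ⟨r, hr, h⟩ := Metric.nhds_basis_closedBall.mem_iff.1 (inter_mem hS hf)
  let χ : ContDiffBump x0 := ⟨r/2, r, by positivity, by linarith⟩
  have hχ0 : ∀ x, x ∉ Metric.closedBall x0 r → χ x = 0 := by
    intro x hx
    exact χ.zero_of_le_dist (by
      rw [Metric.mem_closedBall, not_le] at hx
      exact hx.le)
  refine ⟨χ, χ.eventuallyEq_one, fun x hx => hχ0 x fun h' => hx (h h').1, ?_⟩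
  rw [contDiff_iff_contDiffAt]
  intro x
  by_cases hx : x ∈ Metric.closedBall x0 r
  · exact χ.contDiff.contDiffAt.smul (h hx).2
  · have : (fun x => χ x • f x) =ᶠ[𝓝 x] fun _ => 0 := by
      filter_upwards [Metric.isClosed_closedBall.isOpen_compl.mem_nhds hx] with y hy
      rw [hχ0 y hy, zero_smul]
    exact contDiffAt_const.congr_of_eventuallyEq this

lemma cdAt_clm {D E F : Type} [NormedAddCommGroup D] [NormedSpace ℝ D] [NormedAddCommGroup E] [NormedSpace ℝ E]
    [NormedAddCommGroup F] [NormedSpace ℝ F] [FiniteDimensional ℝ E] {f : D → E →L[ℝ] F} {x : D}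
    (h : ∀ y, ContDiffAt ℝ (⊤:ℕ∞) (fun x => f x y) x) : ContDiffAt ℝ (⊤:ℕ∞) f x := by
  let d := Module.finrank ℝ E
  have hd : d = Module.finrank ℝ (Fin d → ℝ) := (Module.finrank_fin_fun ℝ).symm
  let e₁ := ContinuousLinearEquiv.ofFinrankEq hd
  let e₂ := (e₁.arrowCongr (1 : F ≃L[ℝ] F)).trans (ContinuousLinearEquiv.piRing (Fin d))
  rw [← Function.id_comp f, ← e₂.symm_comp_self]
  exact e₂.symm.contDiff.contDiffAt.comp x (contDiffAt_pi.mpr fun i => h _)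

variable {n : ℕ}

noncomputable def mC (a : Matrix (Fin n) (Fin n) ℝ) : (Fin n → ℝ) →L[ℝ] (Fin n → ℝ) :=
  LinearMap.toContinuousLinearMap a.mulVecLin

lemma mC_apply (a : Matrix (Fin n) (Fin n) ℝ) (v) : mC a v = a *ᵥ v := rfl

lemma mC_mul (a b : Matrix (Fin n) (Fin n) ℝ) : mC (a * b) = mC a * mC b := by
  refine ContinuousLinearMap.ext fun v => ?_
  change (a * b) *ᵥ v = a *ᵥ (b *ᵥ v)
  rw [mulVec_mulVec]

lemma mC_add (a b : Matrix (Fin n) (Fin n) ℝ) : mC (a + b) = mC a + mC b := by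
  refine ContinuousLinearMap.ext fun v => ?_
  change (a + b) *ᵥ v = a *ᵥ v + b *ᵥ v
  rw [add_mulVec]

lemma mC_one : mC (1 : Matrix (Fin n) (Fin n) ℝ) = 1 := by
  refine ContinuousLinearMap.ext fun v => ?_
  change 1 *ᵥ v = v
  rw [one_mulVec]

lemma mC_zero : mC (0 : Matrix (Fin n) (Fin n) ℝ) = 0 := by
  refine ContinuousLinearMap.ext fun v => ?_
  change 0 *ᵥ v = 0
  rw [zero_mulVec]

lemma mC_isUnit {a : Matrix (Fin n) (Fin n) ℝ} (h : IsUnit a) : IsUnit (mC a) := by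
  obtain ⟨w, rfl⟩ := h
  exact ⟨⟨mC w, mC ↑w⁻¹, by rw [← mC_mul, w.mul_inv, mC_one], by rw [← mC_mul, w.inv_mul, mC_one]⟩, rfl⟩

lemma mC_contDiffAt (α : (Fin n → ℝ) → Matrix (Fin n) (Fin n) ℝ) (x : Fin n → ℝ)
    (h : ∀ i j, ContDiffAt ℝ (⊤:ℕ∞) (fun x => α x i j) x) : ContDiffAt ℝ (⊤:ℕ∞) (fun x => mC (α x)) x := by
  refine cdAt_clm ?_
  intro v
  rw [contDiffAt_pi]
  intro i
  change ContDiffAt ℝ (⊤:ℕ∞) (fun x => ∑ j, α x i j * v j) x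
  exact ContDiffAt.sum fun j _ => (h i j).mul contDiffAt_const

noncomputable def bil (a : Matrix (Fin n) (Fin n) ℝ) : (Fin n → ℝ) →L[ℝ] (Fin n → ℝ) →L[ℝ] ℝ :=
  LinearMap.toContinuousLinearMap ((LinearMap.toContinuousLinearMap (𝕜 := ℝ) (E := Fin n → ℝ) (F' := ℝ)).toLinearMap ∘ₗ Matrix.toLinearMap₂' ℝ a)

lemma bil_apply (a : Matrix (Fin n) (Fin n) ℝ) (v w) : bil a v w = v ⬝ᵥ (a *ᵥ w) := by
  change Matrix.toLinearMap₂' ℝ a v w = _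
  rw [Matrix.toLinearMap₂'_apply']

lemma bil_apply' (a : Matrix (Fin n) (Fin n) ℝ) (v w) : bil a v w = ∑ i, ∑ j, v i * (a i j * w j) := by
  rw [bil_apply]
  simp only [dotProduct, mulVec, Finset.mul_sum]

lemma bil_differentiableAt (α : (Fin n → ℝ) → Matrix (Fin n) (Fin n) ℝ) (x : Fin n → ℝ)
    (h : ∀ i j, ContDiffAt ℝ (⊤:ℕ∞) (fun x => α x i j) x) : DifferentiableAt ℝ (fun x => bil (α x)) x := by
  have : ContDiffAt ℝ (⊤:ℕ∞) (fun x => bil (α x)) x := by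
    refine cdAt_clm ?_
    intro v
    refine cdAt_clm ?_
    intro w
    simp only [bil_apply']
    exact ContDiffAt.sum fun i _ => ContDiffAt.sum fun j _ => contDiffAt_const.mul ((h i j).mul contDiffAt_const)
  exact this.differentiableAt (by simp)

lemma bil_fderiv (α : (Fin n → ℝ) → Matrix (Fin n) (Fin n) ℝ) (x : Fin n → ℝ)
    (h : ∀ i j, ContDiffAt ℝ (⊤:ℕ∞) (fun x => α x i j) x) (X v w : Fin n → ℝ) :
    fderiv ℝ (fun x => bil (α x)) x X v w = v ⬝ᵥ ((Matrix.of fun i j => fderiv ℝ (fun y => α y i j) x X) *ᵥ w) := by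
  have a := (((bil_differentiableAt α x h).hasFDerivAt.clm_apply (hasFDerivAt_const v x))).clm_apply (hasFDerivAt_const w x)
  have b : HasFDerivAt (fun x => bil (α x) v w) (∑ i, ∑ j, v i • (w j • fderiv ℝ (fun y => α y i j) x)) x := by
    simp only [bil_apply']
    refine HasFDerivAt.fun_sum fun i _ => HasFDerivAt.fun_sum fun j _ => ?_
    exact (((h i j).differentiableAt (by simp)).hasFDerivAt.mul_const (w j)).const_mul (v i)
  have := congrArg (fun L => L X) (a.unique b)
  simp only [dotProduct, mulVec, Finset.mul_sum]
  simp at this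
  rw [this]
  refine Finset.sum_congr rfl fun i _ => Finset.sum_congr rfl fun j _ => ?_
  simp only [of_apply]; ring

lemma lie_bil {U : Set (Fin n → ℝ)} (hU : IsOpen U) (α : (Fin n → ℝ) → Matrix (Fin n) (Fin n) ℝ)
    (X : (Fin n → ℝ) → (Fin n → ℝ)) (x : Fin n → ℝ) (hx : x ∈ U)
    (h : ∀ i j, ContDiffAt ℝ (⊤:ℕ∞) (fun x => α x i j) x) (hX : DifferentiableAt ℝ X x)
    (hL : lieDerivMat U α X x = 0) (a b : Fin n → ℝ) :
    fderiv ℝ (fun x => bil (α x)) x (X x) a b + bil (α x) (fderiv ℝ X x a) b + bil (α x) a (fderiv ℝ X x b) = 0 := by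
  have hJ : ∀ v, fderiv ℝ X x v = jacobianWithin U X x *ᵥ v := by
    intro v
    funext k
    have e : v = ∑ i, v i • (Pi.single i 1 : Fin n → ℝ) := by
      funext j; simp [Pi.single_apply]
    conv_lhs => rw [e]
    rw [map_sum, Finset.sum_apply]
    simp only [mulVec, dotProduct, jacobianWithin, of_apply, map_smul, Pi.smul_apply, smul_eq_mul]
    refine Finset.sum_congr rfl fun i _ => ?_
    rw [fderivWithin_of_isOpen hU hx, mul_comm]
    congr 1
    have := (hasFDerivAt_pi'.1 hX.hasFDerivAt k).fderiv
    rw [this]; rfl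
  have h1 := congrArg (fun m : Matrix (Fin n) (Fin n) ℝ => a ⬝ᵥ (m *ᵥ b)) hL
  simp only [lieDerivMat, fderivWithin_of_isOpen hU hx, add_mulVec, dotProduct_add, zero_mulVec, dotProduct_zero] at h1
  rw [bil_fderiv α x h, bil_apply, bil_apply, hJ, hJ, ← h1]
  congr 1
  · congr 1
    rw [← mulVec_mulVec, dotProduct_mulVec a, vecMul_transpose]
  · rw [← mulVec_mulVec]

lemma sum_aux {M : ℕ} (v w : Fin n → ℝ) (D : Fin M → Fin n → ℝ) :
    ∑ i, ∑ j, v i * ((∑ k, D k i * D k j) * w j) = ∑ k, (∑ c, v c * D k c) * (∑ c, w c * D k c) := by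
  simp only [Finset.sum_mul_sum]
  rw [Finset.sum_comm (s := (Finset.univ : Finset (Fin M)))]
  refine Finset.sum_congr rfl fun i _ => ?_
  rw [Finset.sum_comm (s := (Finset.univ : Finset (Fin M)))]
  refine Finset.sum_congr rfl fun j _ => ?_
  rw [Finset.sum_mul, Finset.mul_sum]
  exact Finset.sum_congr rfl fun k _ => by ring

end fin
end NashRK

open Filter Topology NashRK

theorem exists_local_reproducing_kernel_primitive {n : ℕ}
    (U : Set (Fin n → ℝ)) (hU : IsOpen U)
    (α : (Fin n → ℝ) → Matrix (Fin n) (Fin n) ℝ)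
    (hαsmooth : ∀ i j, ContDiffOn ℝ (⊤ : ℕ∞) (fun x => α x i j) U)
    (hPSD : ∀ x ∈ U, (α x).PosSemidef)
    (hrank : ∀ x ∈ U, ∃ W : Set (Fin n → ℝ), IsOpen W ∧ x ∈ W ∧
      ∀ y ∈ W ∩ U, (α y).rank = (α x).rank)
    (hLie : ∀ X : (Fin n → ℝ) → (Fin n → ℝ), ContDiffOn ℝ (⊤ : ℕ∞) X U →
      (∀ x ∈ U, (α x).mulVec (X x) = 0) →
      ∀ x ∈ U, lieDerivMat U α X x = 0) :
    ∀ x₀ ∈ U, ∃ V : Set (Fin n → ℝ), IsOpen V ∧ x₀ ∈ V ∧ V ⊆ U ∧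
      ∃ (M : ℕ) (φ : Fin M → (Fin n → ℝ) → ℝ),
        (∀ i, ContDiffOn ℝ (⊤ : ℕ∞) (φ i) V) ∧
        ∀ x ∈ V, ∀ a b : Fin n,
          α x a b = ∑ i, fderivWithin ℝ (φ i) V x (Pi.single a 1) *
            fderivWithin ℝ (φ i) V x (Pi.single b 1) := by
  intro x₀ hx₀
  have hn : ((⊤:ℕ∞) : WithTop ℕ∞) ≠ 0 := by simp
  have hUn : U ∈ 𝓝 x₀ := hU.mem_nhds hx₀
  have hα : ∀ x ∈ U, ∀ i j, ContDiffAt ℝ (⊤:ℕ∞) (fun x => α x i j) x := fun x hx i j =>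
    (hαsmooth i j).contDiffAt (hU.mem_nhds hx)
  have hsym : ∀ x ∈ U, ∀ i j, α x i j = α x j i := by
    intro x hx i j
    have := congrFun (congrFun (hPSD x hx).1 j) i
    simpa using this
  obtain ⟨P, hPT, hPP, hαP, hpd⟩ := exists_proj (α x₀) (hPSD x₀ hx₀)
  have hPα : P * α x₀ = 0 := by
    have h1 : (α x₀)ᵀ = α x₀ := by ext i j; exact hsym x₀ hx₀ j i
    have h2 := congrArg transpose hαP
    rwa [transpose_mul, hPT, h1, transpose_zero] at h2
  have hB : ∀ᶠ x in 𝓝 x₀, ContDiffAt ℝ (⊤:ℕ∞) (fun x => mC (α x)) x := by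
    filter_upwards [hUn] with x hx
    exact mC_contDiffAt α x (hα x hx)
  obtain ⟨A, hA⟩ := exists_char (fun x => mC (α x)) (mC P) x₀ (by rw [← mC_mul, hPP]) hB
    (by rw [← mC_mul, hαP, mC_zero]) (by rw [← mC_mul, hPα, mC_zero])
    (by rw [← mC_add]; exact mC_isUnit hpd.isUnit) (by
      obtain ⟨W, hW, hxW, h⟩ := hrank x₀ hx₀
      filter_upwards [hUn, hW.mem_nhds hxW] with x hx hx'
      exact h x ⟨hx', hx⟩)
  obtain ⟨χ, hχ1, hχ0, hχs⟩ := cutoff A x₀ (hA.mono fun x hx => hx.1) _ hA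
  let A' : (Fin n → ℝ) → (Fin n → ℝ) →L[ℝ] (Fin n → ℝ) := fun x => χ x • A x
  have hA'1 : ∀ x, mC (α x) * A' x = 0 := by
    intro x
    by_cases hx : x ∈ {x | ContDiffAt ℝ (⊤:ℕ∞) A x ∧ mC (α x) * A x = 0 ∧ A x * mC P = A x ∧ mC P * A x = mC P}
    · simp only [A']; rw [mul_smul_comm, hx.2.1, smul_zero]
    · simp only [A']; rw [hχ0 x hx, zero_smul, mul_zero]
  have hA'2 : ∀ x, A' x * mC P = A' x := by
    intro x
    by_cases hx : x ∈ {x | ContDiffAt ℝ (⊤:ℕ∞) A x ∧ mC (α x) * A x = 0 ∧ A x * mC P = A x ∧ mC P * A x = mC P}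
    · simp only [A']; rw [smul_mul_assoc, hx.2.2.1]
    · simp only [A']; rw [hχ0 x hx, zero_smul, zero_mul]
  have hA'3 : ∀ᶠ x in 𝓝 x₀, x ∈ U ∧ mC P * A' x = mC P := by
    filter_upwards [hχ1, hA, hUn] with x hx hx' hxU
    refine ⟨hxU, ?_⟩
    simp only [A']
    rw [hx, one_smul, hx'.2.2.2]
  obtain ⟨O, hOs, hO, hx₀O⟩ := eventually_nhds_iff.1 hA'3
  have hXs : ContDiff ℝ (⊤:ℕ∞) (fun y => A' y (y - x₀)) := hχs.clm_apply (contDiff_id.sub contDiff_const)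
  have hL := hLie (fun y => A' y (y - x₀)) hXs.contDiffOn (fun x _ => by
    exact congrArg (fun L : (Fin n → ℝ) →L[ℝ] (Fin n → ℝ) => L (x - x₀)) (hA'1 x))
  obtain ⟨Φ, hΦ0, hΦ⟩ := invariance A' hχs (mC P) x₀ O hO hx₀O hA'2 (fun y hy => (hOs y hy).2)
    (fun x => bil (α x)) (fun y hy => bil_differentiableAt α y (hα y (hOs y hy).1))
    (fun y hy a b => lie_bil hU α _ y (hOs y hy).1 (hα y (hOs y hy).1) (hXs.differentiable hn y)
      (hL y (hOs y hy).1) a b)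
  -- the metric
  obtain ⟨η, hη1, hη0, hηs⟩ := cutoff (fun x => (fun i j => α x i j : Fin n → Fin n → ℝ)) x₀ (by
    filter_upwards [hUn] with x hx
    exact contDiffAt_pi.2 fun i => contDiffAt_pi.2 fun j => hα x hx i j) U hUn
  let g : (Fin n → ℝ) → Matrix (Fin n) (Fin n) ℝ := fun x => η x • α x + P
  obtain ⟨r, hr, M, ψ, hψs, hψ⟩ := nash g x₀ (fun i j => by
      have := contDiff_pi.1 (contDiff_pi.1 hηs i) j
      exact this.add contDiff_const) (fun x i j => by
      have hPs : P i j = P j i := by conv_lhs => rw [← hPT, transpose_apply]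
      change η x * α x i j + P i j = η x * α x j i + P j i
      by_cases hx : x ∈ U
      · rw [hsym x hx, hPs]
      · rw [hη0 x hx, hPs]; simp) (by
      simp only [g]; rw [hη1.self_of_nhds, one_smul]; exact hpd)
  have hΦc : ContinuousAt Φ x₀ := hΦ.self_of_nhds.1.continuousAt
  have hev : ∀ᶠ x in 𝓝 x₀, (x ∈ U ∧ ContDiffAt ℝ (⊤:ℕ∞) Φ x) ∧ ∀ a b : Fin n,
      α x a b = ∑ i, fderiv ℝ (ψ i ∘ Φ) x (Pi.single a 1) * fderiv ℝ (ψ i ∘ Φ) x (Pi.single b 1) := by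
    have e1 : ∀ᶠ x in 𝓝 x₀, η (Φ x) = 1 := hΦc.eventually (by rw [hΦ0]; exact hη1)
    have e2 : ∀ᶠ x in 𝓝 x₀, ‖Φ x - x₀‖ < r := by
      have := hΦc.eventually (Metric.ball_mem_nhds (Φ x₀) hr)
      filter_upwards [this] with x hx
      rw [← dist_eq_norm]
      rw [hΦ0] at hx
      exact hx
    filter_upwards [hUn, hΦ, e1, e2] with x hxU hx h1 h2
    refine ⟨⟨hxU, hx.1⟩, fun a b => ?_⟩
    obtain ⟨hsm, hPΦ, hinv⟩ := hx
    have hc : ∀ i v, fderiv ℝ (ψ i ∘ Φ) x v = ∑ c, fderiv ℝ Φ x v c * fderiv ℝ (ψ i) (Φ x) (Pi.single c 1) := by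
      intro i v
      rw [fderiv_comp x ((hψs i).differentiable hn _) (hsm.differentiableAt hn)]
      have e : fderiv ℝ Φ x v = ∑ c, fderiv ℝ Φ x v c • (Pi.single c 1 : Fin n → ℝ) := by
        funext j; simp [Pi.single_apply]
      rw [ContinuousLinearMap.comp_apply]
      conv_lhs => rw [e]
      rw [map_sum]
      simp only [map_smul, smul_eq_mul]
    have hg : g (Φ x) = α (Φ x) + P := by simp only [g]; rw [h1, one_smul]
    have f1 : α x a b = bil (α x) (Pi.single a 1) (Pi.single b 1) := by
      rw [bil_apply]; simp
    have f2 : bil (α (Φ x)) (fderiv ℝ Φ x (Pi.single a 1)) (fderiv ℝ Φ x (Pi.single b 1)) =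
        bil (g (Φ x)) (fderiv ℝ Φ x (Pi.single a 1)) (fderiv ℝ Φ x (Pi.single b 1)) := by
      have : P *ᵥ fderiv ℝ Φ x (Pi.single b 1) = 0 := hPΦ _
      rw [hg, bil_apply, bil_apply, add_mulVec, this, add_zero]
    rw [f1, hinv, f2, bil_apply']
    simp only [hψ (Φ x) h2, hc]
    exact sum_aux _ _ _
  obtain ⟨V, hVs, hV, hxV⟩ := eventually_nhds_iff.1 hev
  refine ⟨V, hV, hxV, fun x hx => (hVs x hx).1.1, M, fun i => ψ i ∘ Φ, fun i x hx => ?_, fun x hx a b => ?_⟩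
  · exact ((hψs i).contDiffAt.comp x (hVs x hx).1.2).contDiffWithinAt
  · simp only [fderivWithin_of_isOpen hV hx]
    exact (hVs x hx).2 a b
end
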